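/- Let k ≥ 0 be an integer and α ∈ (0,1). There is a constant C, depending only on k and α, such that for every R with 0 < R ≤ 1 and every h of class C^{k+α}(D), the function Th is of class C^{k+1+α}(D) and satisfies ‖Th‖^{(k+1)} ≤ C ‖h‖^{(k)}; likewise ‖T̄h‖^{(k+1)} ≤ C ‖h‖^{(k)}, where T̄h = conj(T(conj h)). -/

import Mathlib

/-!
A dilation reduces everything to the unit disk: the factor `R` in `T` and the powers of `R` from the
derivatives of `h` and `T h` cancel, so the constant does not depend on `R`.

On the unit disk `∂̄ T h = h`, and `∂ T h z` is the absolutely convergent Beurling integral of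
`h - h z`, because `T 1 = z̄`. The Cauchy transforms of two nested disks differ by a constant on the
smaller one, so replacing `h z` by `h z'` away from `z` changes nothing; this gives the Hölder
estimate when `‖z - z'‖ ≤ (1 - ‖z‖) / 2`, and dyadic chaining towards the centre makes it global.

Higher derivatives follow by induction from `∂ T h = T (∂h - ∂̄(z̄² h)) + z̄² h`: the first-order
part of this operator is tangential to the unit circle, so multiplying `h` by radial cutoffs and
passing to the limit leaves no boundary term. The induction uses the lower-order derivatives of
`h` too. Subtracting from `h` a polynomial in `z` and `z̄` of degree less than `k` with the same
derivatives at `0` bounds them by those of order `k`, and costs nothing: `T` maps it to a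
polynomial of degree at most `k`, which the derivatives of order `k + 1` annihilate.
-/

open Complex MeasureTheory Metric ENNReal NNReal

noncomputable section

/-- Wirtinger derivative `∂`. -/
def wD (f : ℂ → ℂ) : ℂ → ℂ := fun z =>
  (fderiv ℝ f z 1 - Complex.I * fderiv ℝ f z Complex.I) / 2

/-- Wirtinger derivative `∂̄`. -/
def wDbar (f : ℂ → ℂ) : ℂ → ℂ := fun z =>
  (fderiv ℝ f z 1 + Complex.I * fderiv ℝ f z Complex.I) / 2

/-- Iterated Wirtinger derivative `∂^i ∂̄^j`. -/
def wDij (i j : ℕ) (f : ℂ → ℂ) : ℂ → ℂ := wD^[i] (wDbar^[j] f)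

/-- α-Hölder constant of `f` on `A`, valued in `ℝ≥0∞`. -/
def Hol (α : ℝ) (A : Set ℂ) (f : ℂ → ℂ) : ℝ≥0∞ :=
  ⨆ z ∈ A, ⨆ z' ∈ A, ⨆ _ : z ≠ z', (‖f z - f z'‖₊ : ℝ≥0∞) / (‖z - z'‖₊ : ℝ≥0∞) ^ α

/-- `f` is of class `C^{k+α}(D)`, `D` the closed disk of radius `R`. -/
def CkHolder (k : ℕ) (α R : ℝ) (f : ℂ → ℂ) : Prop :=
  (∃ U : Set ℂ, IsOpen U ∧ closedBall (0:ℂ) R ⊆ U ∧ ContDiffOn ℝ k f U) ∧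
  ∀ i j : ℕ, i + j = k → Hol α (closedBall (0:ℂ) R) (wDij i j f) < ⊤

/-- The norm `‖f‖ = sup_D |f| + (2R)^α H_α[f]`. -/
def hnorm (α R : ℝ) (f : ℂ → ℂ) : ℝ≥0∞ :=
  (⨆ z ∈ closedBall (0:ℂ) R, (‖f z‖₊ : ℝ≥0∞)) +
    ENNReal.ofReal ((2*R) ^ α) * Hol α (closedBall (0:ℂ) R) f

/-- The norm `‖f‖^{(k)} = max_{i+j=k} ‖∂^i∂̄^j f‖`. -/
def hnormK (k : ℕ) (α R : ℝ) (f : ℂ → ℂ) : ℝ≥0∞ :=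
  ⨆ p ∈ Finset.HasAntidiagonal.antidiagonal k, hnorm α R (wDij p.1 p.2 f)

/-- `C_0^{k+α}(D)`: members of `C^{k+α}(D)` all of whose derivatives of order `≤ k-1`
vanish at the origin. -/
def C0kHolder (k : ℕ) (α R : ℝ) (f : ℂ → ℂ) : Prop :=
  CkHolder k α R f ∧ ∀ i j : ℕ, i + j < k → wDij i j f 0 = 0

/-- The Cauchy–Green operator `T`. -/
def Tcg (R : ℝ) (g : ℂ → ℂ) : ℂ → ℂ := fun z =>
  -(Real.pi : ℂ)⁻¹ * ∫ ζ in closedBall (0:ℂ) R, g ζ / (ζ - z)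

/-- The operator `T̄ g = conj (T (conj g))`. -/
def Tcgbar (R : ℝ) (g : ℂ → ℂ) : ℂ → ℂ := fun z =>
  (starRingEnd ℂ) (Tcg R (fun w => (starRingEnd ℂ) (g w)) z)

/-- The Cauchy integral `S`. -/
def Scau (R : ℝ) (f : ℂ → ℂ) : ℂ → ℂ := fun z =>
  (2 * Real.pi * Complex.I)⁻¹ * ∮ ζ in C(0, R), f ζ / (ζ - z)

/-- The operator `S̄ f = conj (S (conj f))`. -/
def Scaubar (R : ℝ) (f : ℂ → ℂ) : ℂ → ℂ := fun z =>
  (starRingEnd ℂ) (Scau R (fun w => (starRingEnd ℂ) (f w)) z)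

/-- The boundary operator `S_b`. -/
def Sb (R : ℝ) (f : ℂ → ℂ) : ℂ → ℂ := fun z =>
  (2 * Real.pi * Complex.I)⁻¹ *
    ∫ θ in (0:ℝ)..(2 * Real.pi),
      f (R * Complex.exp (Complex.I * θ)) / (R * Complex.exp (Complex.I * θ) - z) *
        (-Complex.I * R * Complex.exp (-Complex.I * θ))

/-- The Taylor polynomial `P_k(ζ, z)` of `f` at `z` of degree `k`. -/
def TaylorP (k : ℕ) (f : ℂ → ℂ) (ζ z : ℂ) : ℂ :=
  ∑ l ∈ Finset.range (k+1), ((Nat.factorial l : ℂ))⁻¹ *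
    ∑ p ∈ Finset.HasAntidiagonal.antidiagonal l,
      wDij p.1 p.2 f z * (ζ - z) ^ p.1 * ((starRingEnd ℂ) ζ - (starRingEnd ℂ) z) ^ p.2

/-- The operator `^{k+2}T`. -/
def TkOp (k : ℕ) (R : ℝ) (f : ℂ → ℂ) : ℂ → ℂ := fun z =>
  -((Nat.factorial (k+1) : ℂ) / (Real.pi : ℂ)) *
    ∫ ζ in closedBall (0:ℂ) R, (f ζ - TaylorP k f ζ z) / (ζ - z) ^ (k + 2)

end

noncomputable section

/-- Norm `‖f‖` computed on the open disk. -/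
def hnormB (α R : ℝ) (f : ℂ → ℂ) : ℝ≥0∞ :=
  (⨆ z ∈ ball (0:ℂ) R, (‖f z‖₊ : ℝ≥0∞)) +
    ENNReal.ofReal ((2*R) ^ α) * Hol α (ball (0:ℂ) R) f

/-- Norm `‖f‖^{(k)}` computed on the open disk. -/
def hnormKB (k : ℕ) (α R : ℝ) (f : ℂ → ℂ) : ℝ≥0∞ :=
  ⨆ p ∈ Finset.HasAntidiagonal.antidiagonal k, hnormB α R (wDij p.1 p.2 f)

/-- `f` is of class `C^{k+α}(D)`, in the sense that it is `C^k` on the open disk,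
all its derivatives of order `≤ k` extend continuously to the closed disk, and its
derivatives of order `k` have finite `α`-Hölder constant. -/
def CkHolderBall (k : ℕ) (α R : ℝ) (f : ℂ → ℂ) : Prop :=
  ContDiffOn ℝ k f (ball (0:ℂ) R) ∧
  (∀ i j : ℕ, i + j ≤ k → ∃ g : ℂ → ℂ, ContinuousOn g (closedBall (0:ℂ) R) ∧
    Set.EqOn (wDij i j f) g (ball (0:ℂ) R)) ∧
  ∀ i j : ℕ, i + j = k → Hol α (ball (0:ℂ) R) (wDij i j f) < ⊤

end

section

open scoped ComplexConjugate Topology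
open Set Filter

local notation "𝔻" => Metric.ball (0 : ℂ) 1

/-! ### Wirtinger calculus -/

section Wirtinger

variable {f g : ℂ → ℂ} {p q p' q' z : ℂ} {V : Set ℂ}

/-- The real-linear map `v ↦ p v + q v̄`, i.e. the differential `p dz + q dz̄`. -/
noncomputable def wirtingerCLM (p q : ℂ) : ℂ →L[ℝ] ℂ :=
  p • ContinuousLinearMap.id ℝ ℂ + q • (conjCLE : ℂ →L[ℝ] ℂ)

@[simp]
theorem wirtingerCLM_apply (p q v : ℂ) : wirtingerCLM p q v = p * v + q * conj v := by
  simp [wirtingerCLM]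

theorem norm_wirtingerCLM_le (p q : ℂ) : ‖wirtingerCLM p q‖ ≤ ‖p‖ + ‖q‖ := by
  refine ContinuousLinearMap.opNorm_le_bound _ (by positivity) fun v => ?_
  rw [wirtingerCLM_apply, add_mul]
  exact (norm_add_le _ _).trans (by simp)

theorem eq_wirtingerCLM (L : ℂ →L[ℝ] ℂ) :
    L = wirtingerCLM ((L 1 - I * L I) / 2) ((L 1 + I * L I) / 2) := by
  ext v
  have hv : L v = v.re * L 1 + v.im * L I := by
    have : v = v.re • (1 : ℂ) + v.im • I := by simp
    conv_lhs => rw [this, map_add, map_smul, map_smul, real_smul, real_smul]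
  rw [wirtingerCLM_apply, hv]
  conv_rhs => rw [← re_add_im v]
  simp only [map_add, map_mul, conj_ofReal, conj_I]
  linear_combination (v.im * L I) * I_sq

/-- `f` is real differentiable at `z` with Wirtinger derivatives `∂f = p` and `∂̄f = q`. -/
def HasWirtingerDerivAt (f : ℂ → ℂ) (p q z : ℂ) : Prop :=
  HasFDerivAt f (wirtingerCLM p q) z

theorem hasWirtingerDerivAt_of_differentiableAt (h : DifferentiableAt ℝ f z) :
    HasWirtingerDerivAt f (wD f z) (wDbar f z) z := by
  have := h.hasFDerivAt
  rwa [eq_wirtingerCLM (fderiv ℝ f z)] at this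

namespace HasWirtingerDerivAt

theorem differentiableAt (h : HasWirtingerDerivAt f p q z) : DifferentiableAt ℝ f z :=
  HasFDerivAt.differentiableAt h

theorem wD_eq (h : HasWirtingerDerivAt f p q z) : wD f z = p := by
  simp only [wD, HasFDerivAt.fderiv h, wirtingerCLM_apply, map_one, conj_I]
  linear_combination (-(p - q) / 2) * I_sq

theorem wDbar_eq (h : HasWirtingerDerivAt f p q z) : wDbar f z = q := by
  simp only [wDbar, HasFDerivAt.fderiv h, wirtingerCLM_apply, map_one, conj_I]
  linear_combination ((p - q) / 2) * I_sq

theorem congr_of_eventuallyEq (h : HasWirtingerDerivAt f p q z) (hfg : g =ᶠ[𝓝 z] f) :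
    HasWirtingerDerivAt g p q z :=
  HasFDerivAt.congr_of_eventuallyEq h hfg

theorem add (hf : HasWirtingerDerivAt f p q z) (hg : HasWirtingerDerivAt g p' q' z) :
    HasWirtingerDerivAt (fun w => f w + g w) (p + p') (q + q') z :=
  (HasFDerivAt.add hf hg).congr_fderiv (by
    ext v
    simp only [_root_.add_apply, wirtingerCLM_apply]
    ring)

theorem mul (hf : HasWirtingerDerivAt f p q z) (hg : HasWirtingerDerivAt g p' q' z) :
    HasWirtingerDerivAt (fun w => f w * g w) (p * g z + f z * p') (q * g z + f z * q') z :=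
  (HasFDerivAt.mul hf hg).congr_fderiv (by
    ext v
    simp only [_root_.add_apply, _root_.smul_apply, wirtingerCLM_apply,
      smul_eq_mul]
    ring)

theorem const_mul (hf : HasWirtingerDerivAt f p q z) (c : ℂ) :
    HasWirtingerDerivAt (fun w => c * f w) (c * p) (c * q) z :=
  (HasFDerivAt.const_mul hf c).congr_fderiv (by
    ext v
    simp only [_root_.smul_apply, wirtingerCLM_apply, smul_eq_mul]
    ring)

theorem star (hf : HasWirtingerDerivAt f p q z) :
    HasWirtingerDerivAt (fun w => conj (f w)) (conj q) (conj p) z :=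
  ((conjCLE : ℂ →L[ℝ] ℂ).hasFDerivAt.comp z hf).congr_fderiv (by
    ext v
    simp only [ContinuousLinearMap.comp_apply, wirtingerCLM_apply, ContinuousLinearEquiv.coe_coe,
      conjCLE_apply, map_add, map_mul, conj_conj]
    ring)

end HasWirtingerDerivAt

theorem hasWirtingerDerivAt_of_hasDerivAt (h : HasDerivAt f p z) :
    HasWirtingerDerivAt f p 0 z :=
  (h.hasFDerivAt.restrictScalars ℝ).congr_fderiv (by ext v; simp [mul_comm])

theorem hasWirtingerDerivAt_const (c z : ℂ) : HasWirtingerDerivAt (fun _ => c) 0 0 z :=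
  hasWirtingerDerivAt_of_hasDerivAt (hasDerivAt_const z c)

theorem hasWirtingerDerivAt_conj (z : ℂ) : HasWirtingerDerivAt (fun w => conj w) 0 1 z := by
  simpa using (hasWirtingerDerivAt_of_hasDerivAt (hasDerivAt_id z)).star

theorem hasWirtingerDerivAt_conj_pow (n : ℕ) (z : ℂ) :
    HasWirtingerDerivAt (fun w => conj w ^ n) 0 (n * conj z ^ (n - 1)) z := by
  simpa using (hasWirtingerDerivAt_of_hasDerivAt (hasDerivAt_pow n z)).star

theorem norm_sub_le_of_norm_wD_le {S : Set ℂ} {A B : ℝ} (hS : Convex ℝ S)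
    (hf : ∀ z ∈ S, DifferentiableAt ℝ f z) (hA : ∀ z ∈ S, ‖wD f z‖ ≤ A)
    (hB : ∀ z ∈ S, ‖wDbar f z‖ ≤ B) {z z' : ℂ} (hz : z ∈ S) (hz' : z' ∈ S) :
    ‖f z - f z'‖ ≤ (A + B) * ‖z - z'‖ :=
  hS.norm_image_sub_le_of_norm_hasFDerivWithin_le (𝕜 := ℝ)
    (fun w hw => (hasWirtingerDerivAt_of_differentiableAt (hf w hw)).hasFDerivWithinAt)
    (fun w hw => (norm_wirtingerCLM_le _ _).trans (add_le_add (hA w hw) (hB w hw))) hz' hz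

theorem wD_congr (hV : IsOpen V) (h : EqOn f g V) : EqOn (wD f) (wD g) V := fun z hz => by
  simp only [wD, (eventuallyEq_of_mem (hV.mem_nhds hz) h).fderiv_eq]

theorem wDbar_congr (hV : IsOpen V) (h : EqOn f g V) : EqOn (wDbar f) (wDbar g) V :=
  fun z hz => by simp only [wDbar, (eventuallyEq_of_mem (hV.mem_nhds hz) h).fderiv_eq]

theorem wD_comp_real_mul (f : ℂ → ℂ) (a : ℝ) (z : ℂ) :
    wD (fun w => f (a * w)) z = a * wD f (a * z) := by
  have := fderiv_comp_smul (𝕜 := ℝ) (f := f) (x := z) a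
  simp only [real_smul] at this
  simp only [wD, this, smul_apply, real_smul]
  ring

theorem wDbar_comp_real_mul (f : ℂ → ℂ) (a : ℝ) (z : ℂ) :
    wDbar (fun w => f (a * w)) z = a * wDbar f (a * z) := by
  have := fderiv_comp_smul (𝕜 := ℝ) (f := f) (x := z) a
  simp only [real_smul] at this
  simp only [wDbar, this, smul_apply, real_smul]
  ring

theorem fderiv_const_mul_apply (c : ℂ) (f : ℂ → ℂ) (z v : ℂ) :
    fderiv ℝ (fun w => c * f w) z v = c * fderiv ℝ f z v :=
  congrArg (· v) (congrFun (fderiv_const_smul_field (𝕜 := ℝ) (f := f) c) z)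

theorem wD_const_mul (c : ℂ) (f : ℂ → ℂ) : wD (fun w => c * f w) = fun z => c * wD f z := by
  ext z
  simp only [wD, fderiv_const_mul_apply]
  ring

theorem wDbar_const_mul (c : ℂ) (f : ℂ → ℂ) :
    wDbar (fun w => c * f w) = fun z => c * wDbar f z := by
  ext z
  simp only [wDbar, fderiv_const_mul_apply]
  ring

section ContDiff

variable {n : ℕ}

theorem contDiffOn_wD (hV : IsOpen V) (h : ContDiffOn ℝ (n + 1 : ℕ) f V) :
    ContDiffOn ℝ n (wD f) V := by
  have h' := h.fderiv_of_isOpen (m := n) hV (by norm_cast)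
  exact ((h'.clm_apply contDiffOn_const).sub
    (contDiffOn_const.mul (h'.clm_apply contDiffOn_const))).div_const 2

theorem contDiffOn_wDbar (hV : IsOpen V) (h : ContDiffOn ℝ (n + 1 : ℕ) f V) :
    ContDiffOn ℝ n (wDbar f) V := by
  have h' := h.fderiv_of_isOpen (m := n) hV (by norm_cast)
  exact ((h'.clm_apply contDiffOn_const).add
    (contDiffOn_const.mul (h'.clm_apply contDiffOn_const))).div_const 2

theorem differentiableAt_of_contDiffOn_succ (hV : IsOpen V)
    (h : ContDiffOn ℝ (n + 1 : ℕ) f V) (hz : z ∈ V) : DifferentiableAt ℝ f z :=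
  (h.contDiffAt (hV.mem_nhds hz)).differentiableAt (by norm_cast)

theorem contDiffOn_succ_of_wD (hV : IsOpen V) (hd : ∀ z ∈ V, DifferentiableAt ℝ f z)
    (h : ContDiffOn ℝ n (wD f) V) (h' : ContDiffOn ℝ n (wDbar f) V) :
    ContDiffOn ℝ (n + 1 : ℕ) f V := by
  have hfderiv : ContDiffOn ℝ n (fderiv ℝ f) V :=
    ((h.smul contDiffOn_const).add (h'.smul contDiffOn_const)).congr fun z hz =>
      (hasWirtingerDerivAt_of_differentiableAt (hd z hz)).fderiv
  exact_mod_cast (contDiffOn_succ_iff_fderiv_of_isOpen (n := n) hV).2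
    ⟨fun z hz => (hd z hz).differentiableWithinAt, by simp, hfderiv⟩

theorem fderiv_wD_apply (h : DifferentiableAt ℝ (fderiv ℝ f) z) (v : ℂ) :
    fderiv ℝ (wD f) z v =
      (fderiv ℝ (fderiv ℝ f) z v 1 - I * fderiv ℝ (fderiv ℝ f) z v I) / 2 := by
  have hd (w : ℂ) := h.hasFDerivAt.clm_apply (hasFDerivAt_const w z)
  have : HasFDerivAt (wD f) _ z :=
    (((hd 1).sub ((hd I).const_mul I)).mul_const (2 : ℂ)⁻¹).congr_of_eventuallyEq
      (Eventually.of_forall fun w => div_eq_mul_inv _ _)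
  simp only [this.fderiv, ContinuousLinearMap.comp_zero, zero_add, smul_apply, sub_apply,
    ContinuousLinearMap.flip_apply, smul_eq_mul]
  ring

theorem fderiv_wDbar_apply (h : DifferentiableAt ℝ (fderiv ℝ f) z) (v : ℂ) :
    fderiv ℝ (wDbar f) z v =
      (fderiv ℝ (fderiv ℝ f) z v 1 + I * fderiv ℝ (fderiv ℝ f) z v I) / 2 := by
  have hd (w : ℂ) := h.hasFDerivAt.clm_apply (hasFDerivAt_const w z)
  have : HasFDerivAt (wDbar f) _ z :=
    (((hd 1).add ((hd I).const_mul I)).mul_const (2 : ℂ)⁻¹).congr_of_eventuallyEq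
      (Eventually.of_forall fun w => div_eq_mul_inv _ _)
  simp only [this.fderiv, ContinuousLinearMap.comp_zero, zero_add, add_apply, smul_apply,
    ContinuousLinearMap.flip_apply, smul_eq_mul]
  ring

theorem wDbar_wD_eq_wD_wDbar (hV : IsOpen V) (h : ContDiffOn ℝ 2 f V) :
    EqOn (wDbar (wD f)) (wD (wDbar f)) V := fun z hz => by
  have hc := h.contDiffAt (hV.mem_nhds hz)
  have hsymm : IsSymmSndFDerivAt ℝ f z := hc.isSymmSndFDerivAt (by simp)
  have hd : DifferentiableAt ℝ (fderiv ℝ f) z :=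
    (hc.fderiv_right (m := 1) (by norm_num)).differentiableAt (by norm_num)
  rw [wDbar, wD, fderiv_wD_apply hd, fderiv_wD_apply hd, fderiv_wDbar_apply hd,
    fderiv_wDbar_apply hd, hsymm I 1]
  ring

end ContDiff

section Iterated

variable {n i j : ℕ}

theorem wDij_succ_left (i j : ℕ) (f : ℂ → ℂ) : wDij (i + 1) j f = wD (wDij i j f) :=
  Function.iterate_succ_apply' ..

theorem wDij_zero_succ (j : ℕ) (f : ℂ → ℂ) : wDij 0 (j + 1) f = wDbar (wDij 0 j f) :=
  Function.iterate_succ_apply' ..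

theorem wDij_succ_right (i j : ℕ) (f : ℂ → ℂ) : wDij i (j + 1) f = wDij i j (wDbar f) :=
  rfl

theorem wDij_succ_zero (i : ℕ) (f : ℂ → ℂ) : wDij (i + 1) 0 f = wDij i 0 (wD f) :=
  rfl

theorem wDij_congr (hV : IsOpen V) (i j : ℕ) (h : EqOn f g V) :
    EqOn (wDij i j f) (wDij i j g) V := by
  induction i with
  | zero =>
    induction j with
    | zero => exact h
    | succ j ih => simpa only [wDij_zero_succ] using wDbar_congr hV ih
  | succ i ih => simpa only [wDij_succ_left] using wD_congr hV ih

theorem contDiffOn_wDij (hV : IsOpen V) (h : ContDiffOn ℝ (n + i + j : ℕ) f V) :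
    ContDiffOn ℝ n (wDij i j f) V := by
  induction i generalizing n with
  | zero =>
    induction j generalizing n with
    | zero => exact h
    | succ j ih =>
      rw [wDij_zero_succ]
      exact contDiffOn_wDbar hV (ih (by convert h using 2; omega))
  | succ i ih =>
    rw [wDij_succ_left]
    exact contDiffOn_wD hV (ih (by convert h using 2; omega))

theorem differentiableAt_wDij (hV : IsOpen V) (h : ContDiffOn ℝ (i + j + 1 : ℕ) f V)
    (hz : z ∈ V) : DifferentiableAt ℝ (wDij i j f) z :=
  differentiableAt_of_contDiffOn_succ (n := 0) hV
    (contDiffOn_wDij hV (by convert h using 2; omega)) hz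

theorem wDbar_wDij (hV : IsOpen V) (h : ContDiffOn ℝ (i + j + 1 : ℕ) f V) :
    EqOn (wDbar (wDij i j f)) (wDij i (j + 1) f) V := by
  induction i with
  | zero => rw [wDij_zero_succ]; exact fun _ _ => rfl
  | succ i ih =>
    simp only [wDij_succ_left]
    have hC2 : ContDiffOn ℝ 2 (wDij i j f) V :=
      contDiffOn_wDij (n := 2) hV (by convert h using 2; omega)
    exact (wDbar_wD_eq_wD_wDbar hV hC2).trans
      (wD_congr hV (ih (h.of_le (by norm_cast; omega))))

theorem wDij_conj (hV : IsOpen V) (h : ContDiffOn ℝ (i + j : ℕ) f V) :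
    EqOn (wDij i j fun w => conj (f w)) (fun w => conj (wDij j i f w)) V := by
  induction i with
  | zero =>
    induction j with
    | zero => exact fun _ _ => rfl
    | succ j ih =>
      rw [wDij_zero_succ, wDij_succ_left]
      refine (wDbar_congr hV (ih (h.of_le (by norm_cast; omega)))).trans fun z hz => ?_
      exact (hasWirtingerDerivAt_of_differentiableAt (differentiableAt_wDij hV
        (by convert h using 2; omega) hz)).star.wDbar_eq
  | succ i ih =>
    rw [wDij_succ_left]
    have h' : ContDiffOn ℝ (j + i + 1 : ℕ) f V := by convert h using 2; omega
    refine (wD_congr hV (ih (h.of_le (by norm_cast; omega)))).trans fun z hz => ?_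
    rw [← wDbar_wDij hV h' hz]
    exact (hasWirtingerDerivAt_of_differentiableAt (differentiableAt_wDij hV h' hz)).star.wD_eq

theorem wDij_add (hV : IsOpen V) (hf : ContDiffOn ℝ (i + j : ℕ) f V)
    (hg : ContDiffOn ℝ (i + j : ℕ) g V) :
    EqOn (wDij i j fun w => f w + g w) (fun w => wDij i j f w + wDij i j g w) V := by
  have hasW {F : ℂ → ℂ} {i j : ℕ} (hF : ContDiffOn ℝ (i + j + 1 : ℕ) F V) {z : ℂ} (hz : z ∈ V) :=
    hasWirtingerDerivAt_of_differentiableAt (differentiableAt_wDij hV hF hz)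
  induction i with
  | zero =>
    induction j with
    | zero => exact fun _ _ => rfl
    | succ j ih =>
      simp only [wDij_zero_succ]
      refine (wDbar_congr hV (ih (hf.of_le ?_) (hg.of_le ?_))).trans fun z hz =>
        ((hasW (by convert hf using 2; omega) hz).add
          (hasW (by convert hg using 2; omega) hz)).wDbar_eq
      all_goals norm_cast; omega
  | succ i ih =>
    simp only [wDij_succ_left]
    refine (wD_congr hV (ih (hf.of_le ?_) (hg.of_le ?_))).trans fun z hz =>
      ((hasW (by convert hf using 2; omega) hz).add
        (hasW (by convert hg using 2; omega) hz)).wD_eq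
    all_goals norm_cast; omega

theorem wDij_const_mul (c : ℂ) (i j : ℕ) (f : ℂ → ℂ) :
    (wDij i j fun w => c * f w) = fun w => c * wDij i j f w := by
  induction i with
  | zero =>
    induction j with
    | zero => rfl
    | succ j ih => rw [wDij_zero_succ, ih, wDbar_const_mul, wDij_zero_succ]
  | succ i ih => rw [wDij_succ_left, ih, wD_const_mul, wDij_succ_left]

theorem wDij_comp_real_mul (a : ℝ) (i j : ℕ) (f : ℂ → ℂ) :
    (wDij i j fun w => f (a * w)) = fun w => a ^ (i + j) * wDij i j f (a * w) := by
  induction i with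
  | zero =>
    induction j with
    | zero => simp [wDij]
    | succ j ih =>
      rw [wDij_zero_succ, ih, wDbar_const_mul, wDij_zero_succ]
      funext z
      rw [wDbar_comp_real_mul]
      ring
  | succ i ih =>
    rw [wDij_succ_left, ih, wD_const_mul, wDij_succ_left]
    funext z
    rw [wD_comp_real_mul]
    ring

end Iterated

end Wirtinger

/-! ### Integrals of powers of the distance -/

section Radial

variable {s ρ C : ℝ} {z : ℂ} {F : ℂ → ℂ}

theorem setOf_norm_sub_mem_Iio (z : ℂ) (ρ : ℝ) : {ζ | ‖ζ - z‖ ∈ Iio ρ} = ball z ρ := by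
  ext; simp [dist_eq_norm]

theorem setOf_norm_sub_mem_Ici (z : ℂ) (ρ : ℝ) : {ζ | ‖ζ - z‖ ∈ Ici ρ} = (ball z ρ)ᶜ := by
  ext; simp [dist_eq_norm]

theorem Ici_inter_Ioi_of_pos (hρ : 0 < ρ) : Ici ρ ∩ Ioi 0 = Ici ρ :=
  inter_eq_left.2 fun _ hr => hρ.trans_le hr

theorem eqOn_mul_rpow (s : ℝ) : EqOn (fun r : ℝ => r * r ^ s) (fun r => r ^ (s + 1)) (Ioi 0) :=
  fun r hr => by simp only [Real.rpow_add_one (ne_of_gt hr), mul_comm]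

theorem measurableSet_setOf_norm_sub_mem {A : Set ℝ} (hA : MeasurableSet A) (z : ℂ) :
    MeasurableSet {ζ : ℂ | ‖ζ - z‖ ∈ A} :=
  (measurable_id.sub_const z).norm hA

theorem integrableOn_comp_norm_sub {A : Set ℝ} (hA : MeasurableSet A) {u : ℝ → ℝ}
    (hu : IntegrableOn (fun r => r * u r) (A ∩ Ioi 0)) (z : ℂ) :
    IntegrableOn (fun ζ => u ‖ζ - z‖) {ζ | ‖ζ - z‖ ∈ A} := by
  have hrad : Integrable fun w : ℂ => A.indicator u ‖w‖ := by
    refine (integrable_fun_norm_addHaar volume).2 ?_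
    rw [IntegrableOn, ← Measure.restrict_restrict hA, ← IntegrableOn,
      ← integrable_indicator_iff hA] at hu
    refine IntegrableOn.congr_fun hu (fun r _ => ?_) measurableSet_Ioi
    by_cases hr : r ∈ A <;> simp [hr, finrank_real_complex]
  exact (integrable_indicator_iff (measurableSet_setOf_norm_sub_mem hA z)).1
    (hrad.comp_sub_right z)

theorem setIntegral_comp_norm_sub {A : Set ℝ} (hA : MeasurableSet A) (u : ℝ → ℝ) (z : ℂ) :
    ∫ ζ in {ζ | ‖ζ - z‖ ∈ A}, u ‖ζ - z‖ = 2 * Real.pi * ∫ r in A ∩ Ioi 0, r * u r := by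
  calc ∫ ζ in {ζ | ‖ζ - z‖ ∈ A}, u ‖ζ - z‖
      = ∫ ζ, A.indicator u ‖ζ - z‖ :=
        (integral_indicator (measurableSet_setOf_norm_sub_mem hA z)).symm
    _ = ∫ w : ℂ, A.indicator u ‖w‖ := integral_sub_right_eq_self (fun w => A.indicator u ‖w‖) z
    _ = 2 * Real.pi * ∫ r in Ioi 0, r * A.indicator u r := by
      rw [integral_fun_norm_addHaar]
      simp only [finrank_real_complex, Measure.real, Complex.volume_ball, ENNReal.ofReal_one,
        one_pow, one_mul, coe_toReal, coe_real_pi, Nat.add_one_sub_one, pow_one, smul_eq_mul,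
        nsmul_eq_mul, Nat.cast_ofNat]
      ring
    _ = 2 * Real.pi * ∫ r in A ∩ Ioi 0, r * u r := by
      rw [inter_comm, ← setIntegral_indicator hA]
      simp only [← indicator_const_mul]
      rfl

theorem integrableOn_rpow_norm_sub_ball (hs : -2 < s) (z : ℂ) (ρ : ℝ) :
    IntegrableOn (fun ζ => ‖ζ - z‖ ^ s) (ball z ρ) := by
  rw [← setOf_norm_sub_mem_Iio]
  refine integrableOn_comp_norm_sub (u := (· ^ s)) measurableSet_Iio ?_ z
  rw [Iio_inter_Ioi]
  exact ((intervalIntegral.intervalIntegrable_rpow' (by linarith)).1.mono_set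
    Ioo_subset_Ioc_self).congr_fun ((eqOn_mul_rpow s).symm.mono Ioo_subset_Ioi_self)
    measurableSet_Ioo

theorem setIntegral_rpow_norm_sub_ball (hs : -2 < s) (z : ℂ) (hρ : 0 ≤ ρ) :
    ∫ ζ in ball z ρ, ‖ζ - z‖ ^ s = 2 * Real.pi / (s + 2) * ρ ^ (s + 2) := by
  rw [← setOf_norm_sub_mem_Iio, setIntegral_comp_norm_sub measurableSet_Iio (· ^ s) z,
    Iio_inter_Ioi, setIntegral_congr_fun measurableSet_Ioo
      ((eqOn_mul_rpow s).mono Ioo_subset_Ioi_self), ← integral_Ioc_eq_integral_Ioo,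
    ← intervalIntegral.integral_of_le hρ, integral_rpow (Or.inl (by linarith)),
    Real.zero_rpow (by linarith)]
  ring_nf

theorem setIntegral_rpow_norm_sub_le {S : Set ℂ} (hs : -2 < s) (hρ : 0 ≤ ρ) (hS : S ⊆ ball z ρ) :
    ∫ ζ in S, ‖ζ - z‖ ^ s ≤ 2 * Real.pi / (s + 2) * ρ ^ (s + 2) :=
  (setIntegral_mono_set (integrableOn_rpow_norm_sub_ball hs z ρ)
    (ae_of_all _ fun _ => by positivity) hS.eventuallyLE).trans_eq
    (setIntegral_rpow_norm_sub_ball hs z hρ)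

theorem integrableOn_rpow_norm_sub_compl_ball (hs : s < -2) (z : ℂ) (hρ : 0 < ρ) :
    IntegrableOn (fun ζ => ‖ζ - z‖ ^ s) (ball z ρ)ᶜ := by
  rw [← setOf_norm_sub_mem_Ici]
  refine integrableOn_comp_norm_sub (u := (· ^ s)) measurableSet_Ici ?_ z
  rw [Ici_inter_Ioi_of_pos hρ]
  exact ((integrableOn_Ici_iff_integrableOn_Ioi (by finiteness)).2
    (integrableOn_Ioi_rpow_of_lt (by linarith) hρ)).congr_fun
    ((eqOn_mul_rpow s).symm.mono fun _ hr => hρ.trans_le hr) measurableSet_Ici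

theorem setIntegral_rpow_norm_sub_compl_ball (hs : s < -2) (z : ℂ) (hρ : 0 < ρ) :
    ∫ ζ in (ball z ρ)ᶜ, ‖ζ - z‖ ^ s = 2 * Real.pi / -(s + 2) * ρ ^ (s + 2) := by
  rw [← setOf_norm_sub_mem_Ici, setIntegral_comp_norm_sub measurableSet_Ici (· ^ s) z,
    Ici_inter_Ioi_of_pos hρ, setIntegral_congr_fun measurableSet_Ici
      ((eqOn_mul_rpow s).mono fun _ hr => hρ.trans_le hr),
    integral_Ici_eq_integral_Ioi, integral_Ioi_rpow_of_lt (by linarith) hρ,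
    add_assoc, one_add_one_eq_two, neg_div, div_neg]
  ring

theorem integrable_of_norm_le_rpow (hs : -2 < s) (hF : AEStronglyMeasurable F)
    (hsupp : ∀ ζ ∉ ball z ρ, F ζ = 0) (hle : ∀ ζ ∈ ball z ρ, ‖F ζ‖ ≤ C * ‖ζ - z‖ ^ s) :
    Integrable F :=
  (integrableOn_iff_integrable_of_support_subset fun ζ hζ => by_contra fun h => hζ (hsupp ζ h)).1 <|
    ((integrableOn_rpow_norm_sub_ball hs z ρ).const_mul C).mono' hF.restrict
      (ae_restrict_of_forall_mem measurableSet_ball hle)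

theorem norm_integral_le_of_norm_le_rpow (hs : -2 < s) (hρ : 0 ≤ ρ)
    (hsupp : ∀ ζ ∉ ball z ρ, F ζ = 0) (hle : ∀ ζ ∈ ball z ρ, ‖F ζ‖ ≤ C * ‖ζ - z‖ ^ s) :
    ‖∫ ζ, F ζ‖ ≤ C * (2 * Real.pi / (s + 2) * ρ ^ (s + 2)) := by
  rw [← setIntegral_eq_integral_of_forall_compl_eq_zero hsupp,
    ← setIntegral_rpow_norm_sub_ball hs z hρ, ← integral_const_mul]
  exact norm_integral_le_of_norm_le ((integrableOn_rpow_norm_sub_ball hs z ρ).const_mul C)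
    (ae_restrict_of_forall_mem measurableSet_ball hle)

theorem norm_integral_le_of_norm_le_rpow_compl (hs : s < -2) (hρ : 0 < ρ)
    (hsupp : ∀ ζ ∈ ball z ρ, F ζ = 0) (hle : ∀ ζ ∉ ball z ρ, ‖F ζ‖ ≤ C * ‖ζ - z‖ ^ s) :
    ‖∫ ζ, F ζ‖ ≤ C * (2 * Real.pi / -(s + 2) * ρ ^ (s + 2)) := by
  rw [← setIntegral_eq_integral_of_forall_compl_eq_zero (s := (ball z ρ)ᶜ)
      fun ζ hζ => hsupp ζ (not_not.1 hζ),
    ← setIntegral_rpow_norm_sub_compl_ball hs z hρ, ← integral_const_mul]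
  exact norm_integral_le_of_norm_le ((integrableOn_rpow_norm_sub_compl_ball hs z hρ).const_mul C)
    (ae_restrict_of_forall_mem measurableSet_ball.compl hle)

end Radial

/-! ### The Cauchy transform -/

/-- The Cauchy transform of a density on the plane; the Cauchy–Green operator on a disk is its
restriction to densities vanishing off the disk. -/
noncomputable def cauchyTransform (f : ℂ → ℂ) (z : ℂ) : ℂ :=
  -(Real.pi : ℂ)⁻¹ * ∫ ζ, f ζ / (ζ - z)

/-- The Beurling transform, as a Bochner integral: it is only meaningful at points `z` where `f`
vanishes to positive order, so that no principal value is needed. -/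
noncomputable def beurlingTransform (f : ℂ → ℂ) (z : ℂ) : ℂ :=
  -(Real.pi : ℂ)⁻¹ * ∫ ζ, f ζ / (ζ - z) ^ 2

/-- Bounded measurable functions with bounded support, the densities whose Cauchy transform
converges absolutely everywhere. -/
structure IsDensity (f : ℂ → ℂ) : Prop where
  aestronglyMeasurable : AEStronglyMeasurable f
  exists_norm_le : ∃ M, ∀ ζ, ‖f ζ‖ ≤ M
  exists_eq_zero : ∃ ρ, ∀ ζ ∉ ball (0 : ℂ) ρ, f ζ = 0

section CauchyTransform

variable {f g : ℂ → ℂ} {z z₀ : ℂ} {α γ ρ M H : ℝ}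

namespace IsDensity

theorem sub (hf : IsDensity f) (hg : IsDensity g) : IsDensity fun ζ => f ζ - g ζ := by
  obtain ⟨M, hM⟩ := hf.exists_norm_le
  obtain ⟨N, hN⟩ := hg.exists_norm_le
  obtain ⟨ρ, hρ⟩ := hf.exists_eq_zero
  obtain ⟨σ, hσ⟩ := hg.exists_eq_zero
  refine ⟨hf.aestronglyMeasurable.sub hg.aestronglyMeasurable,
    ⟨M + N, fun ζ => (norm_sub_le _ _).trans (add_le_add (hM ζ) (hN ζ))⟩, max ρ σ, fun ζ hζ => ?_⟩
  rw [hρ ζ fun h => hζ (ball_subset_ball (le_max_left _ _) h),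
    hσ ζ fun h => hζ (ball_subset_ball (le_max_right _ _) h), sub_zero]

theorem const_mul (hf : IsDensity f) (c : ℂ) : IsDensity fun ζ => c * f ζ := by
  obtain ⟨M, hM⟩ := hf.exists_norm_le
  obtain ⟨ρ, hρ⟩ := hf.exists_eq_zero
  refine ⟨hf.aestronglyMeasurable.const_mul c, ⟨‖c‖ * M, fun ζ => ?_⟩, ρ, fun ζ hζ => ?_⟩
  · rw [norm_mul]
    gcongr
    exact hM ζ
  · rw [hρ ζ hζ, mul_zero]

theorem indicator_of_continuousOn {S : Set ℂ} (hS : MeasurableSet S) (hb : Bornology.IsBounded S)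
    (hf : ContinuousOn f S) (hM : ∀ ζ ∈ S, ‖f ζ‖ ≤ M) : IsDensity (S.indicator f) := by
  obtain ⟨ρ, hρ⟩ := hb.subset_ball 0
  refine ⟨(aestronglyMeasurable_indicator_iff hS).2 (hf.aestronglyMeasurable hS),
    ⟨max M 0, fun ζ => ?_⟩, ρ, fun ζ hζ => indicator_of_notMem (fun h => hζ (hρ h)) f⟩
  by_cases h : ζ ∈ S
  · simpa only [indicator_of_mem h] using (hM ζ h).trans (le_max_left _ _)
  · simp [indicator_of_notMem h]

theorem exists_eq_zero_off_ball (hf : IsDensity f) (z : ℂ) :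
    ∃ ρ, 0 ≤ ρ ∧ ∀ ζ ∉ ball z ρ, f ζ = 0 := by
  obtain ⟨ρ, hρ⟩ := hf.exists_eq_zero
  refine ⟨max 0 (ρ + ‖z‖), le_max_left _ _, fun ζ hζ => hρ ζ fun h => hζ ?_⟩
  rw [mem_ball_zero_iff] at h
  rw [mem_ball, dist_eq_norm]
  exact lt_max_of_lt_right ((norm_sub_le _ _).trans_lt (by linarith))

theorem integrable_div (hf : IsDensity f) (z : ℂ) : Integrable fun ζ => f ζ / (ζ - z) := by
  obtain ⟨M, hM⟩ := hf.exists_norm_le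
  obtain ⟨ρ, -, hρ⟩ := hf.exists_eq_zero_off_ball z
  refine integrable_of_norm_le_rpow (s := -1) (C := M) (z := z) (ρ := ρ) (by norm_num)
    (hf.aestronglyMeasurable.div₀ (by fun_prop)) (fun ζ hζ => by rw [hρ ζ hζ, zero_div])
    fun ζ _ => ?_
  rw [norm_div, Real.rpow_neg_one, ← div_eq_mul_inv]
  gcongr
  exact hM ζ

end IsDensity

theorem cauchyTransform_sub (hf : IsDensity f) (hg : IsDensity g) (z : ℂ) :
    cauchyTransform (fun ζ => f ζ - g ζ) z = cauchyTransform f z - cauchyTransform g z := by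
  rw [cauchyTransform, cauchyTransform, cauchyTransform, ← mul_sub,
    ← integral_sub (hf.integrable_div z) (hg.integrable_div z)]
  simp only [_root_.sub_div]

theorem cauchyTransform_const_mul (c : ℂ) (f : ℂ → ℂ) (z : ℂ) :
    cauchyTransform (fun ζ => c * f ζ) z = c * cauchyTransform f z := by
  simp only [cauchyTransform, mul_div_assoc, integral_const_mul]
  ring

theorem norm_cauchyTransform_le (hρ : 0 ≤ ρ) (hsupp : ∀ ζ ∉ ball z ρ, f ζ = 0)
    (hM : ∀ ζ, ‖f ζ‖ ≤ M) : ‖cauchyTransform f z‖ ≤ 2 * M * ρ := by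
  have := norm_integral_le_of_norm_le_rpow (s := -1) (C := M) (F := fun ζ => f ζ / (ζ - z))
    (by norm_num) hρ (fun ζ hζ => by rw [hsupp ζ hζ, zero_div]) fun ζ _ => by
      rw [norm_div, Real.rpow_neg_one, ← div_eq_mul_inv]
      gcongr
      exact hM ζ
  rw [cauchyTransform, norm_mul, norm_neg, norm_inv, norm_real, Real.norm_of_nonneg Real.pi_nonneg,
    inv_mul_le_iff₀ Real.pi_pos]
  refine this.trans_eq ?_
  rw [show (-1 : ℝ) + 2 = 1 by norm_num, Real.rpow_one]
  ring

theorem norm_div_sq_le (hf : ‖f z‖ ≤ H * ‖z - z₀‖ ^ α) (hα : α < 2) :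
    ‖f z / (z - z₀) ^ 2‖ ≤ H * ‖z - z₀‖ ^ (α - 2) := by
  rcases eq_or_ne z z₀ with rfl | hz
  · simp [Real.zero_rpow (show α - 2 ≠ 0 by linarith)]
  · have : 0 < ‖z - z₀‖ := norm_pos_iff.2 (sub_ne_zero.2 hz)
    rw [norm_div, norm_pow, Real.rpow_sub this, Real.rpow_ofNat, ← mul_div_assoc]
    gcongr

theorem norm_beurlingTransform_le (hα : α ∈ Ioo 0 2) (hρ : 0 ≤ ρ)
    (hsupp : ∀ ζ ∉ ball z ρ, f ζ = 0) (hH : ∀ ζ, ‖f ζ‖ ≤ H * ‖ζ - z‖ ^ α) :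
    ‖beurlingTransform f z‖ ≤ 2 * H / α * ρ ^ α := by
  have := norm_integral_le_of_norm_le_rpow (s := α - 2) (F := fun ζ => f ζ / (ζ - z) ^ 2)
    (by linarith [hα.1]) hρ (fun ζ hζ => by rw [hsupp ζ hζ, zero_div]) fun ζ _ =>
      norm_div_sq_le (hH ζ) hα.2
  rw [beurlingTransform, norm_mul, norm_neg, norm_inv, norm_real,
    Real.norm_of_nonneg Real.pi_nonneg, inv_mul_le_iff₀ Real.pi_pos]
  refine this.trans_eq ?_
  rw [sub_add_cancel]
  ring

theorem le_two_mul_rpow_mul_rpow {e x : ℝ} (he : 0 < e) (hx : 0 ≤ x) (hγ : γ ∈ Icc 0 1)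
    (hex : e ≤ 2 * x) : e ≤ 2 * (e ^ γ * x ^ (1 - γ)) := calc
  e = e ^ γ * e ^ (1 - γ) := by rw [← Real.rpow_add he, add_sub_cancel, Real.rpow_one]
  _ ≤ e ^ γ * (2 * x) ^ (1 - γ) := by
    gcongr
    linarith [hγ.2]
  _ = 2 ^ (1 - γ) * (e ^ γ * x ^ (1 - γ)) := by rw [Real.mul_rpow two_pos.le hx]; ring
  _ ≤ 2 * (e ^ γ * x ^ (1 - γ)) := by
    gcongr
    exact (Real.rpow_le_rpow_of_exponent_le one_le_two (by linarith [hγ.1])).trans_eq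
      (Real.rpow_one 2)

/-- Whichever of `a`, `b` is larger is at least `e / 2`. -/
theorem mul_rpow_div_le {a b e : ℝ} (ha : 0 < a) (hb : 0 < b) (he : 0 < e) (hγ : γ ∈ Ioo 0 1)
    (hab : e ≤ a + b) :
    e * a ^ (2 * γ - 2) / b ≤ 2 * e ^ γ * (a ^ (γ - 2) + b ^ (γ - 2)) := by
  have hγ' : γ ∈ Icc 0 1 := Ioo_subset_Icc_self hγ
  rcases le_total a b with h | h
  · calc e * a ^ (2 * γ - 2) / b
        ≤ 2 * (e ^ γ * b ^ (1 - γ)) * a ^ (2 * γ - 2) / b := by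
          gcongr
          exact le_two_mul_rpow_mul_rpow he hb.le hγ' (by linarith)
      _ = 2 * e ^ γ * (b ^ (-γ) * a ^ (2 * γ - 2)) := by
          rw [sub_eq_neg_add 1 γ, Real.rpow_add_one hb.ne']
          field_simp
      _ ≤ 2 * e ^ γ * (a ^ (-γ) * a ^ (2 * γ - 2)) := by
          gcongr 2 * e ^ γ * (?_ * _)
          exact Real.rpow_le_rpow_of_nonpos ha h (by linarith [hγ.1])
      _ = 2 * e ^ γ * a ^ (γ - 2) := by rw [← Real.rpow_add ha]; ring_nf
      _ ≤ _ := by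
          gcongr
          exact le_add_of_nonneg_right (by positivity)
  · calc e * a ^ (2 * γ - 2) / b
        ≤ 2 * (e ^ γ * a ^ (1 - γ)) * a ^ (2 * γ - 2) / b := by
          gcongr
          exact le_two_mul_rpow_mul_rpow he ha.le hγ' (by linarith)
      _ = 2 * e ^ γ * (a ^ (γ - 1) / b) := by
          rw [show γ - 1 = (1 - γ) + (2 * γ - 2) by ring, Real.rpow_add ha]
          ring
      _ ≤ 2 * e ^ γ * (b ^ (γ - 1) / b) := by
          gcongr 2 * e ^ γ * (?_ / _)
          exact Real.rpow_le_rpow_of_nonpos hb h (by linarith [hγ.2])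
      _ = 2 * e ^ γ * b ^ (γ - 2) := by rw [← Real.rpow_sub_one hb.ne']; ring_nf
      _ ≤ _ := by
          gcongr
          exact le_add_of_nonneg_left (by positivity)

theorem integrable_div_sq (hf : IsDensity f) (hα : α ∈ Ioo 0 2)
    (hH : ∀ ζ, ‖f ζ‖ ≤ H * ‖ζ - z‖ ^ α) : Integrable fun ζ => f ζ / (ζ - z) ^ 2 := by
  obtain ⟨ρ, -, hρ⟩ := hf.exists_eq_zero_off_ball z
  exact integrable_of_norm_le_rpow (s := α - 2) (C := H) (z := z) (ρ := ρ) (by linarith [hα.1])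
    (hf.aestronglyMeasurable.div₀ (by fun_prop)) (fun ζ hζ => by rw [hρ ζ hζ, zero_div])
    fun ζ _ => norm_div_sq_le (hH ζ) hα.2

theorem norm_mul_norm_remainder_le {ζ : ℂ} (hγ : γ ∈ Ioo 0 1) (hz : z ≠ z₀) (hH : 0 ≤ H)
    (hf : ‖f ζ‖ ≤ H * ‖ζ - z₀‖ ^ (2 * γ)) :
    ‖z - z₀‖ * ‖f ζ / ((ζ - z) * (ζ - z₀) ^ 2)‖ ≤
      2 * H * ‖z - z₀‖ ^ γ * (‖ζ - z₀‖ ^ (γ - 2) + ‖ζ - z‖ ^ (γ - 2)) := by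
  rcases eq_or_ne ζ z with rfl | h1
  · simpa using by positivity
  rcases eq_or_ne ζ z₀ with rfl | h2
  · simpa using by positivity
  have htri : ‖z - z₀‖ ≤ ‖ζ - z₀‖ + ‖ζ - z‖ := by
    simpa only [dist_eq_norm, add_comm, norm_sub_rev z ζ] using dist_triangle z ζ z₀
  calc ‖z - z₀‖ * ‖f ζ / ((ζ - z) * (ζ - z₀) ^ 2)‖
      = ‖z - z₀‖ * ‖f ζ / (ζ - z₀) ^ 2‖ / ‖ζ - z‖ := by
        rw [mul_div_assoc, ← norm_div, div_div, mul_comm (ζ - z)]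
    _ ≤ ‖z - z₀‖ * (H * ‖ζ - z₀‖ ^ (2 * γ - 2)) / ‖ζ - z‖ := by
        gcongr
        exact norm_div_sq_le hf (by linarith [hγ.2])
    _ = H * (‖z - z₀‖ * ‖ζ - z₀‖ ^ (2 * γ - 2) / ‖ζ - z‖) := by ring
    _ ≤ H * (2 * ‖z - z₀‖ ^ γ * (‖ζ - z₀‖ ^ (γ - 2) + ‖ζ - z‖ ^ (γ - 2))) := by
        gcongr
        exact mul_rpow_div_le (norm_sub_pos_iff.2 h2) (norm_sub_pos_iff.2 h1)
          (norm_sub_pos_iff.2 hz) hγ htri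
    _ = _ := by ring

theorem norm_mul_norm_integral_remainder_le (hγ : γ ∈ Ioo 0 1) (hρ : 0 ≤ ρ)
    (hsupp : ∀ ζ ∉ ball z₀ ρ ∩ ball z ρ, f ζ = 0)
    (hH : ∀ ζ, ‖f ζ‖ ≤ H * ‖ζ - z₀‖ ^ (2 * γ)) (hz : z ≠ z₀) :
    ‖z - z₀‖ * ‖∫ ζ, f ζ / ((ζ - z) * (ζ - z₀) ^ 2)‖ ≤
      ‖z - z₀‖ ^ γ * (8 * Real.pi * H / γ * ρ ^ γ) := by
  set S := ball z₀ ρ ∩ ball z ρ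
  have hs : -2 < γ - 2 := by linarith [hγ.1]
  have hH0 : 0 ≤ H := nonneg_of_mul_nonneg_left ((norm_nonneg _).trans (hH z))
    (Real.rpow_pos_of_pos (norm_sub_pos_iff.2 hz) _)
  have hint₀ : IntegrableOn (fun ζ => ‖ζ - z₀‖ ^ (γ - 2)) S :=
    (integrableOn_rpow_norm_sub_ball hs z₀ ρ).mono_set inter_subset_left
  have hint : IntegrableOn (fun ζ => ‖ζ - z‖ ^ (γ - 2)) S :=
    (integrableOn_rpow_norm_sub_ball hs z ρ).mono_set inter_subset_right
  calc ‖z - z₀‖ * ‖∫ ζ, f ζ / ((ζ - z) * (ζ - z₀) ^ 2)‖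
      = ‖∫ ζ in S, (‖z - z₀‖ : ℂ) * (f ζ / ((ζ - z) * (ζ - z₀) ^ 2))‖ := by
        rw [integral_const_mul, norm_mul, norm_real, norm_norm,
          setIntegral_eq_integral_of_forall_compl_eq_zero fun ζ hζ => by rw [hsupp ζ hζ, zero_div]]
    _ ≤ ∫ ζ in S, 2 * H * ‖z - z₀‖ ^ γ * (‖ζ - z₀‖ ^ (γ - 2) + ‖ζ - z‖ ^ (γ - 2)) := by
        refine norm_integral_le_of_norm_le ((hint₀.add hint).const_mul _) (ae_of_all _ fun ζ => ?_)
        rw [norm_mul, norm_real, norm_norm]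
        exact norm_mul_norm_remainder_le hγ hz hH0 (hH ζ)
    _ = 2 * H * ‖z - z₀‖ ^ γ *
          ((∫ ζ in S, ‖ζ - z₀‖ ^ (γ - 2)) + ∫ ζ in S, ‖ζ - z‖ ^ (γ - 2)) := by
        rw [integral_const_mul, integral_add hint₀ hint]
    _ ≤ 2 * H * ‖z - z₀‖ ^ γ * (2 * Real.pi / (γ - 2 + 2) * ρ ^ (γ - 2 + 2) +
          2 * Real.pi / (γ - 2 + 2) * ρ ^ (γ - 2 + 2)) := by
        gcongr
        · exact setIntegral_rpow_norm_sub_le hs hρ inter_subset_left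
        · exact setIntegral_rpow_norm_sub_le hs hρ inter_subset_right
    _ = ‖z - z₀‖ ^ γ * (8 * Real.pi * H / γ * ρ ^ γ) := by
        rw [sub_add_cancel]
        ring

theorem cauchyTransform_sub_sub_beurlingTransform (hf : IsDensity f) (hα : α ∈ Ioo 0 2)
    (hH : ∀ ζ, ‖f ζ‖ ≤ H * ‖ζ - z₀‖ ^ α) (z : ℂ) :
    cauchyTransform f z - cauchyTransform f z₀ - (z - z₀) * beurlingTransform f z₀ =
      -(Real.pi : ℂ)⁻¹ * (z - z₀) ^ 2 * ∫ ζ, f ζ / ((ζ - z) * (ζ - z₀) ^ 2) := by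
  have hint := (hf.integrable_div z).sub (hf.integrable_div z₀)
  have hkernel : ∀ᵐ ζ : ℂ, (z - z₀) ^ 2 * (f ζ / ((ζ - z) * (ζ - z₀) ^ 2)) =
      f ζ / (ζ - z) - f ζ / (ζ - z₀) - (z - z₀) * (f ζ / (ζ - z₀) ^ 2) := by
    filter_upwards [volume.ae_ne z, volume.ae_ne z₀] with ζ h1 h2
    have := sub_ne_zero.2 h1
    have := sub_ne_zero.2 h2
    field_simp
    ring
  have hsplit := integral_sub hint ((integrable_div_sq hf hα hH).const_mul (z - z₀))
  simp only [Pi.sub_apply] at hsplit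
  rw [mul_assoc, ← integral_const_mul, integral_congr_ae hkernel, hsplit,
    integral_sub (hf.integrable_div z) (hf.integrable_div z₀), integral_const_mul]
  simp only [cauchyTransform, beurlingTransform]
  ring

theorem hasDerivAt_cauchyTransform (hf : IsDensity f) (hα : α ∈ Ioo 0 2)
    (hH : ∀ ζ, ‖f ζ‖ ≤ H * ‖ζ - z₀‖ ^ α) :
    HasDerivAt (cauchyTransform f) (beurlingTransform f z₀) z₀ := by
  have hγ : α / 2 ∈ Ioo 0 1 := ⟨half_pos hα.1, by linarith [hα.2]⟩
  obtain ⟨ρ, hρ0, hρ⟩ := hf.exists_eq_zero_off_ball z₀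
  set C := 8 * H / (α / 2) * (ρ + 1) ^ (α / 2)
  have hbound : ∀ᶠ z in 𝓝 z₀, ‖z - z₀‖⁻¹ *
      ‖cauchyTransform f z - cauchyTransform f z₀ - (z - z₀) • beurlingTransform f z₀‖ ≤
        ‖z - z₀‖ ^ (α / 2) * C := by
    filter_upwards [ball_mem_nhds z₀ one_pos] with z hz1
    rcases eq_or_ne z z₀ with rfl | hz
    · simp [Real.zero_rpow hγ.1.ne']
    have hsupp (ζ : ℂ) (hζ : ζ ∉ ball z₀ (ρ + 1) ∩ ball z (ρ + 1)) : f ζ = 0 := by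
      refine hρ ζ fun h => hζ ⟨ball_subset_ball (by simp) h, ?_⟩
      exact mem_ball.2 ((dist_triangle_right _ _ _).trans_lt (add_lt_add h hz1))
    have he : 0 < ‖z - z₀‖ := norm_sub_pos_iff.2 hz
    rw [smul_eq_mul, cauchyTransform_sub_sub_beurlingTransform hf hα hH, norm_mul, norm_mul,
      norm_neg, norm_inv, norm_real, Real.norm_of_nonneg Real.pi_nonneg, norm_pow]
    calc _ = Real.pi⁻¹ * (‖z - z₀‖ * ‖∫ ζ, f ζ / ((ζ - z) * (ζ - z₀) ^ 2)‖) := by field_simp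
      _ ≤ Real.pi⁻¹ * (‖z - z₀‖ ^ (α / 2) *
            (8 * Real.pi * H / (α / 2) * (ρ + 1) ^ (α / 2))) := by
          refine mul_le_mul_of_nonneg_left ?_ (by positivity)
          exact norm_mul_norm_integral_remainder_le hγ (by linarith) hsupp
            (by simpa only [mul_div_cancel₀ α (two_ne_zero' ℝ)] using hH) hz
      _ = _ := by
          simp only [C]
          field_simp
  refine hasDerivAt_iff_tendsto.2 (squeeze_zero' (.of_forall fun _ => by positivity) hbound ?_)
  have : Tendsto (fun z => ‖z - z₀‖ ^ (α / 2) * C) (𝓝 z₀) (𝓝 (‖z₀ - z₀‖ ^ (α / 2) * C)) :=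
    (((continuous_id.sub continuous_const).norm.rpow_const fun _ => Or.inr hγ.1.le).mul
      continuous_const).tendsto z₀
  simpa [Real.zero_rpow hγ.1.ne'] using this

end CauchyTransform

/-! ### Circle averages and the Cauchy transform of a disk -/

theorem integral_eq_integral_circleAverage {G : ℂ → ℂ} (hm : Measurable G) (hG : Integrable G) :
    ∫ ζ, G ζ = ∫ ζ : ℂ, Real.circleAverage G 0 ‖ζ‖ := by
  have hrot (θ : ℝ) : MeasurePreserving fun ζ : ℂ => circleMap 0 1 θ * ζ := by
    convert (rotation (Circle.exp θ)).measurePreserving using 2 with ζ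
    simp [rotation_apply, circleMap]
  have hemb (θ : ℝ) : MeasurableEmbedding fun ζ : ℂ => circleMap 0 1 θ * ζ :=
    measurableEmbedding_mulLeft₀ (circleMap_ne_center one_ne_zero)
  have hint : Integrable (Function.uncurry fun θ ζ => G (circleMap 0 1 θ * ζ))
      ((volume.restrict (uIoc 0 (2 * Real.pi))).prod volume) := by
    refine (integrable_prod_iff (hm.comp (by fun_prop)).aestronglyMeasurable).2
      ⟨ae_of_all _ fun θ => (hrot θ).integrable_comp_of_integrable hG, ?_⟩
    have hconst (θ : ℝ) : ∫ ζ, ‖G (circleMap 0 1 θ * ζ)‖ = ∫ ζ, ‖G ζ‖ :=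
      (hrot θ).integral_comp (hemb θ) fun ζ => ‖G ζ‖
    have : IsFiniteMeasure (volume.restrict (uIoc 0 (2 * Real.pi))) :=
      isFiniteMeasure_restrict.2 (by simp [uIoc])
    exact (integrable_const _).congr (ae_of_all _ fun θ => (hconst θ).symm)
  calc ∫ ζ, G ζ = (2 * Real.pi)⁻¹ • ∫ _θ in (0 : ℝ)..2 * Real.pi, ∫ ζ, G ζ := by
        rw [intervalIntegral.integral_const, sub_zero, inv_smul_smul₀ Real.two_pi_pos.ne']
    _ = (2 * Real.pi)⁻¹ • ∫ θ in (0 : ℝ)..2 * Real.pi, ∫ ζ, G (circleMap 0 1 θ * ζ) := by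
        congr! 3 with θ
        exact ((hrot θ).integral_comp (hemb θ) G).symm
    _ = ∫ ζ, (2 * Real.pi)⁻¹ • ∫ θ in (0 : ℝ)..2 * Real.pi, G (circleMap 0 1 θ * ζ) := by
        rw [intervalIntegral_integral_swap hint, integral_smul]
    _ = ∫ ζ : ℂ, Real.circleAverage G 0 ‖ζ‖ := by
        congr! 2 with ζ
        rw [Real.circleAverage_eq_integral_add (arg ζ)]
        congr! 4 with θ
        rw [circleMap_zero, circleMap_zero, Complex.ofReal_one, one_mul]
        nth_rewrite 1 [← norm_mul_exp_arg_mul_I ζ]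
        rw [Complex.ofReal_add, add_mul, Complex.exp_add]
        ring

section Disk

variable {w : ℂ} {r ρ : ℝ}

theorem circleAverage_inv_sub_of_lt_norm (hr : 0 ≤ r) (hw : r < ‖w‖) :
    Real.circleAverage (fun ζ => (ζ - w)⁻¹) 0 r = -w⁻¹ := by
  have hdiff : DifferentiableOn ℂ (fun ζ => (ζ - w)⁻¹) (closedBall 0 |r|) := by
    refine DifferentiableOn.fun_inv (by fun_prop) fun ζ hζ => sub_ne_zero.2 ?_
    rintro rfl
    rw [mem_closedBall_zero_iff, abs_of_nonneg hr] at hζ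
    exact hw.not_ge hζ
  simpa [inv_neg] using (hdiff.diffContOnCl_ball subset_rfl).circleAverage

theorem circleAverage_inv_sub_of_norm_lt (hw : ‖w‖ < r) :
    Real.circleAverage (fun ζ => (ζ - w)⁻¹) 0 r = 0 := by
  have hr : 0 < r := (norm_nonneg w).trans_lt hw
  have hne {ζ : ℂ} (hζ : ζ ∈ closedBall 0 |r|) : (r : ℂ) ^ 2 - conj w * ζ ≠ 0 := by
    rw [mem_closedBall_zero_iff, abs_of_pos hr] at hζ
    refine sub_ne_zero.2 fun h => absurd (congrArg norm h) (ne_of_gt ?_)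
    rw [norm_mul, norm_conj, norm_pow, norm_real, Real.norm_of_nonneg hr.le]
    nlinarith [norm_nonneg w, norm_nonneg ζ]
  have hdiff : DifferentiableOn ℂ (fun ζ => ζ / ((r : ℂ) ^ 2 - conj w * ζ)) (closedBall 0 |r|) :=
    DifferentiableOn.fun_div (by fun_prop) (by fun_prop) fun ζ => hne
  -- On the circle `ζ * conj ζ = r ^ 2` the kernel is antiholomorphic inside.
  have hreflect : EqOn (fun ζ => (ζ - w)⁻¹) (fun ζ => conj (ζ / ((r : ℂ) ^ 2 - conj w * ζ)))
      (sphere 0 |r|) := by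
    intro ζ hζ
    have hζr : ζ * conj ζ = (r : ℂ) ^ 2 := by
      rw [mul_conj', mem_sphere_zero_iff_norm.1 hζ, abs_of_pos hr]
    have h0 := (map_ne_zero conj).2 (hne (sphere_subset_closedBall hζ))
    have h1 : ζ - w ≠ 0 := sub_ne_zero.2 fun h => hw.ne <| by
      rw [← h, mem_sphere_zero_iff_norm.1 hζ, abs_of_pos hr]
    simp only [map_div₀, map_sub, map_mul, map_pow, conj_ofReal, conj_conj] at h0 ⊢
    field_simp
    linear_combination -hζr
  rw [Real.circleAverage_congr_sphere hreflect]
  have hcont := hdiff.continuousOn.mono sphere_subset_closedBall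
  have := conjCLE.toContinuousLinearMap.circleAverage_comp_comm hcont.circleIntegrable'
  have hav := (hdiff.diffContOnCl_ball subset_rfl).circleAverage
  simp only [zero_div] at hav
  rw [hav, map_zero] at this
  exact this

theorem circleAverage_indicator_ball_inv_sub (hρ : w ∈ ball 0 ρ) (hr : 0 ≤ r) (hrw : r ≠ ‖w‖) :
    Real.circleAverage ((ball (0 : ℂ) ρ).indicator fun ζ => (ζ - w)⁻¹) 0 r =
      if r < ‖w‖ then -w⁻¹ else 0 := by
  rw [mem_ball_zero_iff] at hρ
  have hnorm {ζ : ℂ} (hζ : ζ ∈ sphere 0 |r|) : ‖ζ‖ = r := by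
    rw [mem_sphere_zero_iff_norm.1 hζ, abs_of_nonneg hr]
  by_cases hrρ : r < ρ
  · have hon : EqOn ((ball (0 : ℂ) ρ).indicator fun ζ => (ζ - w)⁻¹) (fun ζ => (ζ - w)⁻¹)
        (sphere 0 |r|) := fun ζ hζ => indicator_of_mem (by rwa [mem_ball_zero_iff, hnorm hζ]) _
    rw [Real.circleAverage_congr_sphere hon]
    split_ifs with h
    · exact circleAverage_inv_sub_of_lt_norm hr h
    · exact circleAverage_inv_sub_of_norm_lt (lt_of_le_of_ne (not_lt.1 h) hrw.symm)
  · have hoff : EqOn ((ball (0 : ℂ) ρ).indicator fun ζ => (ζ - w)⁻¹) (fun _ => 0)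
        (sphere 0 |r|) := fun ζ hζ => indicator_of_notMem (by rwa [mem_ball_zero_iff, hnorm hζ]) _
    rw [Real.circleAverage_congr_sphere hoff, Real.circleAverage_const,
      if_neg fun h => hrρ (h.trans hρ)]

theorem cauchyTransform_indicator_ball_zero (hw : w ∈ ball 0 ρ) :
    cauchyTransform ((ball 0 ρ).indicator 1) w = conj w := by
  have hker (ζ : ℂ) : (ball (0 : ℂ) ρ).indicator 1 ζ / (ζ - w) =
      (ball (0 : ℂ) ρ).indicator (fun ζ => (ζ - w)⁻¹) ζ := by
    by_cases h : ζ ∈ ball (0 : ℂ) ρ <;> simp [h]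
  have hint := (IsDensity.indicator_of_continuousOn (f := 1) (M := 1)
    (measurableSet_ball (x := (0 : ℂ)) (ε := ρ)) isBounded_ball continuousOn_const
    (by simp)).integrable_div w
  simp only [hker] at hint
  have hae : ∀ᵐ ζ : ℂ, Real.circleAverage ((ball (0 : ℂ) ρ).indicator fun ζ => (ζ - w)⁻¹) 0 ‖ζ‖ =
      (ball (0 : ℂ) ‖w‖).indicator (fun _ => -w⁻¹) ζ := by
    filter_upwards [measure_eq_zero_iff_ae_notMem.1 (Measure.addHaar_sphere volume (0 : ℂ) ‖w‖)]
      with ζ hζ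
    rw [circleAverage_indicator_ball_inv_sub hw (norm_nonneg ζ)
      fun h => hζ (mem_sphere_zero_iff_norm.2 h), indicator]
    simp only [mem_ball_zero_iff]
  have hmeas : Measurable ((ball (0 : ℂ) ρ).indicator fun ζ => (ζ - w)⁻¹) :=
    (by fun_prop : Measurable fun ζ : ℂ => (ζ - w)⁻¹).indicator measurableSet_ball
  simp only [cauchyTransform, hker]
  rw [integral_eq_integral_circleAverage hmeas hint, integral_congr_ae hae,
    integral_indicator_const _ measurableSet_ball, measureReal_def, Complex.volume_ball]
  rcases eq_or_ne w 0 with rfl | h0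
  · simp
  · have := Real.pi_ne_zero
    have hnorm := mul_conj' w
    simp only [ENNReal.toReal_mul, ENNReal.toReal_pow, ENNReal.toReal_ofReal (norm_nonneg w),
      ENNReal.coe_toReal, NNReal.coe_real_pi, real_smul, Complex.ofReal_mul, Complex.ofReal_pow,
      ← hnorm]
    field_simp

theorem cauchyTransform_indicator_ball {c : ℂ} (hw : w ∈ ball c ρ) :
    cauchyTransform ((ball c ρ).indicator 1) w = conj (w - c) := by
  rw [← cauchyTransform_indicator_ball_zero (ρ := ρ) (by simpa [dist_eq_norm] using hw)]
  simp only [cauchyTransform]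
  rw [← integral_add_right_eq_self _ c]
  congr! 4
  · simp [indicator, dist_eq_norm]
  · ring

end Disk

/-! ### Hölder functions on the unit ball -/

section LocalHolder

variable {E F : Type*} [NormedAddCommGroup E] [NormedAddCommGroup F]
  {f : E → F} {A α t : ℝ} {z z' : E}

theorem continuousWithinAt_of_eventually_norm_sub_le {S : Set E} (hα : 0 < α)
    (h : ∀ᶠ w in 𝓝[S] z, ‖f z - f w‖ ≤ A * ‖z - w‖ ^ α) : ContinuousWithinAt f S z := by
  have hlim : ContinuousWithinAt (fun w => A * ‖z - w‖ ^ α) S z :=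
    ((by fun_prop : ContinuousWithinAt (fun w => ‖z - w‖) S z).rpow_const
      (Or.inr hα.le)).const_mul A
  simp only [ContinuousWithinAt, sub_self, norm_zero, Real.zero_rpow hα.ne', mul_zero] at hlim
  refine tendsto_iff_norm_sub_tendsto_zero.2
    (squeeze_zero' (.of_forall fun _ => norm_nonneg _) ?_ hlim)
  simpa only [norm_sub_rev] using h

theorem continuousAt_of_local (hα : 0 < α)
    (hloc : ∀ w' ∈ ball (0 : E) 1, ‖z - w'‖ ≤ (1 - ‖z‖) / 2 → ‖f z - f w'‖ ≤ A * ‖z - w'‖ ^ α)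
    (hz : z ∈ ball (0 : E) 1) : ContinuousAt f z := by
  rw [← continuousWithinAt_univ]
  refine continuousWithinAt_of_eventually_norm_sub_le hα (A := A) ?_
  rw [nhdsWithin_univ]
  filter_upwards [isOpen_ball.mem_nhds hz, ball_mem_nhds z
    (show 0 < (1 - ‖z‖) / 2 by linarith [mem_ball_zero_iff.1 hz])] with w hw hw'
  exact hloc w hw (mem_ball_iff_norm'.1 hw').le

variable [NormedSpace ℝ E]

theorem norm_smul_le_of_norm_le_one {c : ℝ} (hc : 0 ≤ c) (hz : ‖z‖ ≤ 1) : ‖c • z‖ ≤ c := by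
  rw [norm_smul, Real.norm_of_nonneg hc]
  exact mul_le_of_le_one_right hc hz

theorem one_sub_smul_mem_ball (ht : t ∈ Icc 0 1) (hz : z ∈ ball (0 : E) 1) :
    (1 - t) • z ∈ ball (0 : E) 1 := by
  rw [mem_ball_zero_iff] at hz ⊢
  rw [norm_smul, Real.norm_of_nonneg (sub_nonneg.2 ht.2)]
  exact (mul_le_of_le_one_left (norm_nonneg z) (by linarith [ht.1])).trans_lt hz

theorem norm_sub_halve_le_of_local (hα : 0 < α) (hA : 0 ≤ A)
    (hloc : ∀ w ∈ ball (0 : E) 1, ∀ w' ∈ ball (0 : E) 1, ‖w - w'‖ ≤ (1 - ‖w‖) / 2 →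
      ‖f w - f w'‖ ≤ A * ‖w - w'‖ ^ α)
    (hz : z ∈ ball (0 : E) 1) (ht : t ∈ Icc 0 1) :
    ‖f ((1 - t) • z) - f ((1 - t / 2) • z)‖ ≤ A * (t / 2) ^ α := by
  have hz1 := (mem_ball_zero_iff.1 hz).le
  have ht' : t / 2 ∈ Icc 0 1 := ⟨by linarith [ht.1], by linarith [ht.2]⟩
  have hstep : ‖(1 - t) • z - (1 - t / 2) • z‖ ≤ t / 2 := by
    rw [← _root_.sub_smul, show 1 - t - (1 - t / 2) = -(t / 2) by ring, neg_smul, norm_neg]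
    exact norm_smul_le_of_norm_le_one ht'.1 hz1
  have hnorm : ‖(1 - t) • z‖ ≤ 1 - t := norm_smul_le_of_norm_le_one (sub_nonneg.2 ht.2) hz1
  exact (hloc _ (one_sub_smul_mem_ball ht hz) _ (one_sub_smul_mem_ball ht' hz)
    (by linarith)).trans (by gcongr)

/-- Dyadic chaining along the segment from `z` to the centre. -/
theorem norm_sub_shrink_le_of_local (hα : 0 < α) (hA : 0 ≤ A)
    (hloc : ∀ w ∈ ball (0 : E) 1, ∀ w' ∈ ball (0 : E) 1, ‖w - w'‖ ≤ (1 - ‖w‖) / 2 →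
      ‖f w - f w'‖ ≤ A * ‖w - w'‖ ^ α)
    (hz : z ∈ ball (0 : E) 1) (ht : t ∈ Icc 0 1) :
    ‖f ((1 - t) • z) - f z‖ ≤ A * (t / 2) ^ α / (1 - 2⁻¹ ^ α) := by
  set s : ℕ → ℝ := fun n => t * 2⁻¹ ^ n
  have hs (n : ℕ) : s n ∈ Icc 0 1 :=
    ⟨by have := ht.1; positivity, mul_le_one₀ ht.2 (by positivity)
      (pow_le_one₀ (by norm_num) (by norm_num))⟩
  have hs_succ (n : ℕ) : s (n + 1) = s n / 2 := by
    simp only [s]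
    ring
  have hgeom (n : ℕ) : dist (f ((1 - s n) • z)) (f ((1 - s (n + 1)) • z)) ≤
      A * (t / 2) ^ α * (2⁻¹ ^ α) ^ n := by
    rw [dist_eq_norm, hs_succ]
    calc _ ≤ A * (s n / 2) ^ α := norm_sub_halve_le_of_local hα hA hloc hz (hs n)
      _ = A * (t / 2) ^ α * (2⁻¹ ^ α) ^ n := by
        have := ht.1
        rw [mul_assoc, Real.rpow_pow_comm (by norm_num), ← Real.mul_rpow (by positivity)
          (by positivity)]
        congr 2
        ring
  have hstends : Tendsto (fun n => (1 - s n) • z) atTop (𝓝 z) := by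
    have : Tendsto s atTop (𝓝 (t * 0)) :=
      (_root_.tendsto_pow_atTop_nhds_zero_of_lt_one (by norm_num) (by norm_num)).const_mul t
    simpa using (this.const_sub 1).smul_const z
  have hlt : (2⁻¹ : ℝ) ^ α < 1 := Real.rpow_lt_one (by norm_num) (by norm_num) hα
  simpa [s, dist_eq_norm] using dist_le_of_le_geometric_of_tendsto₀ _ _ hlt hgeom
    ((continuousAt_of_local hα (hloc z hz) hz).tendsto.comp hstends)

theorem norm_sub_le_of_local (hα : 0 < α) (hA : 0 ≤ A)
    (hloc : ∀ w ∈ ball (0 : E) 1, ∀ w' ∈ ball (0 : E) 1, ‖w - w'‖ ≤ (1 - ‖w‖) / 2 →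
      ‖f w - f w'‖ ≤ A * ‖w - w'‖ ^ α)
    (hz : z ∈ ball (0 : E) 1) (hz' : z' ∈ ball (0 : E) 1) :
    ‖f z - f z'‖ ≤ A * (1 + 2 / (1 - 2⁻¹ ^ α)) * ‖z - z'‖ ^ α := by
  have hlt : (2⁻¹ : ℝ) ^ α < 1 := Real.rpow_lt_one (by norm_num) (by norm_num) hα
  set t := min 1 (2 * ‖z - z'‖)
  have ht : t ∈ Icc 0 1 := ⟨by positivity, min_le_left _ _⟩
  have hend {w : E} (hw : w ∈ ball (0 : E) 1) :
      ‖f ((1 - t) • w) - f w‖ ≤ A * ‖z - z'‖ ^ α / (1 - 2⁻¹ ^ α) := by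
    refine (norm_sub_shrink_le_of_local hα hA hloc hw ht).trans ?_
    have : t / 2 ≤ ‖z - z'‖ := by linarith [min_le_right 1 (2 * ‖z - z'‖)]
    have := ht.1
    have := sub_pos.2 hlt
    gcongr
  have hmid : ‖f ((1 - t) • z) - f ((1 - t) • z')‖ ≤ A * ‖z - z'‖ ^ α := by
    rcases le_total 1 (2 * ‖z - z'‖) with h | h
    · simpa [t, min_eq_left h] using by positivity
    have hdist : ‖(1 - t) • z - (1 - t) • z'‖ ≤ ‖z - z'‖ := by
      rw [← _root_.smul_sub, norm_smul, Real.norm_of_nonneg (sub_nonneg.2 ht.2)]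
      exact mul_le_of_le_one_left (norm_nonneg _) (by linarith [ht.1])
    refine (hloc _ (one_sub_smul_mem_ball ht hz) _
      (one_sub_smul_mem_ball ht hz') ?_).trans (by gcongr)
    have := norm_smul_le_of_norm_le_one (sub_nonneg.2 ht.2) (mem_ball_zero_iff.1 hz).le
    have : t = 2 * ‖z - z'‖ := min_eq_right h
    linarith
  calc ‖f z - f z'‖
      = ‖(f ((1 - t) • z) - f ((1 - t) • z')) - (f ((1 - t) • z) - f z) +
          (f ((1 - t) • z') - f z')‖ := by congr 1; abel
    _ ≤ A * ‖z - z'‖ ^ α + A * ‖z - z'‖ ^ α / (1 - 2⁻¹ ^ α) +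
          A * ‖z - z'‖ ^ α / (1 - 2⁻¹ ^ α) :=
        (norm_add_le _ _).trans (add_le_add ((norm_sub_le _ _).trans
          (add_le_add hmid (hend hz))) (hend hz'))
    _ = _ := by ring

end LocalHolder

section HolderDensity

variable {f g h : ℂ → ℂ} {z z' w c : ℂ} {α H M N δ ρ r : ℝ} {S : Set ℂ}

/-- The bound `N` on both the supremum of `f` on `S` and its Hölder constant of order `α`. -/
structure HolderBound (α : ℝ) (S : Set ℂ) (N : ℝ) (f : ℂ → ℂ) : Prop where
  norm_le : ∀ z ∈ S, ‖f z‖ ≤ N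
  norm_sub_le : ∀ z ∈ S, ∀ z' ∈ S, ‖f z - f z'‖ ≤ N * ‖z - z'‖ ^ α

theorem HolderBound.continuousOn (hα : 0 < α) (hf : HolderBound α S N f) : ContinuousOn f S :=
  fun z hz => continuousWithinAt_of_eventually_norm_sub_le hα <| by
    filter_upwards [self_mem_nhdsWithin] with w hw using hf.norm_sub_le z hz w hw

theorem HolderBound.nonneg (hf : HolderBound α 𝔻 N f) : 0 ≤ N :=
  (norm_nonneg _).trans (hf.norm_le 0 (mem_ball_self one_pos))

theorem IsDensity.indicator (hf : IsDensity f) (hS : MeasurableSet S) :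
    IsDensity (S.indicator f) := by
  obtain ⟨M, hM⟩ := hf.exists_norm_le
  obtain ⟨ρ, hρ⟩ := hf.exists_eq_zero
  refine ⟨hf.aestronglyMeasurable.indicator hS,
    ⟨M, fun ζ => (norm_indicator_le_norm_self f ζ).trans (hM ζ)⟩, ρ, fun ζ hζ => ?_⟩
  by_cases h : ζ ∈ S <;> simp [h, hρ ζ hζ]

theorem isDensity_indicator_one (hS : MeasurableSet S) (hb : Bornology.IsBounded S) :
    IsDensity (S.indicator 1) :=
  .indicator_of_continuousOn (M := 1) hS hb continuousOn_const (by simp)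

theorem norm_le_mul_norm_sub_of_eqOn_ball (hr : 0 < r) (hM : ∀ ζ, ‖f ζ‖ ≤ M)
    (hf : ∀ ζ ∈ ball z r, f ζ = 0) (ζ : ℂ) : ‖f ζ‖ ≤ M / r * ‖ζ - z‖ ^ (1 : ℝ) := by
  have hM0 : 0 ≤ M := (norm_nonneg _).trans (hM z)
  rw [Real.rpow_one]
  by_cases h : ζ ∈ ball z r
  · rw [hf ζ h, norm_zero]
    positivity
  · rw [mem_ball, dist_eq_norm, not_lt] at h
    calc ‖f ζ‖ ≤ M / r * r := (hM ζ).trans_eq (by field_simp)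
      _ ≤ M / r * ‖ζ - z‖ := by gcongr

theorem integrable_div_sq_of_eqOn_ball (hf : IsDensity f) (hr : 0 < r)
    (h0 : ∀ ζ ∈ ball z r, f ζ = 0) : Integrable fun ζ => f ζ / (ζ - z) ^ 2 := by
  obtain ⟨M, hM⟩ := hf.exists_norm_le
  exact integrable_div_sq hf (by norm_num) (norm_le_mul_norm_sub_of_eqOn_ball hr hM h0)

theorem beurlingTransform_add (hf : Integrable fun ζ => f ζ / (ζ - z) ^ 2)
    (hg : Integrable fun ζ => g ζ / (ζ - z) ^ 2) :
    beurlingTransform (fun ζ => f ζ + g ζ) z = beurlingTransform f z + beurlingTransform g z := by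
  simp only [beurlingTransform, _root_.add_div]
  rw [integral_add hf hg, mul_add]

theorem beurlingTransform_const_mul (c : ℂ) (f : ℂ → ℂ) (z : ℂ) :
    beurlingTransform (fun ζ => c * f ζ) z = c * beurlingTransform f z := by
  simp only [beurlingTransform, mul_div_assoc, integral_const_mul]
  ring

/-- Cauchy transforms of disks differ by a constant on the smaller disk. -/
theorem beurlingTransform_indicator_ball_sdiff_ball (hsub : ball c r ⊆ ball z ρ)
    (hw : w ∈ ball c r) : beurlingTransform ((ball z ρ \ ball c r).indicator 1) w = 0 := by
  have hD := isDensity_indicator_one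
    (measurableSet_ball.diff measurableSet_ball : MeasurableSet (ball z ρ \ ball c r))
    (isBounded_ball.subset sdiff_subset)
  obtain ⟨ε, hε, hball⟩ := Metric.isOpen_iff.1 isOpen_ball w hw
  obtain ⟨M, hM⟩ := hD.exists_norm_le
  have hderiv := hasDerivAt_cauchyTransform hD (α := 1) (by norm_num)
    (norm_le_mul_norm_sub_of_eqOn_ball hε hM fun ζ hζ => indicator_of_notMem
      (fun h => h.2 (hball hζ)) _)
  have hconst : cauchyTransform ((ball z ρ \ ball c r).indicator 1) =ᶠ[𝓝 w]
      fun _ => conj (c - z) := by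
    filter_upwards [isOpen_ball.mem_nhds hw] with v hv
    rw [indicator_sdiff hsub]
    refine (cauchyTransform_sub
      (isDensity_indicator_one measurableSet_ball isBounded_ball)
      (isDensity_indicator_one measurableSet_ball isBounded_ball) v).trans ?_
    rw [cauchyTransform_indicator_ball (hsub hv), cauchyTransform_indicator_ball hv, ← map_sub]
    congr 1
    ring
  exact hderiv.unique ((hasDerivAt_const w _).congr_of_eventuallyEq hconst)

/-- The density `h - h z` on the unit disk, which vanishes at `z`. -/
noncomputable def centredDensity (h : ℂ → ℂ) (z : ℂ) : ℂ → ℂ :=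
  Set.indicator 𝔻 fun ζ => h ζ - h z

theorem norm_centredDensity_le (hH : ∀ z ∈ 𝔻, ∀ z' ∈ 𝔻, ‖h z - h z'‖ ≤ H * ‖z - z'‖ ^ α)
    (hH0 : 0 ≤ H) (hz : z ∈ 𝔻) (ζ : ℂ) : ‖centredDensity h z ζ‖ ≤ H * ‖ζ - z‖ ^ α := by
  by_cases hζ : ζ ∈ 𝔻
  · simpa only [centredDensity, indicator_of_mem hζ] using hH ζ hζ z hz
  · rw [centredDensity, indicator_of_notMem hζ, norm_zero]
    positivity

theorem HolderBound.isDensity_centredDensity (hα : 0 < α) (hh : HolderBound α 𝔻 N h)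
    (hz : z ∈ 𝔻) : IsDensity (centredDensity h z) :=
  .indicator_of_continuousOn measurableSet_ball isBounded_ball
    ((hh.continuousOn hα).sub continuousOn_const) fun ζ hζ =>
      (_root_.norm_sub_le _ _).trans (add_le_add (hh.norm_le ζ hζ) (hh.norm_le z hz))

theorem beurlingTransform_eq_indicator_add_compl (hS : MeasurableSet S)
    (hf : Integrable fun ζ => f ζ / (ζ - z) ^ 2) :
    beurlingTransform f z =
      beurlingTransform (S.indicator f) z + beurlingTransform (Sᶜ.indicator f) z := by
  have hind (U : Set ℂ) (ζ : ℂ) :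
      U.indicator f ζ / (ζ - z) ^ 2 = U.indicator (fun ζ => f ζ / (ζ - z) ^ 2) ζ := by
    by_cases h : ζ ∈ U <;> simp [h]
  simp only [beurlingTransform, hind]
  rw [integral_indicator hS, integral_indicator hS.compl, ← mul_add, integral_add_compl hS hf]

theorem norm_inv_sq_sub_inv_sq_le {a b : ℂ} (hδ : ‖a - b‖ ≤ δ) (ha : 2 * δ ≤ ‖a‖)
    (hδ0 : 0 < δ) : ‖(a ^ 2)⁻¹ - (b ^ 2)⁻¹‖ ≤ 10 * δ * ‖a‖ ^ (-3 : ℝ) := by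
  have hb : ‖a‖ / 2 ≤ ‖b‖ := by
    linarith [norm_sub_norm_le a b]
  have ha0 : 0 < ‖a‖ := by linarith
  have hb0 : 0 < ‖b‖ := by linarith
  have hsum : ‖b + a‖ ≤ 5 / 2 * ‖a‖ := calc
    ‖b + a‖ = ‖2 * a - (a - b)‖ := by congr 1; ring
    _ ≤ 2 * ‖a‖ + δ := (norm_sub_le _ _).trans (by simpa using hδ)
    _ ≤ _ := by linarith
  calc ‖(a ^ 2)⁻¹ - (b ^ 2)⁻¹‖ = ‖a - b‖ * ‖b + a‖ / (‖a‖ ^ 2 * ‖b‖ ^ 2) := by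
        rw [← norm_sub_rev, ← norm_mul, ← norm_pow, ← norm_pow, ← norm_mul, ← norm_div]
        have := norm_pos_iff.1 ha0
        have := norm_pos_iff.1 hb0
        congr 1
        field_simp
        ring
    _ ≤ δ * (5 / 2 * ‖a‖) / (‖a‖ ^ 2 * (‖a‖ / 2) ^ 2) := by gcongr
    _ = 10 * δ * ‖a‖ ^ (-3 : ℝ) := by
        rw [Real.rpow_neg ha0.le, Real.rpow_ofNat]
        field_simp
        norm_num

theorem norm_div_sq_sub_div_sq_le {ζ : ℂ} (hz : z ≠ z') (hH : ‖f ζ‖ ≤ H * ‖ζ - z‖ ^ α)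
    (hζ : 2 * ‖z - z'‖ ≤ ‖ζ - z‖) :
    ‖f ζ / (ζ - z) ^ 2 - f ζ / (ζ - z') ^ 2‖ ≤ 10 * H * ‖z - z'‖ * ‖ζ - z‖ ^ (α - 3) := by
  have hδ0 : 0 < ‖z - z'‖ := norm_sub_pos_iff.2 hz
  have hζ0 : 0 < ‖ζ - z‖ := by linarith
  have hker := norm_inv_sq_sub_inv_sq_le (a := ζ - z) (b := ζ - z')
    (by rw [_root_.sub_sub_sub_cancel_left, norm_sub_rev]) hζ hδ0
  calc ‖f ζ / (ζ - z) ^ 2 - f ζ / (ζ - z') ^ 2‖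
      = ‖f ζ‖ * ‖((ζ - z) ^ 2)⁻¹ - ((ζ - z') ^ 2)⁻¹‖ := by
        rw [← norm_mul, mul_sub, div_eq_mul_inv, div_eq_mul_inv]
    _ ≤ H * ‖ζ - z‖ ^ α * (10 * ‖z - z'‖ * ‖ζ - z‖ ^ (-3 : ℝ)) :=
        mul_le_mul hH hker (norm_nonneg _) ((norm_nonneg _).trans hH)
    _ = 10 * H * ‖z - z'‖ * (‖ζ - z‖ ^ α * ‖ζ - z‖ ^ (-3 : ℝ)) := by ring
    _ = _ := by rw [← Real.rpow_add hζ0, ← sub_eq_add_neg]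

theorem norm_beurlingTransform_sub_le (hα : α < 1) (hz : z ≠ z') (hf : IsDensity f)
    (h0 : ∀ ζ ∈ ball z (2 * ‖z - z'‖), f ζ = 0) (hH : ∀ ζ, ‖f ζ‖ ≤ H * ‖ζ - z‖ ^ α) :
    ‖beurlingTransform f z - beurlingTransform f z'‖ ≤ 20 * H / (1 - α) * ‖z - z'‖ ^ α := by
  have hδ0 : 0 < ‖z - z'‖ := norm_sub_pos_iff.2 hz
  have hH0 : 0 ≤ H := nonneg_of_mul_nonneg_left ((norm_nonneg _).trans (hH z'))
    (Real.rpow_pos_of_pos (norm_sub_pos_iff.2 hz.symm) _)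
  have hsub : ball z' ‖z - z'‖ ⊆ ball z (2 * ‖z - z'‖) :=
    ball_subset_ball' (by rw [dist_eq_norm']; linarith)
  have hint := integrable_div_sq_of_eqOn_ball hf (by positivity) h0
  have hint' := integrable_div_sq_of_eqOn_ball hf hδ0 fun ζ hζ => h0 ζ (hsub hζ)
  have hle := norm_integral_le_of_norm_le_rpow_compl (s := α - 3) (ρ := 2 * ‖z - z'‖)
    (by linarith) (by positivity) (fun ζ hζ => by simp [h0 ζ hζ]) fun ζ hζ =>
      norm_div_sq_sub_div_sq_le hz (hH ζ) (by simpa [dist_eq_norm] using hζ)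
  rw [beurlingTransform, beurlingTransform, ← mul_sub, ← integral_sub hint hint', norm_mul,
    norm_neg, norm_inv, norm_real, Real.norm_of_nonneg Real.pi_nonneg, inv_mul_le_iff₀ Real.pi_pos]
  have hpow : (2 * ‖z - z'‖) ^ (α - 1) ≤ ‖z - z'‖ ^ (α - 1) :=
    Real.rpow_le_rpow_of_nonpos hδ0 (by linarith) (by linarith)
  have hα' : 0 < 1 - α := by linarith
  calc _ ≤ 10 * H * ‖z - z'‖ * (2 * Real.pi / (1 - α) * (2 * ‖z - z'‖) ^ (α - 1)) := by
        convert hle using 4 <;> ring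
    _ ≤ 10 * H * ‖z - z'‖ * (2 * Real.pi / (1 - α) * ‖z - z'‖ ^ (α - 1)) := by gcongr
    _ = _ := by
        rw [Real.rpow_sub_one hδ0.ne']
        field_simp
        ring

section LocalEstimate

variable (hα : α ∈ Ioo 0 1) (hh : HolderBound α 𝔻 H h) (hz : z ∈ 𝔻) (hz' : z' ∈ 𝔻)

include hα hh hz in
theorem integrable_centredDensity_div_sq :
    Integrable fun ζ => centredDensity h z ζ / (ζ - z) ^ 2 :=
  integrable_div_sq (hh.isDensity_centredDensity hα.1 hz) ⟨hα.1, hα.2.trans one_lt_two⟩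
    (norm_centredDensity_le hh.norm_sub_le hh.nonneg hz)

include hα hh hz in
theorem norm_beurlingTransform_indicator_centredDensity_le (hδ : 0 ≤ δ) (hw : ‖z - w‖ ≤ δ) :
    ‖beurlingTransform ((ball w (2 * δ)).indicator (centredDensity h z)) z‖ ≤
      6 * H / α * δ ^ α := by
  have hsub : ball w (2 * δ) ⊆ ball z (3 * δ) :=
    ball_subset_ball' (by rw [dist_eq_norm']; linarith)
  have hH0 := hh.nonneg
  have hα0 := hα.1
  calc _ ≤ 2 * H / α * (3 * δ) ^ α :=
        norm_beurlingTransform_le ⟨hα.1, hα.2.trans one_lt_two⟩ (by positivity)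
          (fun ζ hζ => indicator_of_notMem (fun h => hζ (hsub h)) _) fun ζ =>
            (norm_indicator_le_norm_self _ ζ).trans
              (norm_centredDensity_le hh.norm_sub_le hH0 hz ζ)
    _ ≤ 2 * H / α * (3 * δ ^ α) := by
        rw [Real.mul_rpow (by norm_num) hδ]
        gcongr
        exact (Real.rpow_le_rpow_of_exponent_le (by norm_num) hα.2.le).trans_eq (Real.rpow_one 3)
    _ = _ := by ring

include hα hh hz in
/-- Recentring the density far from both points costs nothing, by
`beurlingTransform_indicator_ball_sdiff_ball`. -/
theorem beurlingTransform_indicator_compl_centredDensity (hδ : 0 < δ) (hzz' : ‖z - z'‖ ≤ δ)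
    (hsub : ball z (2 * δ) ⊆ 𝔻) :
    beurlingTransform ((ball z (2 * δ))ᶜ.indicator (centredDensity h z')) z' =
      beurlingTransform ((ball z (2 * δ))ᶜ.indicator (centredDensity h z)) z' := by
  set B := ball z (2 * δ)
  have hball : ball z' δ ⊆ B := ball_subset_ball' (by rw [dist_eq_norm']; linarith)
  have hsplit (ζ : ℂ) : Bᶜ.indicator (centredDensity h z') ζ =
      Bᶜ.indicator (centredDensity h z) ζ + (h z - h z') * (𝔻 \ B).indicator 1 ζ := by
    by_cases h1 : ζ ∈ 𝔻 <;> by_cases h2 : ζ ∈ B <;> simp [centredDensity, h1, h2]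
  have hint := integrable_div_sq_of_eqOn_ball
    ((hh.isDensity_centredDensity hα.1 hz).indicator measurableSet_ball.compl) hδ fun ζ hζ =>
      indicator_of_notMem (notMem_compl_iff.2 (hball hζ)) _
  have hint' := integrable_div_sq_of_eqOn_ball (z := z')
    (((isDensity_indicator_one (measurableSet_ball.diff measurableSet_ball)
      (isBounded_ball.subset sdiff_subset) : IsDensity ((𝔻 \ B).indicator 1))).const_mul
        (h z - h z')) hδ fun ζ hζ => by simp [hball hζ]
  rw [show Bᶜ.indicator (centredDensity h z') = fun ζ => _ from funext hsplit,
    beurlingTransform_add hint hint', beurlingTransform_const_mul,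
    beurlingTransform_indicator_ball_sdiff_ball hsub (hball (mem_ball_self hδ)), mul_zero, add_zero]

include hα hh hz hz' in
theorem norm_beurlingTransform_centredDensity_sub_le_of_local
    (hzz' : ‖z - z'‖ ≤ (1 - ‖z‖) / 2) :
    ‖beurlingTransform (centredDensity h z) z - beurlingTransform (centredDensity h z') z'‖ ≤
      (12 / α + 20 / (1 - α)) * H * ‖z - z'‖ ^ α := by
  rcases eq_or_ne z z' with rfl | hne
  · simp [Real.zero_rpow hα.1.ne']
  have hδ : 0 < ‖z - z'‖ := norm_sub_pos_iff.2 hne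
  set B := ball z (2 * ‖z - z'‖)
  have hsub : B ⊆ 𝔻 := ball_subset_ball' (by rw [dist_zero_right]; linarith)
  have hfar := norm_beurlingTransform_sub_le hα.2 hne
    ((hh.isDensity_centredDensity hα.1 hz).indicator measurableSet_ball.compl)
    (fun ζ hζ => indicator_of_notMem (notMem_compl_iff.2 hζ) _) fun ζ =>
      (norm_indicator_le_norm_self _ ζ).trans (norm_centredDensity_le hh.norm_sub_le hh.nonneg hz ζ)
  have hnear := norm_beurlingTransform_indicator_centredDensity_le hα hh hz (w := z) hδ.le (by simp)
  have hnear' := norm_beurlingTransform_indicator_centredDensity_le hα hh hz' (w := z) hδ.le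
    (norm_sub_rev z' z).le
  rw [beurlingTransform_eq_indicator_add_compl (S := B) measurableSet_ball
      (integrable_centredDensity_div_sq hα hh hz),
    beurlingTransform_eq_indicator_add_compl (z := z') (S := B) measurableSet_ball
      (integrable_centredDensity_div_sq hα hh hz'),
    beurlingTransform_indicator_compl_centredDensity hα hh hz hδ le_rfl hsub,
    add_sub_add_comm]
  refine (norm_add_le _ _).trans ((add_le_add ((_root_.norm_sub_le _ _).trans
    (add_le_add hnear hnear')) hfar).trans_eq ?_)
  ring

end LocalEstimate

end HolderDensity

/-! ### The Cauchy–Green operator of the unit disk -/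

section CauchyGreen

variable {f g h : ℂ → ℂ} {z z' w : ℂ} {α H M N : ℝ} {S : Set ℂ}

/-- The Cauchy–Green operator of the unit disk. -/
noncomputable def cauchyGreen (h : ℂ → ℂ) : ℂ → ℂ :=
  cauchyTransform (Set.indicator 𝔻 h)

theorem IsDensity.indicator_unitBall (hh : ContinuousOn h 𝔻) (hN : ∀ z ∈ 𝔻, ‖h z‖ ≤ N) :
    IsDensity (Set.indicator 𝔻 h) :=
  .indicator_of_continuousOn measurableSet_ball isBounded_ball hh hN

theorem unitBall_subset_ball (hz : z ∈ 𝔻) : 𝔻 ⊆ ball z 2 :=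
  ball_subset_ball' (by rw [mem_ball'] at hz; linarith)

theorem norm_cauchyGreen_le (hN : ∀ z ∈ 𝔻, ‖h z‖ ≤ N) (hz : z ∈ 𝔻) :
    ‖cauchyGreen h z‖ ≤ 4 * N := by
  have hN0 : 0 ≤ N := (norm_nonneg _).trans (hN z hz)
  have hbound (ζ : ℂ) : ‖Set.indicator 𝔻 h ζ‖ ≤ N := by
    by_cases hζ : ζ ∈ 𝔻
    · simpa only [indicator_of_mem hζ] using hN ζ hζ
    · simpa only [indicator_of_notMem hζ, norm_zero] using hN0
  exact (norm_cauchyTransform_le two_pos.le (fun ζ hζ => indicator_of_notMem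
    (fun h => hζ (unitBall_subset_ball hz h)) _) hbound).trans_eq (by ring)

theorem cauchyGreen_congr (hfg : EqOn f g 𝔻) : cauchyGreen f = cauchyGreen g := by
  rw [cauchyGreen, cauchyGreen, indicator_congr hfg]

theorem cauchyGreen_const_mul (c : ℂ) (h : ℂ → ℂ) (z : ℂ) :
    cauchyGreen (fun ζ => c * h ζ) z = c * cauchyGreen h z := by
  rw [cauchyGreen, cauchyGreen, ← cauchyTransform_const_mul]
  congr 1
  ext ζ
  by_cases hζ : ζ ∈ 𝔻
  · simp only [indicator_of_mem hζ]
  · simp only [indicator_of_notMem hζ, mul_zero]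

theorem cauchyGreen_sub (hf : ContinuousOn f 𝔻) (hM : ∀ z ∈ 𝔻, ‖f z‖ ≤ M)
    (hg : ContinuousOn g 𝔻) (hN : ∀ z ∈ 𝔻, ‖g z‖ ≤ N) (z : ℂ) :
    cauchyGreen (fun ζ => f ζ - g ζ) z = cauchyGreen f z - cauchyGreen g z := by
  rw [cauchyGreen, cauchyGreen, cauchyGreen,
    ← cauchyTransform_sub (.indicator_unitBall hf hM) (.indicator_unitBall hg hN)]
  congr 1
  exact indicator_sub ..

theorem cauchyGreen_add (hf : ContinuousOn f 𝔻) (hM : ∀ z ∈ 𝔻, ‖f z‖ ≤ M)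
    (hg : ContinuousOn g 𝔻) (hN : ∀ z ∈ 𝔻, ‖g z‖ ≤ N) (z : ℂ) :
    cauchyGreen (f + g) z = cauchyGreen f z + cauchyGreen g z := by
  have hsub := cauchyGreen_sub (g := fun ζ => -1 * g ζ) (N := N) hf hM (continuousOn_const.mul hg)
    (by simpa using hN) z
  rw [cauchyGreen_const_mul] at hsub
  simp only [neg_one_mul, sub_neg_eq_add] at hsub
  exact hsub

theorem cauchyGreen_one (hz : z ∈ 𝔻) : cauchyGreen (fun _ => 1) z = conj z :=
  (cauchyTransform_indicator_ball hz).trans (by rw [sub_zero])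

theorem HolderBound.hasWirtingerDerivAt_cauchyGreen (hα : α ∈ Ioo 0 1) (hh : HolderBound α 𝔻 N h)
    (hz : z ∈ 𝔻) :
    HasWirtingerDerivAt (cauchyGreen h) (beurlingTransform (centredDensity h z) z) (h z) z := by
  have hcentred : HasDerivAt (cauchyGreen fun ζ => h ζ - h z)
      (beurlingTransform (centredDensity h z) z) z :=
    hasDerivAt_cauchyTransform (hh.isDensity_centredDensity hα.1 hz)
      ⟨hα.1, hα.2.trans one_lt_two⟩ (norm_centredDensity_le hh.norm_sub_le hh.nonneg hz)
  have hsplit : cauchyGreen h =ᶠ[𝓝 z]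
      fun w => cauchyGreen (fun ζ => h ζ - h z) w + h z * conj w := by
    filter_upwards [isOpen_ball.mem_nhds hz] with w hw
    rw [cauchyGreen_sub (hh.continuousOn hα.1) hh.norm_le continuousOn_const fun _ _ => le_rfl,
      ← cauchyGreen_one hw, ← cauchyGreen_const_mul]
    simp
  simpa using ((hasWirtingerDerivAt_of_hasDerivAt hcentred).add
    ((hasWirtingerDerivAt_conj z).const_mul (h z))).congr_of_eventuallyEq hsplit

theorem HolderBound.wDbar_cauchyGreen (hα : α ∈ Ioo 0 1) (hh : HolderBound α 𝔻 N h)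
    (hz : z ∈ 𝔻) : wDbar (cauchyGreen h) z = h z :=
  (hh.hasWirtingerDerivAt_cauchyGreen hα hz).wDbar_eq

theorem HolderBound.differentiableAt_cauchyGreen (hα : α ∈ Ioo 0 1) (hh : HolderBound α 𝔻 N h)
    (hz : z ∈ 𝔻) : DifferentiableAt ℝ (cauchyGreen h) z :=
  (hh.hasWirtingerDerivAt_cauchyGreen hα hz).differentiableAt

theorem HolderBound.norm_wD_cauchyGreen_le (hα : α ∈ Ioo 0 1) (hh : HolderBound α 𝔻 N h)
    (hz : z ∈ 𝔻) : ‖wD (cauchyGreen h) z‖ ≤ 4 / α * N := by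
  have hα0 := hα.1
  have hN := hh.nonneg
  rw [(hh.hasWirtingerDerivAt_cauchyGreen hα hz).wD_eq]
  calc _ ≤ 2 * N / α * 2 ^ α :=
        norm_beurlingTransform_le ⟨hα.1, hα.2.trans one_lt_two⟩ two_pos.le
          (fun ζ hζ => indicator_of_notMem (fun h => hζ (unitBall_subset_ball hz h)) _)
          (norm_centredDensity_le hh.norm_sub_le hN hz)
    _ ≤ 2 * N / α * 2 := by
        gcongr
        exact (Real.rpow_le_rpow_of_exponent_le one_le_two hα.2.le).trans_eq (Real.rpow_one 2)
    _ = 4 / α * N := by ring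

theorem le_two_mul_rpow {d : ℝ} (hα : α ∈ Icc 0 1) (hd : d ∈ Icc 0 2) : d ≤ 2 * d ^ α := by
  rcases hd.1.eq_or_lt with rfl | hd0
  · exact mul_nonneg two_pos.le (Real.rpow_nonneg le_rfl _)
  calc d = d ^ (1 - α) * d ^ α := by rw [← Real.rpow_add hd0]; simp
    _ ≤ 2 ^ (1 - α) * d ^ α := by
      gcongr
      exacts [by linarith [hα.2], hd.2]
    _ ≤ 2 * d ^ α := by
      gcongr
      exact (Real.rpow_le_rpow_of_exponent_le one_le_two (by linarith [hα.1])).trans_eq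
        (Real.rpow_one 2)

theorem holderBound_of_norm_wD_le {A B : ℝ} (hα : α ∈ Icc 0 1)
    (hf : ∀ z ∈ 𝔻, DifferentiableAt ℝ f z) (hM : ∀ z ∈ 𝔻, ‖f z‖ ≤ M)
    (hA : ∀ z ∈ 𝔻, ‖wD f z‖ ≤ A) (hB : ∀ z ∈ 𝔻, ‖wDbar f z‖ ≤ B)
    (hMN : M ≤ N) (hABN : 2 * (A + B) ≤ N) : HolderBound α 𝔻 N f where
  norm_le z hz := (hM z hz).trans hMN
  norm_sub_le z hz z' hz' := by
    have hAB : 0 ≤ A + B :=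
      add_nonneg ((norm_nonneg _).trans (hA z hz)) ((norm_nonneg _).trans (hB z hz))
    have hd : ‖z - z'‖ ≤ 2 := by
      rw [← dist_eq_norm]
      exact (unitBall_subset_ball hz' hz).le
    calc ‖f z - f z'‖ ≤ (A + B) * ‖z - z'‖ :=
          norm_sub_le_of_norm_wD_le (convex_ball 0 1) hf hA hB hz hz'
      _ ≤ (A + B) * (2 * ‖z - z'‖ ^ α) := by
          gcongr
          exact le_two_mul_rpow hα ⟨norm_nonneg _, hd⟩
      _ = 2 * (A + B) * ‖z - z'‖ ^ α := by ring
      _ ≤ N * ‖z - z'‖ ^ α := by gcongr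

theorem HolderBound.cauchyGreen (hα : α ∈ Ioo 0 1) (hh : HolderBound α 𝔻 N h) :
    HolderBound α 𝔻 ((8 / α + 4) * N) (cauchyGreen h) := by
  have hN := hh.nonneg
  have hα0 := hα.1
  refine holderBound_of_norm_wD_le (Ioo_subset_Icc_self hα)
    (fun z hz => hh.differentiableAt_cauchyGreen hα hz)
    (fun z hz => norm_cauchyGreen_le hh.norm_le hz)
    (fun z hz => hh.norm_wD_cauchyGreen_le hα hz)
    (fun z hz => (hh.wDbar_cauchyGreen hα hz).symm ▸ hh.norm_le z hz) ?_ ?_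
  · gcongr
    exact le_add_of_nonneg_left (by positivity)
  · calc 2 * (4 / α * N + N) = (8 / α + 2) * N := by ring
      _ ≤ _ := by gcongr; norm_num

theorem HolderBound.wD_cauchyGreen (hα : α ∈ Ioo 0 1) (hh : HolderBound α 𝔻 N h) :
    HolderBound α 𝔻 ((12 / α + 20 / (1 - α)) * (1 + 2 / (1 - 2⁻¹ ^ α)) * N)
      (wD (_root_.cauchyGreen h)) where
  norm_le z hz := by
    have hN := hh.nonneg
    have hα0 := hα.1
    have hα1 : 0 < 1 - α := sub_pos.2 hα.2
    have hden : (0 : ℝ) < 1 - 2⁻¹ ^ α :=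
      sub_pos.2 (Real.rpow_lt_one (by norm_num) (by norm_num) hα0)
    calc ‖wD (_root_.cauchyGreen h) z‖ ≤ 4 / α * N := hh.norm_wD_cauchyGreen_le hα hz
      _ ≤ (12 / α + 20 / (1 - α)) * 1 * N := by
        rw [mul_one]
        gcongr
        exact le_add_of_le_of_nonneg (by gcongr; norm_num) (by positivity)
      _ ≤ _ := by
        gcongr
        exact le_add_of_nonneg_right (by positivity)
  norm_sub_le z hz z' hz' := by
    have hN := hh.nonneg
    have hα0 := hα.1
    have hα1 : 0 < 1 - α := sub_pos.2 hα.2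
    refine (norm_sub_le_of_local (A := (12 / α + 20 / (1 - α)) * N) hα.1 (by positivity)
      (fun w hw w' hw' hww' => ?_) hz hz').trans_eq (by ring)
    rw [(hh.hasWirtingerDerivAt_cauchyGreen hα hw).wD_eq,
      (hh.hasWirtingerDerivAt_cauchyGreen hα hw').wD_eq]
    exact norm_beurlingTransform_centredDensity_sub_le_of_local hα hh hw hw' hww'

end CauchyGreen

/-! ### Integration by parts -/

section CompactSupport

variable {φ : ℂ → ℂ} {z : ℂ}

theorem locallyIntegrable_inv : LocallyIntegrable fun t : ℂ => t⁻¹ := fun x =>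
  ⟨ball 0 (‖x‖ + 1), isOpen_ball.mem_nhds (by simp),
    ((integrableOn_rpow_norm_sub_ball (s := -1) (by norm_num) 0 _).mono' (by fun_prop)
      (ae_of_all _ fun t => by simp [Real.rpow_neg_one]))⟩

open scoped Convolution in
theorem cauchyTransform_eq_convolution (φ : ℂ → ℂ) :
    cauchyTransform φ = fun z =>
      (Real.pi : ℂ)⁻¹ * ((fun t : ℂ => t⁻¹) ⋆[ContinuousLinearMap.mul ℝ ℂ] φ) z := by
  ext z
  have hsubst : ∫ t, t⁻¹ * φ (z - t) = ∫ ζ, (z - ζ)⁻¹ * φ ζ := by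
    simpa only [sub_sub_self] using integral_sub_left_eq_self (fun ζ => (z - ζ)⁻¹ * φ ζ) volume z
  rw [cauchyTransform, convolution, neg_mul, ← mul_neg, ← integral_neg]
  simp only [ContinuousLinearMap.mul_apply', hsubst]
  congr 2 with ζ
  rw [← neg_sub z ζ, div_neg, neg_neg, div_eq_inv_mul]

theorem isDensity_of_hasCompactSupport (hφ : Continuous φ) (hc : HasCompactSupport φ) :
    IsDensity φ := by
  obtain ⟨ρ, hρ⟩ := hc.isCompact.isBounded.subset_ball 0
  exact ⟨hφ.aestronglyMeasurable, hφ.bounded_above_of_compact_support hc, ρ,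
    fun ζ hζ => image_eq_zero_of_notMem_tsupport fun h => hζ (hρ h)⟩

theorem differentiableAt_and_fderiv_cauchyTransform (hφ : ContDiff ℝ 1 φ)
    (hc : HasCompactSupport φ) (z : ℂ) :
    DifferentiableAt ℝ (cauchyTransform φ) z ∧
      ∀ v, fderiv ℝ (cauchyTransform φ) z v = cauchyTransform (fun ζ => fderiv ℝ φ ζ v) z := by
  have h := (hc.hasFDerivAt_convolution_right (ContinuousLinearMap.mul ℝ ℂ)
    locallyIntegrable_inv hφ z).const_mul (Real.pi : ℂ)⁻¹
  rw [← cauchyTransform_eq_convolution] at h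
  refine ⟨h.differentiableAt, fun v => ?_⟩
  rw [h.fderiv, cauchyTransform_eq_convolution]
  exact congrArg ((Real.pi : ℂ)⁻¹ * ·) (convolution_precompR_apply (ContinuousLinearMap.mul ℝ ℂ)
    locallyIntegrable_inv (hc.fderiv ℝ) (hφ.continuous_fderiv one_ne_zero) z v)

theorem isDensity_fderiv_apply (hφ : ContDiff ℝ 1 φ) (hc : HasCompactSupport φ) (v : ℂ) :
    IsDensity fun ζ => fderiv ℝ φ ζ v :=
  isDensity_of_hasCompactSupport ((hφ.continuous_fderiv one_ne_zero).clm_apply continuous_const)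
    (hc.fderiv_apply ℝ v)

theorem wD_eq_inv_mul (f : ℂ → ℂ) :
    wD f = fun z => 2⁻¹ * (fderiv ℝ f z 1 - I * fderiv ℝ f z I) :=
  funext fun _ => div_eq_inv_mul _ _

theorem wDbar_eq_inv_mul (f : ℂ → ℂ) :
    wDbar f = fun z => 2⁻¹ * (fderiv ℝ f z 1 - -I * fderiv ℝ f z I) :=
  funext fun _ => by rw [wDbar, div_eq_inv_mul, neg_mul, sub_neg_eq_add]

theorem isDensity_wD (hφ : ContDiff ℝ 1 φ) (hc : HasCompactSupport φ) : IsDensity (wD φ) := by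
  rw [wD_eq_inv_mul]
  exact ((isDensity_fderiv_apply hφ hc 1).sub
    ((isDensity_fderiv_apply hφ hc I).const_mul I)).const_mul 2⁻¹

theorem isDensity_wDbar (hφ : ContDiff ℝ 1 φ) (hc : HasCompactSupport φ) :
    IsDensity (wDbar φ) := by
  rw [wDbar_eq_inv_mul]
  exact ((isDensity_fderiv_apply hφ hc 1).sub
    ((isDensity_fderiv_apply hφ hc I).const_mul (-I))).const_mul 2⁻¹

theorem wD_cauchyTransform (hφ : ContDiff ℝ 1 φ) (hc : HasCompactSupport φ) (z : ℂ) :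
    wD (cauchyTransform φ) z = cauchyTransform (wD φ) z := by
  obtain ⟨-, hfd⟩ := differentiableAt_and_fderiv_cauchyTransform hφ hc z
  rw [wD_eq_inv_mul, wD_eq_inv_mul, cauchyTransform_const_mul,
    cauchyTransform_sub (isDensity_fderiv_apply hφ hc 1)
      ((isDensity_fderiv_apply hφ hc I).const_mul I), cauchyTransform_const_mul]
  simp only [hfd]

theorem wDbar_cauchyTransform (hφ : ContDiff ℝ 1 φ) (hc : HasCompactSupport φ) (z : ℂ) :
    wDbar (cauchyTransform φ) z = cauchyTransform (wDbar φ) z := by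
  obtain ⟨-, hfd⟩ := differentiableAt_and_fderiv_cauchyTransform hφ hc z
  rw [wDbar_eq_inv_mul, wDbar_eq_inv_mul, cauchyTransform_const_mul,
    cauchyTransform_sub (isDensity_fderiv_apply hφ hc 1)
      ((isDensity_fderiv_apply hφ hc I).const_mul (-I)), cauchyTransform_const_mul]
  simp only [hfd]

theorem exists_holderBound_of_hasCompactSupport {α : ℝ} (hα : α ∈ Icc 0 1)
    (hφ : ContDiff ℝ 1 φ) (hc : HasCompactSupport φ) : ∃ N, HolderBound α 𝔻 N φ := by
  obtain ⟨M, hM⟩ := hφ.continuous.bounded_above_of_compact_support hc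
  obtain ⟨A, hA⟩ := (isDensity_wD hφ hc).exists_norm_le
  obtain ⟨B, hB⟩ := (isDensity_wDbar hφ hc).exists_norm_le
  exact ⟨max M (2 * (A + B)), holderBound_of_norm_wD_le hα
    (fun z _ => hφ.differentiable one_ne_zero z) (fun z _ => hM z) (fun z _ => hA z)
    (fun z _ => hB z) (le_max_left ..) (le_max_right ..)⟩

theorem cauchyTransform_wDbar (hφ : ContDiff ℝ 1 φ) (hc : HasCompactSupport φ)
    (hsupp : ∀ ζ ∉ 𝔻, φ ζ = 0) (hz : z ∈ 𝔻) : cauchyTransform (wDbar φ) z = φ z := by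
  have hα : (2⁻¹ : ℝ) ∈ Ioo (0 : ℝ) 1 := by norm_num
  obtain ⟨N, hN⟩ := exists_holderBound_of_hasCompactSupport (Ioo_subset_Icc_self hα) hφ hc
  have hind : Set.indicator 𝔻 φ = φ :=
    indicator_eq_self.2 fun ζ hζ => by_contra fun h => hζ (hsupp ζ h)
  rw [← wDbar_cauchyTransform hφ hc, ← hN.wDbar_cauchyGreen hα hz, cauchyGreen, hind]

/-- The operator `h ↦ ∂h - ∂̄(ζ̄²h)`. Its first-order part is tangential to the unit circle, so
that integrating by parts against it on the unit disk produces no boundary term. -/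
noncomputable def tangentialD (h : ℂ → ℂ) (z : ℂ) : ℂ :=
  wD h z - conj z ^ 2 * wDbar h z - 2 * conj z * h z

theorem HasWirtingerDerivAt.tangentialD_eq {f : ℂ → ℂ} {p q : ℂ}
    (h : HasWirtingerDerivAt f p q z) :
    tangentialD f z = p - conj z ^ 2 * q - 2 * conj z * f z := by
  rw [tangentialD, h.wD_eq, h.wDbar_eq]

theorem wDbar_conj_sq_mul {f : ℂ → ℂ} (hf : DifferentiableAt ℝ f z) :
    wDbar (fun ζ => conj ζ ^ 2 * f ζ) z = 2 * conj z * f z + conj z ^ 2 * wDbar f z := by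
  simpa using ((hasWirtingerDerivAt_conj_pow 2 z).mul
    (hasWirtingerDerivAt_of_differentiableAt hf)).wDbar_eq

theorem wD_cauchyTransform_eq_tangentialD (hφ : ContDiff ℝ 1 φ) (hc : HasCompactSupport φ)
    (hsupp : ∀ ζ ∉ 𝔻, φ ζ = 0) (hz : z ∈ 𝔻) :
    wD (cauchyTransform φ) z = cauchyTransform (tangentialD φ) z + conj z ^ 2 * φ z := by
  have hψ : ContDiff ℝ 1 fun ζ => conj ζ ^ 2 * φ ζ := (conjCLE.contDiff.pow 2).mul hφ
  have hcψ : HasCompactSupport fun ζ => conj ζ ^ 2 * φ ζ := hc.mul_left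
  have htan : tangentialD φ = fun ζ => wD φ ζ - wDbar (fun ζ => conj ζ ^ 2 * φ ζ) ζ := by
    ext ζ
    rw [wDbar_conj_sq_mul (hφ.differentiable one_ne_zero ζ), tangentialD]
    ring
  rw [htan, cauchyTransform_sub (isDensity_wD hφ hc) (isDensity_wDbar hψ hcψ),
    ← wD_cauchyTransform hφ hc,
    cauchyTransform_wDbar hψ hcψ (fun ζ hζ => by rw [hsupp ζ hζ, mul_zero]) hz, sub_add_cancel]

end CompactSupport

section IntegrationByParts

variable {f g h φ : ℂ → ℂ} {z ζ : ℂ} {δ ρ M M' : ℝ} {n : ℕ}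

theorem tendsto_cauchyTransform {F : ℕ → ℂ → ℂ} (hF : ∀ n, AEStronglyMeasurable (F n))
    (hM : ∀ᶠ n in atTop, ∀ ζ, ‖F n ζ‖ ≤ M) (hsupp : ∀ n, ∀ ζ ∉ ball z ρ, F n ζ = 0)
    (hlim : ∀ ζ, Tendsto (F · ζ) atTop (𝓝 (f ζ))) :
    Tendsto (fun n => cauchyTransform (F n) z) atTop (𝓝 (cauchyTransform f z)) := by
  have key : Tendsto (fun n => ∫ ζ, F n ζ / (ζ - z)) atTop (𝓝 (∫ ζ, f ζ / (ζ - z))) := by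
    refine tendsto_integral_filter_of_dominated_convergence
      (Set.indicator (ball z ρ) fun ζ => M * ‖ζ - z‖ ^ (-1 : ℝ))
      (.of_forall fun n => (hF n).div₀ (by fun_prop))
      (hM.mono fun n hn => ae_of_all _ fun ζ => ?_)
      ((integrable_indicator_iff measurableSet_ball).2
        ((integrableOn_rpow_norm_sub_ball (s := -1) (by norm_num) z ρ).const_mul M))
      (ae_of_all _ fun ζ => (hlim ζ).div_const _)
    by_cases hζ : ζ ∈ ball z ρ
    · rw [indicator_of_mem hζ, norm_div, Real.rpow_neg_one, ← div_eq_mul_inv]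
      gcongr
      exact hn ζ
    · rw [indicator_of_notMem hζ, hsupp n ζ hζ, zero_div, norm_zero]
  exact key.const_mul _

theorem tendsto_beurlingTransform {F : ℕ → ℂ → ℂ} (hδ : 0 < δ)
    (hF : ∀ n, AEStronglyMeasurable (F n)) (hM : ∀ n ζ, ‖F n ζ‖ ≤ M)
    (hsupp : ∀ n, ∀ ζ ∉ ball z ρ, F n ζ = 0)
    (hδF : ∀ᶠ n in atTop, ∀ ζ ∈ ball z δ, F n ζ = 0)
    (hlim : ∀ ζ, Tendsto (F · ζ) atTop (𝓝 (f ζ))) :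
    Tendsto (fun n => beurlingTransform (F n) z) atTop (𝓝 (beurlingTransform f z)) := by
  have hdiv (u : ℂ → ℂ) : beurlingTransform u z = cauchyTransform (fun ζ => u ζ / (ζ - z)) z := by
    simp only [beurlingTransform, cauchyTransform, div_div, sq]
  simp only [hdiv]
  refine tendsto_cauchyTransform (M := M / δ) (fun n => (hF n).div₀ (by fun_prop))
    (hδF.mono fun n hn ζ => ?_) (fun n ζ hζ => by rw [hsupp n ζ hζ, zero_div])
    fun ζ => (hlim ζ).div_const _
  have hM0 : 0 ≤ M := (norm_nonneg _).trans (hM n z)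
  by_cases hζ : ζ ∈ ball z δ
  · rw [hn ζ hζ, zero_div, norm_zero]
    positivity
  · rw [mem_ball, dist_eq_norm, not_lt] at hζ
    rw [norm_div]
    gcongr
    exact hM n ζ

/-- Smooth radial cutoffs exhausting the unit disk: `cutoff n` vanishes where `n (1 - ‖ζ‖²) ≤ 1`
and equals `1` where `2 ≤ n (1 - ‖ζ‖²)`. -/
noncomputable def cutoff (n : ℕ) (ζ : ℂ) : ℂ :=
  Real.smoothTransition (n * (1 - ‖ζ‖ ^ 2) - 1)

theorem contDiff_cutoff (n : ℕ) : ContDiff ℝ 1 (cutoff n) :=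
  ofRealCLM.contDiff.comp (Real.smoothTransition.contDiff.comp
    ((contDiff_const.mul (contDiff_const.sub (contDiff_norm_sq ℝ))).sub contDiff_const))

theorem norm_cutoff_le_one (n : ℕ) (ζ : ℂ) : ‖cutoff n ζ‖ ≤ 1 := by
  rw [cutoff, norm_real, Real.norm_of_nonneg (Real.smoothTransition.nonneg _)]
  exact Real.smoothTransition.le_one _

theorem norm_one_sub_cutoff_le_one (n : ℕ) (ζ : ℂ) : ‖1 - cutoff n ζ‖ ≤ 1 := by
  rw [cutoff, ← Complex.ofReal_one, ← Complex.ofReal_sub, norm_real,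
    Real.norm_of_nonneg (sub_nonneg.2 (Real.smoothTransition.le_one _))]
  exact sub_le_self _ (Real.smoothTransition.nonneg _)

theorem eventually_cutoff_eq_zero (n : ℕ) (hζ : ζ ∉ 𝔻) : cutoff n =ᶠ[𝓝 ζ] fun _ => 0 := by
  have hcont : ContinuousAt (fun w : ℂ => n * (1 - ‖w‖ ^ 2) - 1) ζ := by fun_prop
  have hneg : n * (1 - ‖ζ‖ ^ 2) - 1 < 0 := by
    have h1 : 1 ≤ ‖ζ‖ := by simpa using hζ
    have := mul_nonneg (Nat.cast_nonneg (α := ℝ) n) (sub_nonneg.2 (one_le_pow₀ (n := 2) h1))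
    linarith
  filter_upwards [hcont.eventually (gt_mem_nhds hneg)] with w hw
  rw [cutoff, Real.smoothTransition.zero_of_nonpos hw.le, Complex.ofReal_zero]

theorem eventually_cutoff_eq_one (hρ : ρ ∈ Ico 0 1) :
    ∀ᶠ n in atTop, ∀ ζ ∈ ball (0 : ℂ) ρ, cutoff n ζ = 1 := by
  have hpos : 0 < 1 - ρ ^ 2 := sub_pos.2 (pow_lt_one₀ hρ.1 hρ.2 two_ne_zero)
  filter_upwards [(tendsto_natCast_atTop_atTop.atTop_mul_const hpos).eventually_ge_atTop 2]
    with n hn ζ hζ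
  have : n * (1 - ρ ^ 2) ≤ n * (1 - ‖ζ‖ ^ 2) := by
    gcongr
    exact (mem_ball_zero_iff.1 hζ).le
  rw [cutoff, Real.smoothTransition.one_of_one_le (by linarith), Complex.ofReal_one]

theorem hasWirtingerDerivAt_cutoff (n : ℕ) (ζ : ℂ) : HasWirtingerDerivAt (cutoff n)
    (-(n * deriv Real.smoothTransition (n * (1 - ‖ζ‖ ^ 2) - 1) : ℝ) * conj ζ)
    (-(n * deriv Real.smoothTransition (n * (1 - ‖ζ‖ ^ 2) - 1) : ℝ) * ζ) ζ := by
  have hst := ((Real.smoothTransition.contDiff (n := 1)).differentiable one_ne_zero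
    (n * (1 - ‖ζ‖ ^ 2) - 1)).hasDerivAt
  have hnorm := (((hasStrictFDerivAt_norm_sq ζ).hasFDerivAt.const_sub 1).const_mul
    (n : ℝ)).sub_const 1
  refine (ofRealCLM.hasFDerivAt.comp ζ (hst.comp_hasFDerivAt ζ hnorm)).congr_fderiv ?_
  ext v
  have hre : (((v * conj ζ).re : ℝ) : ℂ) = (v * conj ζ + conj v * ζ) / 2 := by
    rw [Complex.re_eq_add_conj]
    simp
  simp only [wirtingerCLM_apply, ContinuousLinearMap.comp_apply, _root_.smul_apply,
    _root_.neg_apply, innerSL_apply_apply, ofRealCLM_apply, Complex.inner,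
    smul_eq_mul, nsmul_eq_mul]
  push_cast
  rw [hre]
  ring

theorem exists_abs_deriv_smoothTransition_mul_le :
    ∃ K, ∀ t, |deriv Real.smoothTransition t * (t + 1)| ≤ K := by
  have hsupp : HasCompactSupport (deriv Real.smoothTransition) := by
    refine .of_support_subset_isCompact (isCompact_Icc (a := 0) (b := 1)) fun t ht => ?_
    by_contra h
    refine ht ?_
    rcases lt_or_ge t 0 with h0 | h0
    · have hzero : Real.smoothTransition =ᶠ[𝓝 t] fun _ => 0 :=
        (eventually_lt_nhds h0).mono fun x hx => Real.smoothTransition.zero_of_nonpos hx.le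
      rw [hzero.deriv_eq, deriv_const]
    · have h1 : 1 < t := not_le.1 fun h1 => h ⟨h0, h1⟩
      have hone : Real.smoothTransition =ᶠ[𝓝 t] fun _ => 1 :=
        (eventually_gt_nhds h1).mono fun x hx => Real.smoothTransition.one_of_one_le hx.le
      rw [hone.deriv_eq, deriv_const]
  exact ((((Real.smoothTransition.contDiff (n := 1)).continuous_deriv le_rfl).mul
    (by fun_prop)).bounded_above_of_compact_support hsupp.mul_right)

theorem tangentialD_congr (hfg : f =ᶠ[𝓝 z] g) : tangentialD f z = tangentialD g z := by
  simp only [tangentialD, wD, wDbar, hfg.fderiv_eq, hfg.eq_of_nhds]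

theorem exists_norm_tangentialD_cutoff_mul_le : ∃ K, 0 ≤ K ∧ ∀ (n : ℕ) (h : ℂ → ℂ), ∀ ζ ∈ 𝔻,
    DifferentiableAt ℝ h ζ →
      ‖tangentialD (fun w => cutoff n w * h w) ζ‖ ≤ K * ‖h ζ‖ + ‖tangentialD h ζ‖ := by
  obtain ⟨K, hK⟩ := exists_abs_deriv_smoothTransition_mul_le
  have hK0 : 0 ≤ K := (abs_nonneg _).trans (hK 0)
  refine ⟨K, hK0, fun n h ζ hζ hh => ?_⟩
  set t : ℝ := n * (1 - ‖ζ‖ ^ 2) - 1 with ht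
  have ht' : (t : ℂ) + 1 = n * (1 - ζ * conj ζ) := by
    rw [mul_conj, normSq_eq_norm_sq, ht]
    push_cast
    ring
  have hleibniz : tangentialD (fun w => cutoff n w * h w) ζ =
      -(deriv Real.smoothTransition t * (t + 1) : ℝ) * conj ζ * h ζ +
        cutoff n ζ * tangentialD h ζ := by
    rw [((hasWirtingerDerivAt_cutoff n ζ).mul
      (hasWirtingerDerivAt_of_differentiableAt hh)).tangentialD_eq, tangentialD, ← ht]
    push_cast
    rw [ht']
    ring
  rw [hleibniz]
  refine (norm_add_le _ _).trans ?_
  rw [norm_mul, norm_mul, norm_mul, norm_neg, norm_real, RCLike.norm_conj, Real.norm_eq_abs]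
  have hζ1 : ‖ζ‖ ≤ 1 := (mem_ball_zero_iff.1 hζ).le
  calc _ ≤ K * 1 * ‖h ζ‖ + 1 * ‖tangentialD h ζ‖ := by
        gcongr
        exacts [hK t, norm_cutoff_le_one n ζ]
    _ = _ := by ring

theorem contDiff_cutoff_mul (hh : ContDiffOn ℝ 1 h 𝔻) (n : ℕ) :
    ContDiff ℝ 1 fun ζ => cutoff n ζ * h ζ := by
  refine contDiff_iff_contDiffAt.2 fun ζ => ?_
  by_cases hζ : ζ ∈ 𝔻
  · exact (contDiff_cutoff n).contDiffAt.mul (hh.contDiffAt (isOpen_ball.mem_nhds hζ))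
  · refine (contDiffAt_const (c := 0)).congr_of_eventuallyEq ?_
    filter_upwards [eventually_cutoff_eq_zero n hζ] with w hw
    rw [hw, zero_mul]

theorem cutoff_eq_zero (n : ℕ) (hζ : ζ ∉ 𝔻) : cutoff n ζ = 0 :=
  (eventually_cutoff_eq_zero n hζ).eq_of_nhds

theorem hasCompactSupport_cutoff_mul (n : ℕ) (h : ℂ → ℂ) :
    HasCompactSupport fun ζ => cutoff n ζ * h ζ :=
  (HasCompactSupport.intro (isCompact_closedBall (0 : ℂ) 1) fun _ hζ =>
    cutoff_eq_zero n fun h => hζ (ball_subset_closedBall h)).mul_right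

theorem norm_indicator_sub_cutoff_mul_le (hM : ∀ ζ ∈ 𝔻, ‖h ζ‖ ≤ M) (n : ℕ) (ζ : ℂ) :
    ‖Set.indicator 𝔻 h ζ - cutoff n ζ * h ζ‖ ≤ M := by
  by_cases hζ : ζ ∈ 𝔻
  · rw [indicator_of_mem hζ, ← one_sub_mul, norm_mul]
    exact (mul_le_of_le_one_left (norm_nonneg _) (norm_one_sub_cutoff_le_one n ζ)).trans (hM ζ hζ)
  · rw [indicator_of_notMem hζ, cutoff_eq_zero n hζ, zero_mul, sub_zero, norm_zero]
    exact (norm_nonneg _).trans (hM 0 (mem_ball_self one_pos))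

theorem wD_cauchyGreen_eq_of_cutoff_eq_one (hh : ContDiffOn ℝ 1 h 𝔻) (hM : ∀ ζ ∈ 𝔻, ‖h ζ‖ ≤ M)
    (hδ : 0 < δ) (hδ𝔻 : ball z δ ⊆ 𝔻) (hcut : ∀ ζ ∈ ball z δ, cutoff n ζ = 1) :
    wD (cauchyGreen h) z = cauchyTransform (tangentialD fun ζ => cutoff n ζ * h ζ) z +
      conj z ^ 2 * h z +
      beurlingTransform (fun ζ => Set.indicator 𝔻 h ζ - cutoff n ζ * h ζ) z := by
  have hz : z ∈ ball z δ := mem_ball_self hδ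
  have hφ := contDiff_cutoff_mul hh n
  have hc := hasCompactSupport_cutoff_mul n h
  have hdφ := isDensity_of_hasCompactSupport hφ.continuous hc
  have hdr := (IsDensity.indicator_unitBall hh.continuousOn hM).sub hdφ
  have hsplit : cauchyGreen h = fun z => cauchyTransform (fun ζ => cutoff n ζ * h ζ) z +
      cauchyTransform (fun ζ => Set.indicator 𝔻 h ζ - cutoff n ζ * h ζ) z := by
    ext z
    rw [cauchyTransform_sub (IsDensity.indicator_unitBall hh.continuousOn hM) hdφ, cauchyGreen,
      add_sub_cancel]
  have hrem := hasDerivAt_cauchyTransform hdr (by norm_num) <|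
    norm_le_mul_norm_sub_of_eqOn_ball hδ (norm_indicator_sub_cutoff_mul_le hM n) fun ζ hζ => by
      rw [indicator_of_mem (hδ𝔻 hζ), hcut ζ hζ, one_mul, sub_self]
  rw [hsplit, ((hasWirtingerDerivAt_of_differentiableAt
      (differentiableAt_and_fderiv_cauchyTransform hφ hc z).1).add
        (hasWirtingerDerivAt_of_hasDerivAt hrem)).wD_eq,
    wD_cauchyTransform_eq_tangentialD hφ hc
      (fun ζ hζ => by rw [cutoff_eq_zero n hζ, zero_mul]) (hδ𝔻 hz), hcut z hz, one_mul]

theorem eventually_cutoff_eq_one_nhds (hz : z ∈ 𝔻) : ∃ δ > 0, ball z δ ⊆ 𝔻 ∧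
    ∀ᶠ n in atTop, ∀ ζ ∈ ball z δ, cutoff n ζ = 1 := by
  have hz1 : ‖z‖ < 1 := mem_ball_zero_iff.1 hz
  have hsub : ball z ((1 - ‖z‖) / 2) ⊆ ball 0 ((1 + ‖z‖) / 2) :=
    ball_subset_ball' (by rw [dist_zero_right]; linarith)
  refine ⟨(1 - ‖z‖) / 2, by linarith, hsub.trans (ball_subset_ball (by linarith)),
    (eventually_cutoff_eq_one ⟨by positivity, by linarith⟩).mono fun n hn ζ hζ => hn ζ (hsub hζ)⟩

theorem eventually_cutoff_mul_eq (hζ : ζ ∈ 𝔻) (h : ℂ → ℂ) :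
    ∀ᶠ n in atTop, (fun w => cutoff n w * h w) =ᶠ[𝓝 ζ] h := by
  obtain ⟨δ, hδ, -, hcut⟩ := eventually_cutoff_eq_one_nhds hζ
  filter_upwards [hcut] with n hn
  filter_upwards [ball_mem_nhds ζ hδ] with w hw
  rw [hn w hw, one_mul]

theorem tangentialD_cutoff_mul_eq_zero (n : ℕ) (h : ℂ → ℂ) (hζ : ζ ∉ 𝔻) :
    tangentialD (fun w => cutoff n w * h w) ζ = 0 := by
  have hzero : (fun w => cutoff n w * h w) =ᶠ[𝓝 ζ] fun _ => 0 :=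
    (eventually_cutoff_eq_zero n hζ).mono fun w hw => mul_eq_zero_of_left hw _
  rw [tangentialD_congr hzero, (hasWirtingerDerivAt_const 0 ζ).tangentialD_eq]
  ring

theorem aestronglyMeasurable_tangentialD (hφ : ContDiff ℝ 1 φ) (hc : HasCompactSupport φ) :
    AEStronglyMeasurable (tangentialD φ) :=
  ((isDensity_wD hφ hc).aestronglyMeasurable.sub ((by fun_prop :
    AEStronglyMeasurable fun ζ : ℂ => conj ζ ^ 2).mul
      (isDensity_wDbar hφ hc).aestronglyMeasurable)).sub
    ((by fun_prop : AEStronglyMeasurable fun ζ : ℂ => 2 * conj ζ).mul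
      hφ.continuous.aestronglyMeasurable)

theorem tendsto_cauchyTransform_tangentialD_cutoff_mul (hh : ContDiffOn ℝ 1 h 𝔻)
    (hM : ∀ ζ ∈ 𝔻, ‖h ζ‖ ≤ M) (hM' : ∀ ζ ∈ 𝔻, ‖tangentialD h ζ‖ ≤ M') (hz : z ∈ 𝔻) :
    Tendsto (fun n => cauchyTransform (tangentialD fun ζ => cutoff n ζ * h ζ) z) atTop
      (𝓝 (cauchyGreen (tangentialD h) z)) := by
  obtain ⟨K, hK, hbound⟩ := exists_norm_tangentialD_cutoff_mul_le
  have h0 : (0 : ℂ) ∈ 𝔻 := mem_ball_self one_pos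
  have hM0 : 0 ≤ M := (norm_nonneg _).trans (hM 0 h0)
  have hM'0 : 0 ≤ M' := (norm_nonneg _).trans (hM' 0 h0)
  refine tendsto_cauchyTransform (M := K * M + M')
    (fun n => aestronglyMeasurable_tangentialD (contDiff_cutoff_mul hh n)
      (hasCompactSupport_cutoff_mul n h)) (.of_forall fun n ζ => ?_)
    (fun n ζ hζ => tangentialD_cutoff_mul_eq_zero n h fun h => hζ (unitBall_subset_ball hz h))
    fun ζ => ?_
  · by_cases hζ : ζ ∈ 𝔻
    · refine (hbound n h ζ hζ ((hh.differentiableOn one_ne_zero).differentiableAt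
        (isOpen_ball.mem_nhds hζ))).trans ?_
      gcongr
      exacts [hM ζ hζ, hM' ζ hζ]
    · rw [tangentialD_cutoff_mul_eq_zero n h hζ, norm_zero]
      positivity
  · by_cases hζ : ζ ∈ 𝔻
    · rw [indicator_of_mem hζ]
      exact tendsto_const_nhds.congr' ((eventually_cutoff_mul_eq hζ h).mono fun n hn =>
        (tangentialD_congr hn).symm)
    · simp only [indicator_of_notMem hζ, tangentialD_cutoff_mul_eq_zero _ h hζ,
        tendsto_const_nhds]

theorem tendsto_beurlingTransform_indicator_sub_cutoff_mul (hh : ContDiffOn ℝ 1 h 𝔻)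
    (hM : ∀ ζ ∈ 𝔻, ‖h ζ‖ ≤ M) (hz : z ∈ 𝔻) :
    Tendsto (fun n => beurlingTransform (fun ζ => Set.indicator 𝔻 h ζ - cutoff n ζ * h ζ) z)
      atTop (𝓝 0) := by
  obtain ⟨δ, hδ, hδ𝔻, hcut⟩ := eventually_cutoff_eq_one_nhds hz
  have hlim : beurlingTransform (fun _ => 0) z = 0 := by
    simp only [beurlingTransform, zero_div, integral_zero, mul_zero]
  suffices h : Tendsto (fun n => beurlingTransform
      (fun ζ => Set.indicator 𝔻 h ζ - cutoff n ζ * h ζ) z) atTop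
      (𝓝 (beurlingTransform (fun _ => 0) z)) by rwa [hlim] at h
  refine tendsto_beurlingTransform (ρ := 2) hδ
    (fun n => (IsDensity.indicator_unitBall hh.continuousOn hM).aestronglyMeasurable.sub
      (contDiff_cutoff_mul hh n).continuous.aestronglyMeasurable)
    (norm_indicator_sub_cutoff_mul_le hM) (fun n ζ hζ => ?_) (hcut.mono fun n hn ζ hζ => ?_)
    fun ζ => ?_
  · have hζ' : ζ ∉ 𝔻 := fun h => hζ (unitBall_subset_ball hz h)
    rw [indicator_of_notMem hζ', cutoff_eq_zero n hζ', zero_mul, sub_zero]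
  · rw [indicator_of_mem (hδ𝔻 hζ), hn ζ hζ, one_mul, sub_self]
  · by_cases hζ : ζ ∈ 𝔻
    · simp only [indicator_of_mem hζ]
      exact tendsto_const_nhds.congr' ((eventually_cutoff_mul_eq hζ h).mono fun n hn =>
        (sub_eq_zero_of_eq hn.eq_of_nhds.symm).symm)
    · simp only [indicator_of_notMem hζ, cutoff_eq_zero _ hζ, zero_mul, sub_zero,
        tendsto_const_nhds]

theorem wD_cauchyGreen_eq (hh : ContDiffOn ℝ 1 h 𝔻) (hM : ∀ ζ ∈ 𝔻, ‖h ζ‖ ≤ M)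
    (hM' : ∀ ζ ∈ 𝔻, ‖tangentialD h ζ‖ ≤ M') (hz : z ∈ 𝔻) :
    wD (cauchyGreen h) z = cauchyGreen (tangentialD h) z + conj z ^ 2 * h z := by
  obtain ⟨δ, hδ, hδ𝔻, hcut⟩ := eventually_cutoff_eq_one_nhds hz
  have hlim := ((tendsto_cauchyTransform_tangentialD_cutoff_mul hh hM hM' hz).add_const
    (conj z ^ 2 * h z)).add (tendsto_beurlingTransform_indicator_sub_cutoff_mul hh hM hz)
  rw [add_zero] at hlim
  exact tendsto_nhds_unique (tendsto_const_nhds.congr' <| hcut.mono fun n hn =>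
    wD_cauchyGreen_eq_of_cutoff_eq_one hh hM hδ hδ𝔻 hn) hlim

end IntegrationByParts

/-! ### Hölder norms of order `k` -/

section HolderNorm

variable {f g h p q : ℂ → ℂ} {z : ℂ} {α M N N' : ℝ} {S : Set ℂ} {k : ℕ}

namespace HolderBound

theorem mono (hf : HolderBound α S N f) (h : N ≤ N') : HolderBound α S N' f where
  norm_le z hz := (hf.norm_le z hz).trans h
  norm_sub_le z hz z' hz' := (hf.norm_sub_le z hz z' hz').trans (by gcongr)

theorem congr (hf : HolderBound α S N f) (hfg : EqOn f g S) : HolderBound α S N g where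
  norm_le z hz := hfg hz ▸ hf.norm_le z hz
  norm_sub_le z hz z' hz' := hfg hz ▸ hfg hz' ▸ hf.norm_sub_le z hz z' hz'

theorem add (hf : HolderBound α S M f) (hg : HolderBound α S N g) :
    HolderBound α S (M + N) fun z => f z + g z where
  norm_le z hz := norm_add_le_of_le (hf.norm_le z hz) (hg.norm_le z hz)
  norm_sub_le z hz z' hz' := by
    rw [add_sub_add_comm, add_mul]
    exact norm_add_le_of_le (hf.norm_sub_le z hz z' hz') (hg.norm_sub_le z hz z' hz')

theorem mul (hf : HolderBound α S M f) (hg : HolderBound α S N g) :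
    HolderBound α S (2 * M * N) fun z => f z * g z where
  norm_le z hz := by
    have hM := (norm_nonneg _).trans (hf.norm_le z hz)
    have hN := (norm_nonneg _).trans (hg.norm_le z hz)
    calc ‖f z * g z‖ ≤ M * N := norm_mul_le_of_le (hf.norm_le z hz) (hg.norm_le z hz)
      _ ≤ 2 * M * N := by linarith [mul_nonneg hM hN]
  norm_sub_le z hz z' hz' := by
    calc ‖f z * g z - f z' * g z'‖ = ‖(f z - f z') * g z + f z' * (g z - g z')‖ := by ring_nf
      _ ≤ M * ‖z - z'‖ ^ α * N + M * (N * ‖z - z'‖ ^ α) := norm_add_le_of_le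
          (norm_mul_le_of_le (hf.norm_sub_le z hz z' hz') (hg.norm_le z hz))
          (norm_mul_le_of_le (hf.norm_le z' hz') (hg.norm_sub_le z hz z' hz'))
      _ = 2 * M * N * ‖z - z'‖ ^ α := by ring

theorem const (α : ℝ) (S : Set ℂ) (c : ℂ) : HolderBound α S ‖c‖ fun _ => c where
  norm_le _ _ := le_rfl
  norm_sub_le _ _ _ _ := by
    rw [sub_self, norm_zero]
    positivity

end HolderBound

/-- The bound `N` on the suprema and the `α`-Hölder constants over the unit disk of all the
derivatives of `f` of order at most `k`. The recursion on `k` makes it compatible with the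
Leibniz rule. -/
def HolderNormLE (α : ℝ) : ℕ → ℝ → (ℂ → ℂ) → Prop
  | 0, N, f => HolderBound α 𝔻 N f
  | k + 1, N, f => HolderBound α 𝔻 N f ∧ (∀ z ∈ 𝔻, DifferentiableAt ℝ f z) ∧
      HolderNormLE α k N (wD f) ∧ HolderNormLE α k N (wDbar f)

namespace HolderNormLE

theorem holderBound (hf : HolderNormLE α k N f) : HolderBound α 𝔻 N f := by
  cases k with
  | zero => exact hf
  | succ k => exact hf.1

theorem nonneg (hf : HolderNormLE α k N f) : 0 ≤ N := hf.holderBound.nonneg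

theorem mono (hf : HolderNormLE α k N f) (h : N ≤ N') : HolderNormLE α k N' f := by
  induction k generalizing f with
  | zero => exact HolderBound.mono hf h
  | succ k ih => exact ⟨hf.1.mono h, hf.2.1, ih hf.2.2.1, ih hf.2.2.2⟩

theorem congr (hf : HolderNormLE α k N f) (hfg : EqOn f g 𝔻) : HolderNormLE α k N g := by
  induction k generalizing f g with
  | zero => exact HolderBound.congr hf hfg
  | succ k ih =>
    exact ⟨hf.1.congr hfg, fun z hz => (hf.2.1 z hz).congr_of_eventuallyEq
      (hfg.symm.eventuallyEq_of_mem (isOpen_ball.mem_nhds hz)),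
      ih hf.2.2.1 (wD_congr isOpen_ball hfg), ih hf.2.2.2 (wDbar_congr isOpen_ball hfg)⟩

theorem of_succ (hf : HolderNormLE α (k + 1) N f) : HolderNormLE α k N f := by
  induction k generalizing f with
  | zero => exact hf.1
  | succ k ih => exact ⟨hf.1, hf.2.1, ih hf.2.2.1, ih hf.2.2.2⟩

theorem of_hasWirtingerDerivAt (hf : HolderBound α 𝔻 N f)
    (hd : ∀ z ∈ 𝔻, HasWirtingerDerivAt f (p z) (q z) z) (hp : HolderNormLE α k N p)
    (hq : HolderNormLE α k N q) : HolderNormLE α (k + 1) N f :=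
  ⟨hf, fun z hz => (hd z hz).differentiableAt, hp.congr fun z hz => (hd z hz).wD_eq.symm,
    hq.congr fun z hz => (hd z hz).wDbar_eq.symm⟩

theorem hasWirtingerDerivAt (hf : HolderNormLE α (k + 1) N f) (hz : z ∈ 𝔻) :
    HasWirtingerDerivAt f (wD f z) (wDbar f z) z :=
  hasWirtingerDerivAt_of_differentiableAt (hf.2.1 z hz)

theorem contDiffOn (hα : 0 < α) (hf : HolderNormLE α k N f) : ContDiffOn ℝ k f 𝔻 := by
  induction k generalizing f with
  | zero => exact contDiffOn_zero.2 (hf.holderBound.continuousOn hα)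
  | succ k ih => exact contDiffOn_succ_of_wD isOpen_ball hf.2.1 (ih hf.2.2.1) (ih hf.2.2.2)

theorem add (hf : HolderNormLE α k M f) (hg : HolderNormLE α k N g) :
    HolderNormLE α k (M + N) fun z => f z + g z := by
  induction k generalizing f g with
  | zero => exact HolderBound.add hf hg
  | succ k ih =>
    exact of_hasWirtingerDerivAt (hf.1.add hg.1)
      (fun z hz => (hf.hasWirtingerDerivAt hz).add (hg.hasWirtingerDerivAt hz))
      (ih hf.2.2.1 hg.2.2.1) (ih hf.2.2.2 hg.2.2.2)

theorem mul (hf : HolderNormLE α k M f) (hg : HolderNormLE α k N g) :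
    HolderNormLE α k (2 ^ (k + 1) * M * N) fun z => f z * g z := by
  induction k generalizing f g with
  | zero => exact (by ring : 2 * M * N = 2 ^ (0 + 1) * M * N) ▸ HolderBound.mul hf hg
  | succ k ih =>
    have hpow : 2 ^ (k + 1) * M * N + 2 ^ (k + 1) * M * N = 2 ^ (k + 1 + 1) * M * N := by ring
    have hle : 2 * M * N ≤ 2 ^ (k + 1 + 1) * M * N := by
      have := hf.nonneg
      have := hg.nonneg
      gcongr
      exact le_self_pow₀ one_le_two (Nat.succ_ne_zero _)
    exact of_hasWirtingerDerivAt ((hf.1.mul hg.1).mono hle)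
      (fun z hz => (hf.hasWirtingerDerivAt hz).mul (hg.hasWirtingerDerivAt hz))
      (hpow ▸ (ih hf.2.2.1 hg.of_succ).add (ih hf.of_succ hg.2.2.1))
      (hpow ▸ (ih hf.2.2.2 hg.of_succ).add (ih hf.of_succ hg.2.2.2))

theorem const (α : ℝ) (k : ℕ) (c : ℂ) : HolderNormLE α k ‖c‖ fun _ => c := by
  induction k generalizing c with
  | zero => exact HolderBound.const α _ c
  | succ k ih =>
    have hzero : HolderNormLE α k ‖c‖ fun _ => 0 := (ih 0).mono (by simp)
    exact of_hasWirtingerDerivAt (HolderBound.const α _ c)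
      (fun z _ => hasWirtingerDerivAt_const c z) hzero hzero

theorem star_id (hα : α ∈ Icc 0 1) (k : ℕ) : HolderNormLE α k 2 fun z => conj z := by
  have hbound : HolderBound α 𝔻 2 fun z => conj z :=
    holderBound_of_norm_wD_le (M := 1) (A := 0) (B := 1) hα
      (fun z _ => (hasWirtingerDerivAt_conj z).differentiableAt)
      (fun z hz => by simpa using (mem_ball_zero_iff.1 hz).le)
      (fun z _ => by simp [(hasWirtingerDerivAt_conj z).wD_eq])
      (fun z _ => by simp [(hasWirtingerDerivAt_conj z).wDbar_eq]) one_le_two (by norm_num)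
  cases k with
  | zero => exact hbound
  | succ k =>
    exact of_hasWirtingerDerivAt hbound (fun z _ => hasWirtingerDerivAt_conj z)
      ((const α k 0).mono (by simp)) ((const α k 1).mono (by simp))

theorem conj_sq_mul (hα : α ∈ Icc 0 1) (hf : HolderNormLE α k N f) :
    HolderNormLE α k (2 ^ (2 * k + 4) * N) fun z => conj z ^ 2 * f z := by
  convert ((star_id hα k).mul ((star_id hα k).mul hf)) using 1
  · ring
  · ext z
    ring

theorem tangentialD (hα : α ∈ Icc 0 1) (hf : HolderNormLE α (k + 1) N f) :
    HolderNormLE α k ((1 + 2 ^ (3 * k + 5) + 2 ^ (2 * k + 4)) * N) (tangentialD f) := by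
  have hneg := (const α k (-1)).mul (conj_sq_mul hα hf.2.2.2)
  have hlin := ((const α k (-2)).mul ((star_id hα k).mul hf.of_succ))
  convert (hf.2.2.1.add hneg).add hlin using 1
  · simp only [norm_neg, norm_one, norm_ofNat]
    ring
  · ext z
    rw [_root_.tangentialD]
    ring

end HolderNormLE

theorem exists_holderNormLE_one_cauchyGreen (hα : α ∈ Ioo 0 1) : ∃ C, 0 ≤ C ∧ ∀ N h,
    HolderBound α 𝔻 N h → HolderNormLE α 1 (C * N) (cauchyGreen h) := by
  have hα0 := hα.1
  have hα1 := sub_pos.2 hα.2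
  set A := 8 / α + 4
  set B := (12 / α + 20 / (1 - α)) * (1 + 2 / (1 - 2⁻¹ ^ α))
  have hA : 1 ≤ A := by linarith [show 0 ≤ 8 / α by positivity]
  have hB : 0 ≤ B := by
    have : 0 ≤ 1 - (2⁻¹ : ℝ) ^ α :=
      sub_nonneg.2 (Real.rpow_le_one (by norm_num) (by norm_num) hα0.le)
    positivity
  refine ⟨A + B, by positivity, fun N h hh => ?_⟩
  have hN := hh.nonneg
  exact ⟨(hh.cauchyGreen hα).mono (mul_le_mul_of_nonneg_right (le_add_of_nonneg_right hB) hN),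
    fun z hz => hh.differentiableAt_cauchyGreen hα hz,
    HolderBound.mono (hh.wD_cauchyGreen hα)
      (mul_le_mul_of_nonneg_right (le_add_of_nonneg_left (by positivity)) hN),
    HolderBound.congr (hh.mono (le_mul_of_one_le_left hN (by linarith)))
      fun z hz => (hh.wDbar_cauchyGreen hα hz).symm⟩

theorem HolderNormLE.wD_cauchyGreen {C : ℝ} (hα : α ∈ Ioo 0 1)
    (hT : ∀ N h, HolderNormLE α k N h → HolderNormLE α (k + 1) (C * N) (cauchyGreen h))
    (hh : HolderNormLE α (k + 1) N h) :
    HolderNormLE α (k + 1)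
      ((C * (1 + 2 ^ (3 * k + 5) + 2 ^ (2 * k + 4)) + 2 ^ (2 * (k + 1) + 4)) * N)
      (wD (_root_.cauchyGreen h)) := by
  have hα' := Ioo_subset_Icc_self hα
  have hsum := (hT _ _ (hh.tangentialD hα')).add (hh.conj_sq_mul hα')
  refine (hsum.mono (by linarith)).congr fun z hz => ?_
  have h1 : ContDiffOn ℝ 1 h 𝔻 := (hh.contDiffOn hα.1).of_le (by norm_cast; omega)
  exact (wD_cauchyGreen_eq h1 hh.1.norm_le (hh.tangentialD hα').holderBound.norm_le hz).symm

theorem exists_holderNormLE_cauchyGreen (hα : α ∈ Ioo 0 1) (k : ℕ) : ∃ C, 0 ≤ C ∧ ∀ N h,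
    HolderNormLE α k N h → HolderNormLE α (k + 1) (C * N) (cauchyGreen h) := by
  induction k with
  | zero => exact exists_holderNormLE_one_cauchyGreen hα
  | succ k ih =>
    obtain ⟨C, hC, hT⟩ := ih
    set B : ℝ := C * (1 + 2 ^ (3 * k + 5) + 2 ^ (2 * k + 4)) + 2 ^ (2 * (k + 1) + 4)
    have hB : 1 ≤ B := le_add_of_nonneg_of_le (by positivity) (one_le_pow₀ one_le_two)
    refine ⟨C + B, by positivity, fun N h hh => ?_⟩
    have hN := hh.nonneg
    have hTh := hT N h hh.of_succ
    have hDbarTh : HolderNormLE α (k + 1) N (wDbar (cauchyGreen h)) :=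
      hh.congr fun z hz => (hh.1.wDbar_cauchyGreen hα hz).symm
    exact ⟨hTh.1.mono (mul_le_mul_of_nonneg_right (by linarith) hN), hTh.2.1,
      (hh.wD_cauchyGreen hα hT).mono (mul_le_mul_of_nonneg_right (by linarith) hN),
      hDbarTh.mono (le_mul_of_one_le_left hN (by linarith))⟩

end HolderNorm

/-! ### Polynomials in `z` and `z̄` -/

section Polynomials

variable {f g h : ℂ → ℂ} {z : ℂ} {α M N : ℝ} {a b i j k m n : ℕ}

/-- The monomial `z ^ a * z̄ ^ b` in `z` and `z̄`; the `wirtingerMonomial a b` with `a + b < n` are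
the terms of a Taylor polynomial of degree less than `n` at `0`. -/
noncomputable def wirtingerMonomial (a b : ℕ) (z : ℂ) : ℂ := z ^ a * conj z ^ b

theorem contDiff_wirtingerMonomial (a b : ℕ) {n : WithTop ℕ∞} :
    ContDiff ℝ n (wirtingerMonomial a b) :=
  (contDiff_id.pow a).mul (conjCLE.contDiff.pow b)

theorem hasWirtingerDerivAt_wirtingerMonomial (a b : ℕ) (z : ℂ) :
    HasWirtingerDerivAt (wirtingerMonomial a b) (a * wirtingerMonomial (a - 1) b z)
      (b * wirtingerMonomial a (b - 1) z) z := by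
  have h : HasWirtingerDerivAt (wirtingerMonomial a b) _ _ z :=
    (hasWirtingerDerivAt_of_hasDerivAt (hasDerivAt_pow a z)).mul (hasWirtingerDerivAt_conj_pow b z)
  convert h using 1 <;> simp only [wirtingerMonomial] <;> ring

theorem wDij_wirtingerMonomial (i j a b : ℕ) :
    wDij i j (wirtingerMonomial a b) = fun z =>
      (a.descFactorial i * b.descFactorial j : ℂ) * wirtingerMonomial (a - i) (b - j) z := by
  induction i with
  | zero =>
    induction j with
    | zero => simp [wDij]
    | succ j ih =>
      rw [wDij_zero_succ, ih, wDbar_const_mul]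
      ext z
      rw [(hasWirtingerDerivAt_wirtingerMonomial _ _ z).wDbar_eq, Nat.descFactorial_succ,
        ← Nat.sub_sub]
      push_cast
      ring
  | succ i ih =>
    rw [wDij_succ_left, ih, wD_const_mul]
    ext z
    rw [(hasWirtingerDerivAt_wirtingerMonomial _ _ z).wD_eq, Nat.descFactorial_succ,
      ← Nat.sub_sub]
    push_cast
    ring

theorem wDij_wirtingerMonomial_zero (i j a b : ℕ) :
    wDij i j (wirtingerMonomial a b) 0 =
      if (i, j) = (a, b) then (a.factorial * b.factorial : ℂ) else 0 := by
  simp only [wDij_wirtingerMonomial, wirtingerMonomial, map_zero]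
  rcases lt_trichotomy a i with h | rfl | h
  · rw [Nat.descFactorial_eq_zero_iff_lt.2 h, if_neg (by simp [h.ne'])]
    simp
  · rcases lt_trichotomy b j with h | rfl | h
    · rw [Nat.descFactorial_eq_zero_iff_lt.2 h, if_neg (by simp [h.ne'])]
      simp
    · simp [Nat.descFactorial_self]
    · rw [zero_pow (Nat.sub_ne_zero_of_lt h), if_neg (by simp [h.ne])]
      simp
  · rw [zero_pow (Nat.sub_ne_zero_of_lt h), if_neg (by simp [h.ne])]
    simp

/-- The polynomials in `z` and `z̄` of total degree less than `n`. They match prescribed derivatives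
of order less than `n` at `0`, and the Cauchy–Green operator raises their degree by one. -/
noncomputable def polyDegreeLT (n : ℕ) : Submodule ℂ (ℂ → ℂ) :=
  Submodule.span ℂ {f | ∃ a b, a + b < n ∧ wirtingerMonomial a b = f}

theorem wirtingerMonomial_mem (h : a + b < n) : wirtingerMonomial a b ∈ polyDegreeLT n :=
  Submodule.subset_span ⟨a, b, h, rfl⟩

theorem contDiff_of_mem_polyDegreeLT (hf : f ∈ polyDegreeLT n) {m : WithTop ℕ∞} :
    ContDiff ℝ m f := by
  induction hf using Submodule.span_induction with
  | mem f hf =>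
    obtain ⟨a, b, -, rfl⟩ := hf
    exact contDiff_wirtingerMonomial a b
  | zero => exact contDiff_const
  | add f g _ _ hf hg => exact hf.add hg
  | smul c f _ hf => exact hf.const_smul c

theorem wDij_add_of_contDiff (hf : ContDiff ℝ (i + j : ℕ) f) (hg : ContDiff ℝ (i + j : ℕ) g) :
    wDij i j (f + g) = wDij i j f + wDij i j g :=
  funext fun z => wDij_add isOpen_univ hf.contDiffOn hg.contDiffOn (mem_univ z)

theorem wDij_smul (c : ℂ) (i j : ℕ) (f : ℂ → ℂ) : wDij i j (c • f) = c • wDij i j f :=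
  wDij_const_mul c i j f

theorem wDij_eq_zero_of_mem_polyDegreeLT (hf : f ∈ polyDegreeLT n) (hn : n ≤ i + j) :
    wDij i j f = 0 := by
  induction hf using Submodule.span_induction with
  | mem f hf =>
    obtain ⟨a, b, hab, rfl⟩ := hf
    have : a < i ∨ b < j := by omega
    rcases this with h | h <;> ext z <;>
      simp [wDij_wirtingerMonomial, Nat.descFactorial_eq_zero_iff_lt.2 h]
  | zero => simpa only [zero_smul] using wDij_smul 0 i j 0
  | add f g hf' hg' hf hg =>
    rw [wDij_add_of_contDiff (contDiff_of_mem_polyDegreeLT hf') (contDiff_of_mem_polyDegreeLT hg'),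
      hf, hg, add_zero]
  | smul c f _ hf => rw [wDij_smul, hf, smul_zero]

theorem id_mul_mem_polyDegreeLT (hf : f ∈ polyDegreeLT n) :
    (fun z => z * f z) ∈ polyDegreeLT (n + 1) := by
  induction hf using Submodule.span_induction with
  | mem f hf =>
    obtain ⟨a, b, hab, rfl⟩ := hf
    convert wirtingerMonomial_mem (a := a + 1) (b := b) (n := n + 1) (by omega) using 2 with z
    rw [wirtingerMonomial, wirtingerMonomial, pow_succ', mul_assoc]
  | zero =>
    convert zero_mem (polyDegreeLT (n + 1)) using 2 with z
    exact mul_zero z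
  | add f g _ _ hf hg =>
    convert add_mem hf hg using 2 with z
    exact mul_add z (f z) (g z)
  | smul c f _ hf =>
    convert Submodule.smul_mem _ c hf using 2 with z
    simp only [Pi.smul_apply, smul_eq_mul, mul_left_comm]

theorem const_mem_polyDegreeLT (c : ℂ) (n : ℕ) : (fun _ => c) ∈ polyDegreeLT (n + 1) := by
  convert Submodule.smul_mem _ c (wirtingerMonomial_mem (a := 0) (b := 0) n.succ_pos) using 2 with z
  simp [wirtingerMonomial]

theorem exists_mem_polyDegreeLT_wDij_zero_eq (k : ℕ) (c : ℕ → ℕ → ℂ) :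
    ∃ P ∈ polyDegreeLT k, ∀ i j, i + j < k → wDij i j P 0 = c i j := by
  suffices h : ∀ s : Finset (ℕ × ℕ), (∀ p ∈ s, p.1 + p.2 < k) → ∃ P ∈ polyDegreeLT k,
      ∀ i j, wDij i j P 0 = if (i, j) ∈ s then c i j else 0 by
    obtain ⟨P, hP, hPc⟩ := h ((Finset.range k ×ˢ Finset.range k).filter fun p => p.1 + p.2 < k)
      (by simp)
    exact ⟨P, hP, fun i j hij => by rw [hPc, if_pos (by
      simp only [Finset.mem_filter, Finset.mem_product, Finset.mem_range]; omega)]⟩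
  intro s
  induction s using Finset.induction with
  | empty =>
    exact fun _ => ⟨0, zero_mem _, fun i j => by
      simp [wDij_eq_zero_of_mem_polyDegreeLT (zero_mem (polyDegreeLT 0))]⟩
  | insert p s hp ih =>
    intro hs
    obtain ⟨P, hP, hPc⟩ := ih fun q hq => hs q (Finset.mem_insert_of_mem hq)
    have hmon := wirtingerMonomial_mem (hs p (Finset.mem_insert_self p s))
    refine ⟨_, add_mem hP (Submodule.smul_mem _
      (c p.1 p.2 / (p.1.factorial * p.2.factorial)) hmon), fun i j => ?_⟩
    have hmul : (p.1.factorial * p.2.factorial : ℂ) ≠ 0 :=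
      mod_cast mul_ne_zero p.1.factorial_ne_zero p.2.factorial_ne_zero
    rw [wDij_add_of_contDiff (contDiff_of_mem_polyDegreeLT hP) (contDiff_of_mem_polyDegreeLT
      (Submodule.smul_mem _ _ hmon)), wDij_smul, Pi.add_apply, Pi.smul_apply, hPc,
      wDij_wirtingerMonomial_zero, smul_eq_mul]
    by_cases hij : (i, j) = p
    · subst hij
      simp [hp, div_mul_cancel₀ _ hmul]
    · simp [hij]

theorem IsDensity.integrable (hf : IsDensity f) : Integrable f := by
  obtain ⟨M, hM⟩ := hf.exists_norm_le
  obtain ⟨ρ, hρ⟩ := hf.exists_eq_zero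
  exact integrable_of_norm_le_rpow (s := 0) (C := M) (by norm_num) hf.aestronglyMeasurable hρ
    fun ζ _ => by simpa using hM ζ

theorem cauchyTransform_id_mul (hf : IsDensity f) (z : ℂ) :
    cauchyTransform (fun ζ => ζ * f ζ) z =
      z * cauchyTransform f z + -(Real.pi : ℂ)⁻¹ * ∫ ζ, f ζ := by
  have hint := (hf.integrable_div z).const_mul z
  have hae : (fun ζ => ζ * f ζ / (ζ - z)) =ᵐ[volume] fun ζ => z * (f ζ / (ζ - z)) + f ζ := by
    filter_upwards [volume.ae_ne z] with ζ hζ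
    have := sub_ne_zero.2 hζ
    field_simp
    ring
  rw [cauchyTransform, cauchyTransform, integral_congr_ae hae, integral_add hint hf.integrable,
    integral_const_mul]
  ring

theorem exists_norm_le_unitBall (hf : Continuous f) : ∃ M, ∀ z ∈ 𝔻, ‖f z‖ ≤ M :=
  ((isCompact_closedBall 0 1).exists_bound_of_continuousOn hf.continuousOn).imp
    fun _ hM z hz => hM z (ball_subset_closedBall hz)

theorem cauchyGreen_conj_pow (b : ℕ) (hz : z ∈ 𝔻) :
    cauchyGreen (fun ζ => conj ζ ^ b) z = conj z ^ (b + 1) / (b + 1) := by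
  induction b generalizing z with
  | zero => simpa using cauchyGreen_one hz
  | succ b ih =>
    have hd (ζ : ℂ) := hasWirtingerDerivAt_conj_pow (b + 1) ζ
    have htan : tangentialD (fun ζ => conj ζ ^ b) = fun ζ => -(b + 2 : ℂ) * conj ζ ^ (b + 1) := by
      ext ζ
      rw [(hasWirtingerDerivAt_conj_pow b ζ).tangentialD_eq]
      cases b with
      | zero => simp
      | succ b =>
        rw [Nat.add_sub_cancel]
        push_cast
        ring
    have hpow (n : ℕ) : ContDiff ℝ 1 fun ζ : ℂ => conj ζ ^ n := conjCLE.contDiff.pow n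
    obtain ⟨M, hM⟩ := exists_norm_le_unitBall (hpow b).continuous
    obtain ⟨M', hM'⟩ := exists_norm_le_unitBall (f := fun ζ => -(b + 2 : ℂ) * conj ζ ^ (b + 1))
      (continuous_const.mul (hpow (b + 1)).continuous)
    have hwD := wD_cauchyGreen_eq (hpow b).contDiffOn hM
      (by simpa only [htan] using hM') hz
    have hzero : wD (cauchyGreen fun ζ => conj ζ ^ b) z = 0 := by
      rw [wD_congr isOpen_ball (fun w hw => ih hw) hz]
      simp only [div_eq_inv_mul, wD_const_mul, (hd z).wD_eq, mul_zero]
    rw [hzero, htan, cauchyGreen_const_mul] at hwD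
    rw [_root_.eq_div_iff (by norm_cast)]
    push_cast
    linear_combination hwD

theorem cauchyGreen_id_mul (hf : ContinuousOn f 𝔻) (hM : ∀ ζ ∈ 𝔻, ‖f ζ‖ ≤ M) :
    ∃ c, ∀ z, cauchyGreen (fun ζ => ζ * f ζ) z = z * cauchyGreen f z + c := by
  refine ⟨-(Real.pi : ℂ)⁻¹ * ∫ ζ, Set.indicator 𝔻 f ζ, fun z => ?_⟩
  rw [cauchyGreen, cauchyGreen, ← cauchyTransform_id_mul (.indicator_unitBall hf hM)]
  congr 1
  ext ζ
  exact indicator_mul_right (s := 𝔻) (fun ζ => ζ) f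

theorem exists_eqOn_cauchyGreen_wirtingerMonomial (a b : ℕ) :
    ∃ g ∈ polyDegreeLT (a + b + 2), EqOn (cauchyGreen (wirtingerMonomial a b)) g 𝔻 := by
  induction a with
  | zero =>
    refine ⟨_, Submodule.smul_mem _ (b + 1 : ℂ)⁻¹
      (wirtingerMonomial_mem (a := 0) (b := b + 1) (by omega)), fun z hz => ?_⟩
    have hmon : wirtingerMonomial 0 b = fun ζ => conj ζ ^ b := by
      ext ζ
      rw [wirtingerMonomial, pow_zero, one_mul]
    rw [hmon, cauchyGreen_conj_pow b hz, Pi.smul_apply, wirtingerMonomial, pow_zero, one_mul,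
      smul_eq_mul, div_eq_inv_mul]
  | succ a ih =>
    obtain ⟨g, hg, hTg⟩ := ih
    have hcont := (contDiff_wirtingerMonomial a b (n := 0)).continuous
    obtain ⟨M, hM⟩ := exists_norm_le_unitBall hcont
    obtain ⟨c, hc⟩ := cauchyGreen_id_mul hcont.continuousOn hM
    have hmem := add_mem (id_mul_mem_polyDegreeLT hg) (const_mem_polyDegreeLT c (a + b + 2))
    refine ⟨_, by convert hmem using 2; omega, fun z hz => ?_⟩
    have hmon : wirtingerMonomial (a + 1) b = fun ζ => ζ * wirtingerMonomial a b ζ := by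
      ext ζ
      rw [wirtingerMonomial, wirtingerMonomial, pow_succ', mul_assoc]
    rw [hmon, hc, hTg hz, Pi.add_apply]

theorem exists_eqOn_cauchyGreen_of_mem_polyDegreeLT (hf : f ∈ polyDegreeLT n) :
    ∃ g ∈ polyDegreeLT (n + 1), EqOn (cauchyGreen f) g 𝔻 := by
  induction hf using Submodule.span_induction with
  | mem f hf =>
    obtain ⟨a, b, hab, rfl⟩ := hf
    obtain ⟨g, hg, hTg⟩ := exists_eqOn_cauchyGreen_wirtingerMonomial a b
    refine ⟨g, Submodule.span_mono ?_ hg, hTg⟩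
    exact fun _ ⟨i, j, hij, heq⟩ => ⟨i, j, by omega, heq⟩
  | zero => exact ⟨0, zero_mem _, fun z _ =>
      (congrFun (cauchyGreen_congr fun ζ _ => (zero_mul 0).symm) z).trans
        ((cauchyGreen_const_mul 0 0 z).trans (zero_mul _))⟩
  | add f₁ f₂ hf₁ hf₂ ih₁ ih₂ =>
    obtain ⟨g₁, hg₁, hTg₁⟩ := ih₁
    obtain ⟨g₂, hg₂, hTg₂⟩ := ih₂
    have hcont₁ := (contDiff_of_mem_polyDegreeLT hf₁ (m := 0)).continuous
    have hcont₂ := (contDiff_of_mem_polyDegreeLT hf₂ (m := 0)).continuous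
    obtain ⟨M₁, hM₁⟩ := exists_norm_le_unitBall hcont₁
    obtain ⟨M₂, hM₂⟩ := exists_norm_le_unitBall hcont₂
    exact ⟨_, add_mem hg₁ hg₂, fun z hz => by
      rw [cauchyGreen_add hcont₁.continuousOn hM₁ hcont₂.continuousOn hM₂, hTg₁ hz, hTg₂ hz,
        Pi.add_apply]⟩
  | smul c f _ ih =>
    obtain ⟨g, hg, hTg⟩ := ih
    exact ⟨_, Submodule.smul_mem _ c hg, fun z hz => by
      rw [Pi.smul_apply, ← hTg hz]
      exact cauchyGreen_const_mul c f z⟩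

end Polynomials

section TopOrder

variable {f g h : ℂ → ℂ} {z : ℂ} {α N : ℝ} {k : ℕ}

theorem HolderNormLE.of_wDij (hα : α ∈ Icc 0 1) (hf : ContDiffOn ℝ k f 𝔻)
    (hzero : ∀ i j, i + j < k → ‖wDij i j f 0‖ ≤ N)
    (htop : ∀ i j, i + j = k → HolderBound α 𝔻 N (wDij i j f)) :
    HolderNormLE α k (5 ^ k * N) f := by
  have hN : 0 ≤ N := (htop k 0 (add_zero k)).nonneg
  suffices h : ∀ m i j, i + j + m = k → HolderNormLE α m (5 ^ m * N) (wDij i j f) from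
    h k 0 0 (by omega)
  intro m
  induction m with
  | zero => exact fun i j hij => by rw [pow_zero, one_mul]; exact htop i j hij
  | succ m ih =>
    intro i j hij
    have hf' : ContDiffOn ℝ (i + j + 1 : ℕ) f 𝔻 := hf.of_le (by norm_cast; omega)
    have hd (z : ℂ) (hz : z ∈ 𝔻) := differentiableAt_wDij isOpen_ball hf' hz
    have hwD : HolderNormLE α m (5 ^ m * N) (wD (wDij i j f)) := by
      simpa only [wDij_succ_left] using ih (i + 1) j (by omega)
    have hwDbar : HolderNormLE α m (5 ^ m * N) (wDbar (wDij i j f)) :=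
      (ih i (j + 1) (by omega)).congr (wDbar_wDij isOpen_ball hf').symm
    have hpow : N ≤ 5 ^ m * N := le_mul_of_one_le_left hN (one_le_pow₀ (by norm_num))
    have hle : 5 ^ m * N ≤ 5 ^ (m + 1) * N := by gcongr <;> norm_num
    have hbound (z : ℂ) (hz : z ∈ 𝔻) : ‖wDij i j f z‖ ≤ 3 * (5 ^ m * N) := by
      have hz0 := norm_sub_le_of_norm_wD_le (convex_ball 0 1) hd hwD.holderBound.norm_le
        hwDbar.holderBound.norm_le hz (mem_ball_self one_pos)
      rw [sub_zero] at hz0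
      calc ‖wDij i j f z‖ ≤ ‖wDij i j f 0‖ + ‖wDij i j f z - wDij i j f 0‖ :=
            norm_le_norm_add_norm_sub' _ _
        _ ≤ 5 ^ m * N + (5 ^ m * N + 5 ^ m * N) * 1 := by
            gcongr
            · exact (hzero i j (by omega)).trans hpow
            · exact hz0.trans (by gcongr; exact (mem_ball_zero_iff.1 hz).le)
        _ = 3 * (5 ^ m * N) := by ring
    refine ⟨holderBound_of_norm_wD_le hα hd hbound hwD.holderBound.norm_le
      hwDbar.holderBound.norm_le ?_ ?_, hd, hwD.mono hle, hwDbar.mono hle⟩ <;>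
    · rw [pow_succ]
      linarith

theorem HolderNormLE.exists_of_wDij (hα : α ∈ Icc 0 1) (hf : ContDiffOn ℝ k f 𝔻)
    (htop : ∀ i j, i + j = k → HolderBound α 𝔻 N (wDij i j f)) :
    ∃ M, HolderNormLE α k M f := by
  have hN : 0 ≤ N := (htop k 0 (add_zero k)).nonneg
  set B := ∑ p ∈ Finset.range k ×ˢ Finset.range k, ‖wDij p.1 p.2 f 0‖
  have hB : 0 ≤ B := Finset.sum_nonneg fun _ _ => norm_nonneg _
  refine ⟨_, of_wDij (N := N + B) hα hf (fun i j hij => ?_)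
    fun i j hij => (htop i j hij).mono (le_add_of_nonneg_right hB)⟩
  have hmem : (i, j) ∈ Finset.range k ×ˢ Finset.range k := by
    simp only [Finset.mem_product, Finset.mem_range]
    omega
  exact (Finset.single_le_sum (f := fun p => ‖wDij p.1 p.2 f 0‖)
    (fun _ _ => norm_nonneg _) hmem).trans (le_add_of_nonneg_left hN)

theorem exists_mem_polyDegreeLT_holderNormLE_add (hα : α ∈ Icc 0 1) (hf : ContDiffOn ℝ k f 𝔻)
    (htop : ∀ i j, i + j = k → HolderBound α 𝔻 N (wDij i j f)) :
    ∃ P ∈ polyDegreeLT k, HolderNormLE α k (5 ^ k * N) (f + P) := by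
  obtain ⟨P, hP, hP0⟩ := exists_mem_polyDegreeLT_wDij_zero_eq k fun i j => -wDij i j f 0
  have hPsmooth {n : ℕ} : ContDiffOn ℝ n P 𝔻 := (contDiff_of_mem_polyDegreeLT hP).contDiffOn
  have hadd {i j : ℕ} (hij : i + j ≤ k) {z : ℂ} (hz : z ∈ 𝔻) :
      wDij i j (f + P) z = wDij i j f z + wDij i j P z :=
    wDij_add isOpen_ball (hf.of_le (mod_cast hij)) hPsmooth hz
  refine ⟨P, hP, .of_wDij hα (hf.add hPsmooth) (fun i j hij => ?_) fun i j hij => ?_⟩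
  · rw [hadd hij.le (mem_ball_self one_pos), hP0 i j hij, add_neg_cancel, norm_zero]
    exact (htop k 0 (add_zero k)).nonneg
  · refine (htop i j hij).congr fun z hz => ?_
    rw [hadd hij.le hz, wDij_eq_zero_of_mem_polyDegreeLT hP hij.ge, Pi.zero_apply, add_zero]

theorem HolderNormLE.wDij {i j : ℕ} (hf : HolderNormLE α (k + i + j) N f) :
    HolderNormLE α k N (wDij i j f) := by
  induction j generalizing f with
  | zero =>
    induction i generalizing f with
    | zero => exact hf
    | succ i ih =>
      rw [wDij_succ_zero]
      exact ih hf.2.2.1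
  | succ j ih =>
    rw [wDij_succ_right]
    exact ih hf.2.2.2

theorem exists_holderBound_wDij_cauchyGreen (hα : α ∈ Ioo 0 1) (k : ℕ) :
    ∃ C, 0 ≤ C ∧ ∀ N h, ContDiffOn ℝ k h 𝔻 →
      (∀ i j, i + j = k → HolderBound α 𝔻 N (wDij i j h)) →
      ∀ i j, i + j = k + 1 → HolderBound α 𝔻 (C * N) (wDij i j (cauchyGreen h)) := by
  have hα' := Ioo_subset_Icc_self hα
  obtain ⟨C, hC, hT⟩ := exists_holderNormLE_cauchyGreen hα k
  refine ⟨C * 5 ^ k, by positivity, fun N h hh htop i j hij => ?_⟩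
  obtain ⟨M, hM⟩ := HolderNormLE.exists_of_wDij hα' hh htop
  obtain ⟨P, hP, hhP⟩ := exists_mem_polyDegreeLT_holderNormLE_add hα' hh htop
  obtain ⟨g, hg, hTP⟩ := exists_eqOn_cauchyGreen_of_mem_polyDegreeLT hP
  have hPcont := (contDiff_of_mem_polyDegreeLT hP (m := 0)).continuous
  obtain ⟨B, hB⟩ := exists_norm_le_unitBall hPcont
  have hThP := hT _ _ hhP
  have hneg : -g ∈ polyDegreeLT (k + 1) := neg_mem hg
  have hTh : EqOn (fun z => cauchyGreen (h + P) z + (-g) z) (cauchyGreen h) 𝔻 := fun z hz => by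
    beta_reduce
    rw [cauchyGreen_add hh.continuousOn hM.holderBound.norm_le hPcont.continuousOn hB, hTP hz,
      Pi.neg_apply, add_neg_cancel_right]
  have hbound : HolderBound α 𝔻 (C * 5 ^ k * N) (wDij i j (cauchyGreen (h + P))) := by
    rw [mul_assoc]
    exact HolderNormLE.wDij (k := 0) (by simpa only [zero_add, hij] using hThP)
  refine hbound.congr fun z hz => ?_
  have hTsmooth := (hij ▸ hThP).contDiffOn hα.1
  have hadd := wDij_add isOpen_ball hTsmooth (contDiff_of_mem_polyDegreeLT hneg).contDiffOn hz
  simpa only [wDij_congr isOpen_ball i j hTh hz, wDij_eq_zero_of_mem_polyDegreeLT hneg hij.ge,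
    Pi.zero_apply, add_zero] using hadd.symm

end TopOrder

/-! ### Scaling -/

section EnormHolder

variable {f g h : ℂ → ℂ} {α a N R : ℝ} {A B U : Set ℂ} {i j k : ℕ} {H : ℝ≥0∞}

theorem hol_le_iff : Hol α A f ≤ H ↔
    ∀ z ∈ A, ∀ z' ∈ A, z ≠ z' → ‖f z - f z'‖ₑ ≤ H * ‖z - z'‖ₑ ^ α := by
  simp only [Hol, iSup_le_iff]
  refine forall₅_congr fun z _ z' _ hne => ?_
  have h0 : z - z' ≠ 0 := sub_ne_zero.2 hne
  exact ENNReal.div_le_iff (by simp [ENNReal.rpow_eq_zero_iff, h0])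
    (by simp [ENNReal.rpow_eq_top_iff, h0])

theorem enorm_sub_le_hol_mul {z z' : ℂ} (hz : z ∈ A) (hz' : z' ∈ A) :
    ‖f z - f z'‖ₑ ≤ Hol α A f * ‖z - z'‖ₑ ^ α := by
  rcases eq_or_ne z z' with rfl | hne
  · simp
  · exact hol_le_iff.1 le_rfl z hz z' hz' hne

theorem hol_congr (h : EqOn f g A) : Hol α A f = Hol α A g :=
  iSup_congr fun z => iSup_congr fun hz => iSup_congr fun z' => iSup_congr fun hz' => by
    rw [h hz, h hz']

theorem hol_conj (α : ℝ) (A : Set ℂ) (f : ℂ → ℂ) : Hol α A (fun z => conj (f z)) = Hol α A f := by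
  simp only [Hol, ← map_sub, RCLike.nnnorm_conj]

theorem hol_const_mul_le (α : ℝ) (A : Set ℂ) (c : ℂ) (f : ℂ → ℂ) :
    Hol α A (fun z => c * f z) ≤ ‖c‖ₑ * Hol α A f :=
  hol_le_iff.2 fun z hz z' hz' _ => by
    rw [← mul_sub, enorm_mul, mul_assoc]
    gcongr
    exact enorm_sub_le_hol_mul hz hz'

theorem enorm_ofReal_mul_sub_rpow (ha : 0 < a) (z z' : ℂ) :
    ‖a * z - a * z'‖ₑ ^ α = ENNReal.ofReal (a ^ α) * ‖z - z'‖ₑ ^ α := by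
  have hnorm : ‖(a : ℂ)‖ₑ = ENNReal.ofReal a := by
    rw [← ofReal_norm, Complex.norm_of_nonneg ha.le]
  rw [← mul_sub, enorm_mul, hnorm, ← ENNReal.ofReal_rpow_of_pos ha,
    ENNReal.mul_rpow_of_ne_top ENNReal.ofReal_ne_top enorm_ne_top]

theorem hol_comp_real_mul_le (ha : 0 < a) (hAB : MapsTo (fun z : ℂ => a * z) A B) :
    Hol α A (fun z => f (a * z)) ≤ ENNReal.ofReal (a ^ α) * Hol α B f :=
  hol_le_iff.2 fun z hz z' hz' _ => by
    rw [mul_comm (ENNReal.ofReal _), mul_assoc, ← enorm_ofReal_mul_sub_rpow ha]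
    exact enorm_sub_le_hol_mul (hAB hz) (hAB hz')

/-- The Hölder norm over a set `A` with scale `R`: `hnorm` and `hnormB` are the cases of the
closed and the open disk of radius `R`. -/
noncomputable def holderNorm (α R : ℝ) (A : Set ℂ) (f : ℂ → ℂ) : ℝ≥0∞ :=
  (⨆ z ∈ A, (‖f z‖₊ : ℝ≥0∞)) + ENNReal.ofReal ((2 * R) ^ α) * Hol α A f

theorem holderNorm_congr (h : EqOn f g A) : holderNorm α R A f = holderNorm α R A g := by
  rw [holderNorm, holderNorm, hol_congr h]
  exact congrArg (· + _) (iSup_congr fun z => iSup_congr fun hz => by rw [h hz])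

theorem holderNorm_conj (α R : ℝ) (A : Set ℂ) (f : ℂ → ℂ) :
    holderNorm α R A (fun z => conj (f z)) = holderNorm α R A f := by
  simp only [holderNorm, hol_conj, RCLike.nnnorm_conj]

theorem enorm_le_iSup {z : ℂ} (hz : z ∈ A) : ‖f z‖ₑ ≤ ⨆ z ∈ A, (‖f z‖₊ : ℝ≥0∞) :=
  le_iSup₂ (f := fun z (_ : z ∈ A) => (‖f z‖₊ : ℝ≥0∞)) z hz

theorem holderNorm_const_mul_le (α R : ℝ) (A : Set ℂ) (c : ℂ) (f : ℂ → ℂ) :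
    holderNorm α R A (fun z => c * f z) ≤ ‖c‖ₑ * holderNorm α R A f := by
  rw [holderNorm, holderNorm, mul_add, mul_left_comm]
  gcongr
  · refine iSup₂_le fun z hz => ?_
    rw [← enorm_eq_nnnorm, enorm_mul]
    gcongr
    exact enorm_le_iSup hz
  · exact hol_const_mul_le α A c f

theorem holderNorm_comp_real_mul_le (ha : 0 < a) (hR : 0 ≤ R)
    (hAB : MapsTo (fun z : ℂ => a * z) A B) :
    holderNorm α R A (fun z => f (a * z)) ≤ holderNorm α (a * R) B f := by
  have hscale : (2 * (a * R)) ^ α = (2 * R) ^ α * a ^ α := by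
    rw [← Real.mul_rpow (by positivity) ha.le]
    ring_nf
  rw [holderNorm, holderNorm, hscale, ENNReal.ofReal_mul (by positivity), mul_assoc]
  exact add_le_add (iSup₂_le fun z hz => enorm_le_iSup (f := f) (hAB hz))
    (by gcongr; exact hol_comp_real_mul_le ha hAB)

theorem enorm_le_ofReal_iff (hN : 0 ≤ N) {z : ℂ} : ‖z‖ₑ ≤ ENNReal.ofReal N ↔ ‖z‖ ≤ N := by
  rw [← ofReal_norm, ENNReal.ofReal_le_ofReal_iff hN]

theorem ofReal_mul_enorm_rpow (hα : 0 ≤ α) (hN : 0 ≤ N) (z : ℂ) :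
    ENNReal.ofReal N * ‖z‖ₑ ^ α = ENNReal.ofReal (N * ‖z‖ ^ α) := by
  rw [ENNReal.ofReal_mul hN, ← ENNReal.ofReal_rpow_of_nonneg (norm_nonneg z) hα, ofReal_norm]

theorem HolderBound.hol_le (hα : 0 ≤ α) (hN : 0 ≤ N) (hf : HolderBound α A N f) :
    Hol α A f ≤ ENNReal.ofReal N :=
  hol_le_iff.2 fun z hz z' hz' _ => by
    rw [ofReal_mul_enorm_rpow hα hN, enorm_le_ofReal_iff (by positivity)]
    exact hf.norm_sub_le z hz z' hz'

theorem HolderBound.holderNorm_le (hα : α ∈ Icc 0 1) (hN : 0 ≤ N) (hf : HolderBound α A N f) :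
    holderNorm α 1 A f ≤ ENNReal.ofReal (3 * N) := by
  have htwo : (2 * 1 : ℝ) ^ α ≤ 2 := by
    simpa using Real.rpow_le_rpow_of_exponent_le one_le_two hα.2
  calc holderNorm α 1 A f
      ≤ ENNReal.ofReal N + ENNReal.ofReal 2 * ENNReal.ofReal N := by
        rw [holderNorm]
        gcongr
        · exact iSup₂_le fun z hz => (enorm_le_ofReal_iff hN).2 (hf.norm_le z hz)
        · exact hf.hol_le hα.1 hN
    _ = ENNReal.ofReal (3 * N) := by
        rw [← ENNReal.ofReal_mul zero_le_two, ← ENNReal.ofReal_add hN (by positivity)]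
        ring_nf

theorem HolderBound.of_holderNorm_le (hα : 0 ≤ α) (hN : 0 ≤ N)
    (h : holderNorm α 1 A f ≤ ENNReal.ofReal N) : HolderBound α A N f where
  norm_le z hz := (enorm_le_ofReal_iff hN).1 ((enorm_le_iSup hz).trans (le_self_add.trans h))
  norm_sub_le z hz z' hz' := by
    have htwo : (1 : ℝ≥0∞) ≤ ENNReal.ofReal ((2 * 1) ^ α) := by
      rw [ENNReal.one_le_ofReal]
      exact Real.one_le_rpow (by norm_num) hα
    have hHol : Hol α A f ≤ ENNReal.ofReal N :=
      (le_mul_of_one_le_left' htwo).trans (le_add_self.trans h)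
    rw [← enorm_le_ofReal_iff (by positivity), ← ofReal_mul_enorm_rpow hα hN]
    exact (enorm_sub_le_hol_mul hz hz').trans (by gcongr)

theorem HolderBound.mono_set (hf : HolderBound α B N f) (hAB : A ⊆ B) : HolderBound α A N f where
  norm_le z hz := hf.norm_le z (hAB hz)
  norm_sub_le z hz z' hz' := hf.norm_sub_le z (hAB hz) z' (hAB hz')

theorem HolderBound.exists_continuousOn_closure (hα : 0 < α) (hN : 0 ≤ N)
    (hf : HolderBound α A N f) : ∃ g, ContinuousOn g (closure A) ∧ EqOn f g A := by
  have hHolder : HolderOnWith N.toNNReal α.toNNReal f A := fun z hz z' hz' => by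
    rw [edist_eq_enorm_sub, edist_eq_enorm_sub, Real.coe_toNNReal _ hα.le]
    change _ ≤ ENNReal.ofReal N * _
    rw [ofReal_mul_enorm_rpow hα.le hN, enorm_le_ofReal_iff (by positivity)]
    exact hf.norm_sub_le z hz z' hz'
  have huc := hHolder.uniformContinuousOn (Real.toNNReal_pos.2 hα)
  refine ⟨extendFrom A f, continuousOn_extendFrom subset_rfl fun z hz => ?_,
    fun z hz => (extendFrom_extends huc.continuousOn z hz).symm⟩
  have := mem_closure_iff_nhdsWithin_neBot.1 hz
  exact CompleteSpace.complete ((cauchy_nhds.mono nhdsWithin_le_nhds).map_of_le huc inf_le_right)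

/-- The maximum of the Hölder norms over `A` of the derivatives of order `k`: `hnormK` and
`hnormKB` are the cases of the closed and the open disk of radius `R`. -/
noncomputable def holderNormK (k : ℕ) (α R : ℝ) (A : Set ℂ) (f : ℂ → ℂ) : ℝ≥0∞ :=
  ⨆ p ∈ Finset.HasAntidiagonal.antidiagonal k, holderNorm α R A (wDij p.1 p.2 f)

theorem holderNormK_le_iff : holderNormK k α R A f ≤ H ↔
    ∀ i j, i + j = k → holderNorm α R A (wDij i j f) ≤ H := by
  simp [holderNormK, Finset.HasAntidiagonal.mem_antidiagonal]

theorem holderNorm_wDij_le (hij : i + j = k) :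
    holderNorm α R A (wDij i j f) ≤ holderNormK k α R A f :=
  holderNormK_le_iff.1 le_rfl i j hij

theorem holderNormK_conj_le (hU : IsOpen U) (hAU : A ⊆ U) (hf : ContDiffOn ℝ k f U) :
    holderNormK k α R A (fun z => conj (f z)) ≤ holderNormK k α R A f :=
  holderNormK_le_iff.2 fun i j hij => by
    rw [holderNorm_congr ((wDij_conj hU (hij ▸ hf)).mono hAU), holderNorm_conj]
    exact holderNorm_wDij_le (by omega)

theorem holderNormK_const_mul_le (k : ℕ) (α R : ℝ) (A : Set ℂ) (c : ℂ) (f : ℂ → ℂ) :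
    holderNormK k α R A (fun z => c * f z) ≤ ‖c‖ₑ * holderNormK k α R A f :=
  holderNormK_le_iff.2 fun i j hij => by
    rw [wDij_const_mul]
    exact (holderNorm_const_mul_le ..).trans (by gcongr; exact holderNorm_wDij_le hij)

theorem holderNormK_comp_real_mul_le (ha : 0 < a) (hR : 0 ≤ R)
    (hAB : MapsTo (fun z : ℂ => a * z) A B) :
    holderNormK k α R A (fun z => f (a * z)) ≤
      ENNReal.ofReal (a ^ k) * holderNormK k α (a * R) B f :=
  holderNormK_le_iff.2 fun i j hij => by
    rw [wDij_comp_real_mul, hij]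
    have hnorm : ‖(a : ℂ) ^ k‖ₑ = ENNReal.ofReal (a ^ k) := by
      rw [← ofReal_norm, norm_pow, Complex.norm_of_nonneg ha.le]
    rw [← hnorm]
    exact (holderNorm_const_mul_le ..).trans (by
      gcongr
      exact (holderNorm_comp_real_mul_le ha hR hAB).trans (holderNorm_wDij_le hij))

end EnormHolder

section Regularity

variable {f h : ℂ → ℂ} {α a N R : ℝ} {A B : Set ℂ} {k : ℕ}

theorem mapsTo_real_mul_closedBall (ha : 0 ≤ a) (R : ℝ) :
    MapsTo (fun z : ℂ => a * z) (closedBall 0 R) (closedBall 0 (a * R)) := fun z hz => by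
  rw [mem_closedBall_zero_iff] at hz ⊢
  rw [norm_mul, Complex.norm_of_nonneg ha]
  gcongr

theorem mapsTo_real_mul_ball (ha : 0 < a) (R : ℝ) :
    MapsTo (fun z : ℂ => a * z) (ball 0 R) (ball 0 (a * R)) := fun z hz => by
  rw [mem_ball_zero_iff] at hz ⊢
  rw [norm_mul, Complex.norm_of_nonneg ha.le]
  gcongr

theorem hnormK_comp_real_mul_le (ha : 0 < a) (hR : 0 ≤ R) :
    hnormK k α R (fun z => f (a * z)) ≤ ENNReal.ofReal (a ^ k) * hnormK k α (a * R) f :=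
  holderNormK_comp_real_mul_le ha hR (mapsTo_real_mul_closedBall ha.le R)

theorem hnormKB_comp_real_mul_le (ha : 0 < a) (hR : 0 ≤ R) :
    hnormKB k α R (fun z => f (a * z)) ≤ ENNReal.ofReal (a ^ k) * hnormKB k α (a * R) f :=
  holderNormK_comp_real_mul_le ha hR (mapsTo_real_mul_ball ha R)

theorem hol_wDij_comp_real_mul_lt_top (ha : 0 < a) (hAB : MapsTo (fun z : ℂ => a * z) A B)
    {i j : ℕ} (hf : Hol α B (wDij i j f) < ⊤) :
    Hol α A (wDij i j fun z => f (a * z)) < ⊤ := by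
  rw [wDij_comp_real_mul]
  refine (hol_const_mul_le ..).trans_lt (ENNReal.mul_lt_top enorm_lt_top ?_)
  exact (hol_comp_real_mul_le ha hAB).trans_lt (ENNReal.mul_lt_top ENNReal.ofReal_lt_top hf)

theorem CkHolder.comp_real_mul (ha : 0 < a) (hf : CkHolder k α (a * R) f) :
    CkHolder k α R fun z => f (a * z) := by
  obtain ⟨⟨U, hU, hDU, hfU⟩, hHol⟩ := hf
  have hmaps := mapsTo_real_mul_closedBall ha.le R
  refine ⟨⟨(fun z : ℂ => a * z) ⁻¹' U, hU.preimage (by fun_prop), fun z hz => hDU (hmaps hz),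
    hfU.comp (by fun_prop) (mapsTo_preimage _ _)⟩, fun i j hij => ?_⟩
  exact hol_wDij_comp_real_mul_lt_top ha hmaps (hHol i j hij)

theorem CkHolder.conj (hf : CkHolder k α R f) : CkHolder k α R fun z => conj (f z) := by
  obtain ⟨⟨U, hU, hDU, hfU⟩, hHol⟩ := hf
  refine ⟨⟨U, hU, hDU, Complex.conjCLE.contDiff.comp_contDiffOn hfU⟩, fun i j hij => ?_⟩
  rw [hol_congr ((wDij_conj hU (hij ▸ hfU)).mono hDU), hol_conj]
  exact hHol j i (by omega)

theorem CkHolder.hnormK_lt_top (hf : CkHolder k α R f) : hnormK k α R f < ⊤ := by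
  obtain ⟨⟨U, hU, hDU, hfU⟩, hHol⟩ := hf
  have hnorm_lt : ∀ p ∈ Finset.HasAntidiagonal.antidiagonal k,
      hnorm α R (wDij p.1 p.2 f) < ⊤ := fun p hp => by
    have hp : p.1 + p.2 = k := Finset.HasAntidiagonal.mem_antidiagonal.1 hp
    have hcont : ContinuousOn (wDij p.1 p.2 f) (closedBall 0 R) :=
      ((contDiffOn_wDij (n := 0) hU (by simpa [hp] using hfU)).continuousOn).mono hDU
    obtain ⟨M, hM⟩ := (isCompact_closedBall 0 R).exists_bound_of_continuousOn hcont
    refine ENNReal.add_lt_top.2 ⟨?_, ENNReal.mul_lt_top ENNReal.ofReal_lt_top (hHol _ _ hp)⟩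
    refine (iSup₂_le fun z hz => ?_).trans_lt (ENNReal.ofReal_lt_top (r := M))
    rw [← enorm_eq_nnnorm, ← ofReal_norm]
    exact ENNReal.ofReal_le_ofReal (hM z hz)
  rw [hnormK, ← Finset.sup_eq_iSup]
  exact (Finset.sup_lt_iff ENNReal.zero_lt_top).2 hnorm_lt

theorem CkHolderBall.comp_real_mul (ha : 0 < a) (hf : CkHolderBall k α (a * R) f) :
    CkHolderBall k α R fun z => f (a * z) := by
  obtain ⟨hdiff, hext, hHol⟩ := hf
  have hmaps := mapsTo_real_mul_ball ha R
  refine ⟨hdiff.comp (by fun_prop) hmaps, fun i j hij => ?_, fun i j hij =>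
    hol_wDij_comp_real_mul_lt_top ha hmaps (hHol i j hij)⟩
  obtain ⟨g, hg, hfg⟩ := hext i j hij
  refine ⟨fun z => (a : ℂ) ^ (i + j) * g (a * z),
    continuousOn_const.mul (hg.comp (by fun_prop) (mapsTo_real_mul_closedBall ha.le R)),
    fun z hz => ?_⟩
  rw [wDij_comp_real_mul]
  exact congrArg _ (hfg (hmaps hz))

theorem CkHolderBall.const_mul (c : ℂ) (hf : CkHolderBall k α R f) :
    CkHolderBall k α R fun z => c * f z := by
  obtain ⟨hdiff, hext, hHol⟩ := hf
  refine ⟨contDiffOn_const.mul hdiff, fun i j hij => ?_, fun i j hij => ?_⟩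
  · obtain ⟨g, hg, hfg⟩ := hext i j hij
    refine ⟨fun z => c * g z, continuousOn_const.mul hg, fun z hz => ?_⟩
    rw [wDij_const_mul]
    exact congrArg _ (hfg hz)
  · rw [wDij_const_mul]
    exact (hol_const_mul_le ..).trans_lt (ENNReal.mul_lt_top enorm_lt_top (hHol i j hij))

theorem CkHolderBall.conj (hf : CkHolderBall k α R f) :
    CkHolderBall k α R fun z => conj (f z) := by
  obtain ⟨hdiff, hext, hHol⟩ := hf
  refine ⟨Complex.conjCLE.contDiff.comp_contDiffOn hdiff, fun i j hij => ?_, fun i j hij => ?_⟩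
  · have hconj := wDij_conj (i := i) (j := j) isOpen_ball (hdiff.of_le (by exact_mod_cast hij))
    obtain ⟨g, hg, hfg⟩ := hext j i (by omega)
    refine ⟨fun z => starRingEnd ℂ (g z), Complex.continuous_conj.comp_continuousOn hg,
      fun z hz => (hconj hz).trans (congrArg _ (hfg hz))⟩
  · rw [hol_congr (wDij_conj isOpen_ball (hij ▸ hdiff)), hol_conj]
    exact hHol j i (by omega)

theorem HolderNormLE.ckHolderBall (hα : 0 < α) (hf : HolderNormLE α k N f) :
    CkHolderBall k α 1 f := by
  refine ⟨hf.contDiffOn hα, fun i j hij => ?_, fun i j hij => ?_⟩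
  · obtain ⟨l, rfl⟩ := Nat.exists_eq_add_of_le hij
    have hwD : HolderNormLE α l N (_root_.wDij i j f) :=
      HolderNormLE.wDij (by rwa [show l + i + j = i + j + l by ring])
    rw [← closure_ball (0 : ℂ) one_ne_zero]
    exact hwD.holderBound.exists_continuousOn_closure hα hf.nonneg
  · have hwD : HolderNormLE α 0 N (_root_.wDij i j f) :=
      HolderNormLE.wDij (by rwa [show 0 + i + j = k by omega])
    exact (hwD.holderBound.hol_le hα.le hf.nonneg).trans_lt ENNReal.ofReal_lt_top

end Regularity

section UnitDisk

variable {h : ℂ → ℂ} {α : ℝ} {k : ℕ}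

theorem CkHolder.holderBound (hα : 0 ≤ α) (hh : CkHolder k α 1 h) {i j : ℕ} (hij : i + j = k) :
    HolderBound α 𝔻 (hnormK k α 1 h).toReal (wDij i j h) := by
  refine (HolderBound.of_holderNorm_le (A := closedBall 0 1) hα ENNReal.toReal_nonneg ?_).mono_set
    ball_subset_closedBall
  rw [ENNReal.ofReal_toReal hh.hnormK_lt_top.ne]
  exact holderNorm_wDij_le (A := closedBall 0 1) hij

theorem exists_hnormKB_cauchyGreen_le (hα : α ∈ Ioo 0 1) (k : ℕ) :
    ∃ C : ℝ, 0 < C ∧ ∀ h, CkHolder k α 1 h → CkHolderBall (k + 1) α 1 (cauchyGreen h) ∧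
      hnormKB (k + 1) α 1 (cauchyGreen h) ≤ ENNReal.ofReal C * hnormK k α 1 h := by
  have hα' : α ∈ Icc 0 1 := Ioo_subset_Icc_self hα
  obtain ⟨C, hC0, hC⟩ := exists_holderBound_wDij_cauchyGreen hα k
  obtain ⟨C', -, hC'⟩ := exists_holderNormLE_cauchyGreen hα k
  refine ⟨3 * C + 1, by positivity, fun h hh => ?_⟩
  have hdiff : ContDiffOn ℝ k h 𝔻 := by
    obtain ⟨⟨U, -, hDU, hhU⟩, -⟩ := hh
    exact hhU.mono (ball_subset_closedBall.trans hDU)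
  have hbound := fun i j hij => hh.holderBound hα.1.le (i := i) (j := j) hij
  refine ⟨?_, holderNormK_le_iff.2 fun i j hij => ?_⟩
  · obtain ⟨M, hM⟩ := HolderNormLE.exists_of_wDij hα' hdiff hbound
    exact (hC' M h hM).ckHolderBall hα.1
  · have hN : 0 ≤ (hnormK k α 1 h).toReal := ENNReal.toReal_nonneg
    refine ((hC _ h hdiff hbound i j hij).holderNorm_le hα' (by positivity)).trans ?_
    nth_rw 2 [← ENNReal.ofReal_toReal hh.hnormK_lt_top.ne]
    rw [← ENNReal.ofReal_mul (by positivity)]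
    exact ENNReal.ofReal_le_ofReal (by linarith)

end UnitDisk

section Scaling

variable {h : ℂ → ℂ} {α R : ℝ} {k : ℕ}

theorem Tcg_eq_cauchyGreen (hR : 0 < R) (h : ℂ → ℂ) :
    Tcg R h = fun z => R * cauchyGreen (fun w => h (R * w)) (((R⁻¹ : ℝ) : ℂ) * z) := by
  ext z
  have hR0 : (R : ℂ) ≠ 0 := Complex.ofReal_ne_zero.2 hR.ne'
  have hscale : ∫ w in 𝔻, h (R • w) / (R • w - z) =
      ((R : ℂ) ^ 2)⁻¹ * ∫ ζ in closedBall 0 R, h ζ / (ζ - z) := by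
    have hae : ball (0 : ℂ) R =ᵐ[volume] closedBall 0 R :=
      ae_eq_of_subset_of_measure_ge ball_subset_closedBall
        (Measure.addHaar_closedBall_eq_addHaar_ball volume 0 R).le
        measurableSet_ball.nullMeasurableSet measure_closedBall_lt_top.ne
    rw [Measure.setIntegral_comp_smul_of_pos volume (fun ζ => h ζ / (ζ - z)) 𝔻 hR,
      smul_unitBall_of_pos hR, setIntegral_congr_set hae, Complex.finrank_real_complex,
      Complex.real_smul]
    norm_cast
  have hkernel (w : ℂ) : Set.indicator 𝔻 (fun w => h (R * w)) w / (w - ((R⁻¹ : ℝ) : ℂ) * z) =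
      Set.indicator 𝔻 (fun w => R * (h (R • w) / (R • w - z))) w := by
    by_cases hw : w ∈ 𝔻
    · rw [indicator_of_mem hw, indicator_of_mem hw, Complex.real_smul, ← mul_div_mul_left _ _ hR0,
        mul_div_assoc, mul_sub, Complex.ofReal_inv, mul_inv_cancel_left₀ hR0]
    · simp only [indicator_of_notMem hw, zero_div]
  rw [Tcg, cauchyGreen, cauchyTransform, integral_congr_ae (ae_of_all _ hkernel),
    integral_indicator measurableSet_ball, integral_const_mul, hscale]
  field_simp

theorem hnormKB_Tcg_le (hR : 0 < R) (α : ℝ) (k : ℕ) (h : ℂ → ℂ) :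
    hnormKB (k + 1) α R (Tcg R h) ≤
      ENNReal.ofReal (R⁻¹ ^ k) * hnormKB (k + 1) α 1 (cauchyGreen fun w => h (R * w)) := by
  have hscale := hnormKB_comp_real_mul_le (k := k + 1) (α := α)
    (f := cauchyGreen fun w => h (R * w)) (inv_pos.2 hR) hR.le
  rw [inv_mul_cancel₀ hR.ne'] at hscale
  have hconst : ‖(R : ℂ)‖ₑ * ENNReal.ofReal (R⁻¹ ^ (k + 1)) = ENNReal.ofReal (R⁻¹ ^ k) := by
    rw [← ofReal_norm, Complex.norm_of_nonneg hR.le, ← ENNReal.ofReal_mul hR.le, pow_succ',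
      mul_inv_cancel_left₀ hR.ne']
  rw [Tcg_eq_cauchyGreen hR, ← hconst, mul_assoc]
  exact (holderNormK_const_mul_le (k + 1) α R (ball 0 R) R _).trans (by gcongr; exact hscale)

theorem CkHolderBall.Tcg (hR : 0 < R)
    (hclass : CkHolderBall k α 1 (cauchyGreen fun w => h (R * w))) :
    CkHolderBall k α R (Tcg R h) := by
  rw [Tcg_eq_cauchyGreen hR]
  exact .const_mul _ (.comp_real_mul (inv_pos.2 hR) (by rwa [inv_mul_cancel₀ hR.ne']))

theorem exists_hnormKB_Tcg_le (hα : α ∈ Ioo 0 1) (k : ℕ) :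
    ∃ C : ℝ, 0 < C ∧ ∀ R : ℝ, 0 < R → ∀ h, CkHolder k α R h →
      CkHolderBall (k + 1) α R (Tcg R h) ∧
        hnormKB (k + 1) α R (Tcg R h) ≤ ENNReal.ofReal C * hnormK k α R h := by
  obtain ⟨C, hC0, hC⟩ := exists_hnormKB_cauchyGreen_le hα k
  refine ⟨C, hC0, fun R hR h hh => ?_⟩
  obtain ⟨hclass, hbound⟩ := hC (fun w => h (R * w)) (.comp_real_mul hR (by rwa [mul_one]))
  have hscale := hnormK_comp_real_mul_le (k := k) (α := α) (f := h) hR zero_le_one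
  rw [mul_one] at hscale
  refine ⟨.Tcg hR hclass, ?_⟩
  calc hnormKB (k + 1) α R (Tcg R h)
      ≤ ENNReal.ofReal (R⁻¹ ^ k) * (ENNReal.ofReal C * (ENNReal.ofReal (R ^ k) * hnormK k α R h)) :=
        (hnormKB_Tcg_le hR α k h).trans (by gcongr; exact hbound.trans (by gcongr))
    _ = ENNReal.ofReal (R⁻¹ ^ k * R ^ k) * (ENNReal.ofReal C * hnormK k α R h) := by
        rw [ENNReal.ofReal_mul (by positivity)]
        ring
    _ = ENNReal.ofReal C * hnormK k α R h := by
        rw [← mul_pow, inv_mul_cancel₀ hR.ne', one_pow, ENNReal.ofReal_one, one_mul]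

end Scaling

theorem Tcg_norm_bound_general (k : ℕ) (α : ℝ) (hα : α ∈ Ioo (0 : ℝ) 1) :
    ∃ C : ℝ, 0 < C ∧ ∀ R : ℝ, 0 < R → ∀ h : ℂ → ℂ, CkHolder k α R h →
      (CkHolderBall (k + 1) α R (Tcg R h) ∧
        hnormKB (k + 1) α R (Tcg R h) ≤ ENNReal.ofReal C * hnormK k α R h) ∧
      (CkHolderBall (k + 1) α R (Tcgbar R h) ∧
        hnormKB (k + 1) α R (Tcgbar R h) ≤ ENNReal.ofReal C * hnormK k α R h) := by
  obtain ⟨C, hC0, hC⟩ := exists_hnormKB_Tcg_le hα k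
  refine ⟨C, hC0, fun R hR h hh => ⟨hC R hR h hh, ?_⟩⟩
  obtain ⟨hclass, hbound⟩ := hC R hR _ hh.conj
  obtain ⟨⟨U, hU, hDU, hhU⟩, -⟩ := hh
  refine ⟨hclass.conj, ?_⟩
  calc hnormKB (k + 1) α R (Tcgbar R h)
      ≤ hnormKB (k + 1) α R (Tcg R fun w => conj (h w)) :=
        holderNormK_conj_le isOpen_ball subset_rfl hclass.1
    _ ≤ ENNReal.ofReal C * hnormK k α R fun w => conj (h w) := hbound
    _ ≤ ENNReal.ofReal C * hnormK k α R h := by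
        gcongr
        exact holderNormK_conj_le hU hDU hhU

end

/-- `Th ∈ C^{k+1+α}(D)` with `‖Th‖^{(k+1)} ≤ C‖h‖^{(k)}`, and
likewise for `T̄h`, for `0 < R ≤ 1` and `h ∈ C^{k+α}(D)`. -/
theorem Tcg_norm_bound (k : ℕ) (α : ℝ) (hα : α ∈ Set.Ioo (0:ℝ) 1) :
    ∃ C : ℝ, 0 < C ∧ ∀ R : ℝ, 0 < R → R ≤ 1 → ∀ h : ℂ → ℂ, CkHolder k α R h →
      (CkHolderBall (k+1) α R (Tcg R h) ∧
        hnormKB (k+1) α R (Tcg R h) ≤ ENNReal.ofReal C * hnormK k α R h) ∧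
      (CkHolderBall (k+1) α R (Tcgbar R h) ∧
        hnormKB (k+1) α R (Tcgbar R h) ≤ ENNReal.ofReal C * hnormK k α R h) := by
  obtain ⟨C, hC0, hC⟩ := Tcg_norm_bound_general k α hα
  exact ⟨C, hC0, fun R hR _ => hC R hR⟩
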